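/- arXiv:2505.00166 — 2 statements merged into one kernel-verified Lean document; each statement's English description precedes it below -/
import Mathlib

section
/- Let f : (ℝ^n,0) → (ℝ,0) be a germ of C^∞ function of finite order m = ord_0 f whose initial part in(f) has an algebraically isolated singularity at the origin, i.e. μ(in(f)) < +∞. Then the real Milnor number of f satisfies μ(f) = (m − 1)^n. -/
open Filter Set Metric Topology Asymptotics

noncomputable section

set_option synthInstance.maxHeartbeats 1000000

/-- `ℝ^n` with the Euclidean structure. -/
abbrev Eucl (n : ℕ) : Type := EuclideanSpace ℝ (Fin n)

variable {V W : Type*} [NormedAddCommGroup V] [NormedSpace ℝ V]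
  [NormedAddCommGroup W] [NormedSpace ℝ W]

/-- `F` admits the `α`-derivative `H` at `x`:  `H` is continuous and for every direction `v`,
`F (x + t v) - F x = t ^ α • H v + o(t ^ α)` as `t → 0⁺`. -/
def HasAlphaDerivAt (F : V → W) (x : V) (α : ℝ) (H : V → W) : Prop :=
  Continuous H ∧ ∀ v : V,
    Tendsto (fun t : ℝ => (t ^ α)⁻¹ • (F (x + t • v) - F x - t ^ α • H v))
      (𝓝[>] (0 : ℝ)) (𝓝 0)

/-- `F` has order `α` at `x`: for every nonzero direction `v` the limit of
`F (x + t v) / t ^ α` as `t → 0⁺` exists, and for at least one `v` it is nonzero. -/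
def HasOrderAt (F : V → W) (x : V) (α : ℝ) : Prop :=
  (∀ v : V, v ≠ 0 → ∃ L : W,
      Tendsto (fun t : ℝ => (t ^ α)⁻¹ • F (x + t • v)) (𝓝[>] (0 : ℝ)) (𝓝 L)) ∧
  ∃ v : V, v ≠ 0 ∧ ∃ L : W, L ≠ 0 ∧
      Tendsto (fun t : ℝ => (t ^ α)⁻¹ • F (x + t • v)) (𝓝[>] (0 : ℝ)) (𝓝 L)

/-- `φ` is a lipeomorphism from `U` onto `V'`. -/
def IsLipeoOn (φ : V → W) (U : Set V) (V' : Set W) : Prop :=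
  Set.BijOn φ U V' ∧ ∃ c : ℝ, 1 ≤ c ∧ ∀ x ∈ U, ∀ y ∈ U,
    (1 / c) * ‖x - y‖ ≤ ‖φ x - φ y‖ ∧ ‖φ x - φ y‖ ≤ c * ‖x - y‖

/-- `d` is a pseudo-Lipschitz derivative of `φ` at `x`: along some sequence `t_j → 0⁺`,
`(φ (x + t_j v) - φ x) / t_j → d v` uniformly on compact sets. -/
def IsPseudoLipDerivAt (φ : V → V) (x : V) (d : V → V) : Prop :=
  ∃ t : ℕ → ℝ, (∀ j, 0 < t j) ∧ Tendsto t atTop (𝓝 (0 : ℝ)) ∧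
    ∀ K : Set V, IsCompact K →
      TendstoUniformlyOn (fun j v => (t j)⁻¹ • (φ (x + t j • v) - φ x)) d atTop K

/-- `F ∼ G` at `x₀`: asymptotic equivalence of `F` and `G` at `x₀`. -/
def AsympEquivAt (F G : V → W) (x₀ : V) : Prop :=
  ∃ c₁ c₂ : ℝ, 0 < c₁ ∧ 0 < c₂ ∧
    ∀ᶠ x in 𝓝 x₀, c₂ * ‖F x‖ ≤ ‖G x‖ ∧ ‖G x‖ ≤ c₁ * ‖F x‖

/-- `F ≈ G` at `x₀` via the lipeomorphism `φ`. -/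
def AsympLipEquivAtVia {V' : Type*} [NormedAddCommGroup V'] [NormedSpace ℝ V']
    (F : V → W) (G : V' → W) (φ : V → V') (x₀ : V) : Prop :=
  ∃ c : ℝ, 1 ≤ c ∧ ∀ᶠ x in 𝓝 x₀,
    (1 / c) * ‖F x - F x₀‖ ≤ ‖G (φ x) - G (φ x₀)‖ ∧
      ‖G (φ x) - G (φ x₀)‖ ≤ c * ‖F x - F x₀‖

/-- The degree-`m` term of the Taylor series of `F` at `0`; for a `C^∞` germ of
finite order `m` this is its initial part `in(F)`. -/
def inPart (F : V → ℝ) (m : ℕ) : V → ℝ :=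
  fun x => (m.factorial : ℝ)⁻¹ • iteratedFDeriv ℝ m F 0 (fun _ => x)

instance {α : Type*} (l : Filter α) {R : Type*} [CommSemiring R] :
    Algebra R (Filter.Germ l R) :=
  Algebra.ofModule
    (fun r x y => Filter.Germ.inductionOn₂ x y fun f g => by
      rw [← Filter.Germ.coe_smul, ← Filter.Germ.coe_mul, ← Filter.Germ.coe_mul,
        ← Filter.Germ.coe_smul, smul_mul_assoc])
    (fun r x y => Filter.Germ.inductionOn₂ x y fun f g => by
      rw [← Filter.Germ.coe_smul, ← Filter.Germ.coe_mul, ← Filter.Germ.coe_mul,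
        ← Filter.Germ.coe_smul, mul_smul_comm])

/-- `E_n`: the ℝ-algebra of germs at `0` of `C^∞` functions `ℝ^n → ℝ`, realized as a
subalgebra of the algebra of germs at `0` of functions `ℝ^n → ℝ`. -/
def smoothGerms (n : ℕ) : Subalgebra ℝ (Filter.Germ (𝓝 (0 : Eucl n)) ℝ) where
  carrier := {γ | ∃ f : Eucl n → ℝ, ContDiff ℝ (⊤ : ℕ∞) f ∧ γ = ↑f}
  add_mem' := by
    rintro a b ⟨f, hf, rfl⟩ ⟨g, hg, rfl⟩
    exact ⟨f + g, hf.add hg, rfl⟩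
  mul_mem' := by
    rintro a b ⟨f, hf, rfl⟩ ⟨g, hg, rfl⟩
    exact ⟨f * g, hf.mul hg, rfl⟩
  algebraMap_mem' := fun r => ⟨fun _ => r, contDiff_const, by
    rw [Algebra.algebraMap_eq_smul_one, ← Filter.Germ.coe_one, ← Filter.Germ.coe_smul]
    congr 1
    funext x
    simp⟩

/-- The Jacobian ideal `J(f) ⊆ E_n`, generated by the germs at `0` of the partial
derivatives `∂f/∂x_1, …, ∂f/∂x_n`. -/
def jacobianIdeal (n : ℕ) (f : Eucl n → ℝ) : Ideal (smoothGerms n) :=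
  Ideal.span {γ | ∃ i : Fin n,
    (γ : Filter.Germ (𝓝 (0 : Eucl n)) ℝ) =
      ↑(fun x => fderiv ℝ f x (EuclideanSpace.single i 1))}

/-- The real Milnor number `μ(f) = dim_ℝ E_n / J(f)`, as a cardinal. -/
def milnor (n : ℕ) (f : Eucl n → ℝ) : Cardinal :=
  Module.rank ℝ (smoothGerms n ⧸ jacobianIdeal n f)


namespace MilnorAux

open MvPolynomial

/-- An ideal stable under taking homogeneous components. -/
def HomI {n : ℕ} (K : Ideal (MvPolynomial (Fin n) ℝ)) : Prop :=
  ∀ p ∈ K, ∀ j, homogeneousComponent j p ∈ K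

/-- All homogeneous polynomials of degree at least `M` are in `K`. -/
def Cof {n : ℕ} (M : ℕ) (K : Ideal (MvPolynomial (Fin n) ℝ)) : Prop :=
  ∀ j, M ≤ j → ∀ p : MvPolynomial (Fin n) ℝ, p.IsHomogeneous j → p ∈ K

/-- `c` is a nonzerodivisor modulo `K`. -/
def Nzd {R : Type*} [CommRing R] (c : R) (K : Ideal R) : Prop := ∀ z, c * z ∈ K → z ∈ K

/-- Colength over `ℝ`. -/
def ell {R : Type*} [CommRing R] [Algebra ℝ R] (K : Ideal R) : ℕ∞ := Module.length ℝ (R ⧸ K)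

variable {n : ℕ}

lemma hc_of_hom {p : MvPolynomial (Fin n) ℝ} {i : ℕ} (hp : p.IsHomogeneous i) (j : ℕ) :
    homogeneousComponent j p = if i = j then p else 0 := by
  rw [homogeneousComponent_of_mem (m := j) (n := i) (by simpa using hp)]
  simp [eq_comm]

lemma hc_mul {Q : MvPolynomial (Fin n) ℝ} {d : ℕ} (hQ : Q.IsHomogeneous d)
    (a : MvPolynomial (Fin n) ℝ) (j : ℕ) :
    homogeneousComponent j (Q * a) = if d ≤ j then Q * homogeneousComponent (j - d) a else 0 := by
  conv_lhs => rw [← sum_homogeneousComponent a, Finset.mul_sum, map_sum]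
  have h1 : ∀ i ∈ Finset.range (a.totalDegree + 1),
      homogeneousComponent j (Q * homogeneousComponent i a) =
        if d + i = j then Q * homogeneousComponent i a else 0 := fun i _ =>
    hc_of_hom (hQ.mul (homogeneousComponent_isHomogeneous i a)) j
  rw [Finset.sum_congr rfl h1]
  split_ifs with h
  · have h2 : ∀ i ∈ Finset.range (a.totalDegree + 1),
        (if d + i = j then Q * homogeneousComponent i a else 0) =
        (if i = j - d then Q * homogeneousComponent (j - d) a else 0) := by
      intro i _
      by_cases h3 : i = j - d
      · rw [if_pos h3, if_pos (by omega), h3]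
      · rw [if_neg h3, if_neg (by omega)]
    rw [Finset.sum_congr rfl h2, Finset.sum_ite_eq']
    split_ifs with h4
    · rfl
    · rw [homogeneousComponent_eq_zero]
      · simp
      · simp at h4; omega
  · apply Finset.sum_eq_zero
    intro i _
    rw [if_neg (by omega)]

lemma HomI.sup {K L : Ideal (MvPolynomial (Fin n) ℝ)} (hK : HomI K) (hL : HomI L) :
    HomI (K ⊔ L) := by
  intro p hp j
  obtain ⟨a, ha, b, hb, rfl⟩ := Submodule.mem_sup.1 hp
  rw [map_add]
  exact Submodule.add_mem_sup (hK a ha j) (hL b hb j)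

lemma HomI.bot : HomI (⊥ : Ideal (MvPolynomial (Fin n) ℝ)) := by
  intro p hp j
  rw [Ideal.mem_bot] at hp
  simp [hp]

lemma HomI.single {Q : MvPolynomial (Fin n) ℝ} {d : ℕ} (hQ : Q.IsHomogeneous d) :
    HomI (Ideal.span {Q}) := by
  intro p hp j
  obtain ⟨a, rfl⟩ := Ideal.mem_span_singleton'.1 hp
  rw [mul_comm a Q, hc_mul hQ]
  split_ifs
  · exact Ideal.mul_mem_right _ _ (Ideal.mem_span_singleton_self Q)
  · exact zero_mem _

lemma HomI.span {ι : Type*} [Fintype ι] {Q : ι → MvPolynomial (Fin n) ℝ} {d : ι → ℕ}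
    (hQ : ∀ i, (Q i).IsHomogeneous (d i)) :
    HomI (Ideal.span (Set.range Q)) := by
  intro p hp j
  obtain ⟨c, rfl⟩ := Ideal.mem_span_range_iff_exists_fun.1 hp
  rw [map_sum]
  refine Ideal.sum_mem _ fun i _ => ?_
  rw [mul_comm, hc_mul (hQ i)]
  split_ifs
  · exact Ideal.mul_mem_right _ _ (Ideal.subset_span ⟨i, rfl⟩)
  · exact zero_mem _

lemma mem_sup_single {R : Type*} [CommRing R] {K : Ideal R} {Q p : R} :
    p ∈ K ⊔ Ideal.span {Q} ↔ ∃ u ∈ K, ∃ a, p = u + Q * a := by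
  constructor
  · intro h
    obtain ⟨u, hu, b, hb, rfl⟩ := Submodule.mem_sup.1 h
    obtain ⟨a, rfl⟩ := Ideal.mem_span_singleton'.1 hb
    exact ⟨u, hu, a, by ring⟩
  · rintro ⟨u, hu, a, rfl⟩
    exact Submodule.add_mem_sup hu (Ideal.mul_mem_right _ _ (Ideal.mem_span_singleton_self Q))

lemma mem_of_hc {K : Ideal (MvPolynomial (Fin n) ℝ)} {p : MvPolynomial (Fin n) ℝ}
    (h : ∀ j, homogeneousComponent j p ∈ K) : p ∈ K := by
  rw [← sum_homogeneousComponent p]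
  exact Ideal.sum_mem _ fun j _ => h j

/-- homogeneous element of `K + (Q)`. -/
lemma hom_decomp {K : Ideal (MvPolynomial (Fin n) ℝ)} (hK : HomI K)
    {Q : MvPolynomial (Fin n) ℝ} {d : ℕ} (hQ : Q.IsHomogeneous d)
    {p : MvPolynomial (Fin n) ℝ} {j : ℕ} (hp : p.IsHomogeneous j)
    (h : p ∈ K ⊔ Ideal.span {Q}) :
    p ∈ K ∨ (d ≤ j ∧ ∃ u ∈ K, ∃ a : MvPolynomial (Fin n) ℝ, a.IsHomogeneous (j - d) ∧
      p = u + Q * a) := by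
  obtain ⟨u, hu, a, e⟩ := mem_sup_single.1 h
  have e2 := congrArg (homogeneousComponent j) e
  rw [hc_of_hom hp, if_pos rfl, map_add, hc_mul hQ] at e2
  split_ifs at e2 with hd
  · exact Or.inr ⟨hd, _, hK u hu j, _, homogeneousComponent_isHomogeneous _ _, e2⟩
  · left
    rw [e2, add_zero]
    exact hK u hu j

lemma cof_pow {K : Ideal (MvPolynomial (Fin n) ℝ)} (hK : HomI K)
    {Q : MvPolynomial (Fin n) ℝ} {d : ℕ} (hQ : Q.IsHomogeneous d) {M : ℕ}
    (h : Cof M (K ⊔ Ideal.span {Q})) (s : ℕ) :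
    Cof (M + d * s) (K ⊔ Ideal.span {Q ^ s}) := by
  induction s with
  | zero =>
    intro j _ p _
    exact mem_sup_single.2 ⟨0, zero_mem _, p, by simp⟩
  | succ s ih =>
    intro j hj p hp
    have hj' : M + d * s + d ≤ j := by rw [Nat.mul_succ] at hj; omega
    rcases hom_decomp hK hQ hp (h j (by omega) p hp) with h1 | ⟨hd, u, hu, a, ha, rfl⟩
    · exact Ideal.mem_sup_left h1
    · obtain ⟨v, hv, b, rfl⟩ := mem_sup_single.1 (ih (j - d) (by omega) a ha)
      exact mem_sup_single.2 ⟨u + Q * v, add_mem hu (Ideal.mul_mem_left _ _ hv), b, by ring⟩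

lemma swap1 {K : Ideal (MvPolynomial (Fin n) ℝ)} (hK : HomI K)
    {y b : MvPolynomial (Fin n) ℝ} (hy : y.IsHomogeneous 1)
    (h1 : Nzd y K) (h2 : Nzd b (K ⊔ Ideal.span {y})) : Nzd b K := by
  intro z hz
  have key : ∀ N : ℕ, ∃ u ∈ K, ∃ a, z = u + y ^ N * a ∧ b * a ∈ K := by
    intro N
    induction N with
    | zero => exact ⟨0, zero_mem _, z, by simp, hz⟩
    | succ N ih =>
      obtain ⟨u, hu, a, e, ha⟩ := ih
      obtain ⟨v, hv, a', rfl⟩ := mem_sup_single.1 (h2 a (Ideal.mem_sup_left ha))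
      refine ⟨u + y ^ N * v, add_mem hu (Ideal.mul_mem_left _ _ hv), a', by rw [e]; ring, ?_⟩
      apply h1
      have : y * (b * a') = b * (v + y * a') - b * v := by ring
      rw [this]
      exact sub_mem ha (Ideal.mul_mem_left _ _ hv)
  apply mem_of_hc
  intro j
  obtain ⟨u, hu, a, e, -⟩ := key (j + 1)
  rw [e, map_add, hc_mul (by simpa using hy.pow (j + 1)), if_neg (by omega), add_zero]
  exact hK u hu j

lemma swap2 {R : Type*} [CommRing R] {K : Ideal R}
    {y b : R} (h1 : Nzd y K) (h2 : Nzd b (K ⊔ Ideal.span {y})) :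
    Nzd y (K ⊔ Ideal.span {b}) := by
  intro z hz
  obtain ⟨u, hu, w, e⟩ := mem_sup_single.1 hz
  have : b * w ∈ K ⊔ Ideal.span {y} :=
    mem_sup_single.2 ⟨-u, neg_mem hu, z, by rw [e]; ring⟩
  obtain ⟨v, hv, w', rfl⟩ := mem_sup_single.1 (h2 w this)
  have h3 : y * (z - b * w') ∈ K := by
    have : y * (z - b * w') = u + b * v := by rw [mul_sub, e]; ring
    rw [this]
    exact add_mem hu (Ideal.mul_mem_left _ _ hv)
  exact mem_sup_single.2 ⟨_, h1 _ h3, w', by ring⟩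

lemma nzd_of_pow {R : Type*} [CommRing R] {K : Ideal R} {c b : R} (h : Nzd c K) {N : ℕ}
    (hN : c ^ N ∈ K ⊔ Ideal.span {b}) : Nzd b K := by
  have hp : ∀ N, Nzd (c ^ N) K := by
    intro N
    induction N with
    | zero => intro z hz; simpa using hz
    | succ N ih =>
      intro z hz
      exact h z (ih _ (by rwa [pow_succ, mul_assoc] at hz))
  intro z hz
  obtain ⟨u, hu, a, e⟩ := mem_sup_single.1 hN
  apply hp N
  have : c ^ N * z = u * z + a * (b * z) := by rw [e]; ring
  rw [this]
  exact add_mem (Ideal.mul_mem_right _ _ hu) (Ideal.mul_mem_left _ _ hz)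

section ell
variable {R : Type*} [CommRing R] [Algebra ℝ R]

lemma ell_mono {K L : Ideal R} (h : K ≤ L) : ell L ≤ ell K :=
  Module.length_le_of_surjective (Ideal.Quotient.factorₐ ℝ h).toLinearMap
    (Ideal.Quotient.factor_surjective h)

lemma ell_ge {K C : Ideal R} (a : R) (h : ∀ z, a * z ∈ K ↔ z ∈ C) :
    ell K = ell C + ell (K ⊔ Ideal.span {a}) := by
  let f0 : R →ₗ[R] (R ⧸ K) := (LinearMap.lsmul R (R ⧸ K) a).comp K.mkQ
  have hf0 : LinearMap.ker f0 = C := by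
    ext z
    simp only [LinearMap.mem_ker, f0, LinearMap.comp_apply, LinearMap.lsmul_apply]
    rw [← h z, ← map_smul, Submodule.mkQ_apply, Submodule.Quotient.mk_eq_zero, smul_eq_mul]
  let f : (R ⧸ C) →ₗ[R] (R ⧸ K) := Submodule.liftQ C f0 hf0.ge
  have hf : Function.Injective f := by
    rw [← LinearMap.ker_eq_bot]
    exact Submodule.ker_liftQ_eq_bot _ _ _ hf0.le
  let g : (R ⧸ K) →ₗ[R] (R ⧸ (K ⊔ Ideal.span {a})) :=
    Submodule.factor (le_sup_left : K ≤ K ⊔ Ideal.span {a})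
  have hg : Function.Surjective g := Submodule.factor_surjective _
  have hex : Function.Exact f g := by
    intro y
    obtain ⟨y, rfl⟩ := Submodule.Quotient.mk_surjective _ y
    constructor
    · intro hy
      have : y ∈ K ⊔ Ideal.span {a} := by
        rwa [← Submodule.mkQ_apply, Submodule.factor_mk, Submodule.mkQ_apply,
          Submodule.Quotient.mk_eq_zero] at hy
      obtain ⟨u, hu, b, rfl⟩ := mem_sup_single.1 this
      refine ⟨Submodule.Quotient.mk b, ?_⟩
      change a • (Submodule.Quotient.mk b : R ⧸ K) = _
      rw [← Submodule.Quotient.mk_smul, Submodule.Quotient.eq]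
      simpa using hu
    · rintro ⟨b, hb⟩
      obtain ⟨b, rfl⟩ := Submodule.Quotient.mk_surjective _ b
      rw [← hb]
      change g (a • (Submodule.Quotient.mk b : R ⧸ K)) = 0
      rw [← Submodule.Quotient.mk_smul, ← Submodule.mkQ_apply, Submodule.factor_mk,
        Submodule.mkQ_apply, Submodule.Quotient.mk_eq_zero]
      exact Ideal.mem_sup_right (Ideal.mul_mem_right _ _ (Ideal.mem_span_singleton_self a))
  exact Module.length_eq_add_of_exact (f.restrictScalars ℝ) (g.restrictScalars ℝ) hf hg hex

/-- If `a C ⊆ K` then colength of `K` is at most the sum. -/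
lemma ell_le {K C : Ideal R} (a : R) (h : ∀ z ∈ C, a * z ∈ K) :
    ell K ≤ ell C + ell (K ⊔ Ideal.span {a}) := by
  rw [ell_ge (K := K) (C := Submodule.comap (LinearMap.lsmul R R a) K) a (by intro z; simp)]
  gcongr
  apply ell_mono
  intro z hz
  simpa using h z hz

lemma ell_pow_le {K : Ideal R} (a : R) (s : ℕ) :
    ell (K ⊔ Ideal.span {a ^ s}) ≤ s * ell (K ⊔ Ideal.span {a}) := by
  induction s with
  | zero =>
    have : (K ⊔ Ideal.span {a ^ 0}) = ⊤ := by simp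
    rw [this]
    simp [ell, Module.length_eq_zero]
  | succ s ih =>
    refine (ell_le (C := K ⊔ Ideal.span {a ^ s}) a ?_).trans ?_
    · intro z hz
      obtain ⟨u, hu, b, rfl⟩ := mem_sup_single.1 hz
      exact mem_sup_single.2 ⟨a * u, Ideal.mul_mem_left _ _ hu, b, by ring⟩
    · push_cast
      rw [add_mul, one_mul]
      have h2 : ell (K ⊔ Ideal.span {a ^ (s + 1)} ⊔ Ideal.span {a}) ≤ ell (K ⊔ Ideal.span {a}) :=
        ell_mono (sup_le_sup_right le_sup_left _)
      exact add_le_add ih h2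

lemma ell_pow_ge {K : Ideal R} (a : R) (ha : Nzd a K) (s : ℕ) :
    s * ell (K ⊔ Ideal.span {a}) ≤ ell (K ⊔ Ideal.span {a ^ s}) := by
  induction s with
  | zero => simp
  | succ s ih =>
    rw [ell_ge (K := K ⊔ Ideal.span {a ^ (s + 1)}) (C := K ⊔ Ideal.span {a ^ s}) a ?_]
    · push_cast
      rw [add_mul, one_mul]
      gcongr
      apply ell_mono
      refine sup_le (sup_le le_sup_left ?_) le_sup_right
      rw [Ideal.span_singleton_le_iff_mem]
      exact mem_sup_single.2 ⟨0, zero_mem _, a ^ s, by ring⟩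
    · intro z
      constructor
      · intro hz
        obtain ⟨u, hu, b, e⟩ := mem_sup_single.1 hz
        have : a * (z - a ^ s * b) ∈ K := by
          rw [mul_sub, e]
          convert hu using 1
          ring
        exact mem_sup_single.2 ⟨_, ha _ this, b, by ring⟩
      · intro hz
        obtain ⟨u, hu, b, rfl⟩ := mem_sup_single.1 hz
        exact mem_sup_single.2 ⟨a * u, Ideal.mul_mem_left _ _ hu, b, by ring⟩

/-- The multiplicativity estimate. -/
lemma ell_exchange {K : Ideal R} {b c : R} {d M : ℕ} (hb : Nzd b K)
    (h : ∀ s, c ^ (M + d * s) ∈ K ⊔ Ideal.span {b ^ s}) {L : ℕ}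
    (hc : ell (K ⊔ Ideal.span {c}) ≤ L) :
    ell (K ⊔ Ideal.span {b}) ≤ (d * L : ℕ) := by
  have key : ∀ s : ℕ, s * ell (K ⊔ Ideal.span {b}) ≤ ((M + d * s) * L : ℕ) := by
    intro s
    refine (ell_pow_ge b hb s).trans ((ell_mono (K := K ⊔ Ideal.span {c ^ (M + d * s)}) ?_).trans
      ((ell_pow_le c (M + d * s)).trans ?_))
    · exact sup_le le_sup_left ((Ideal.span_singleton_le_iff_mem _).2 (h s))
    · push_cast
      gcongr
  have hfin : ell (K ⊔ Ideal.span {b}) ≠ ⊤ := by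
    intro h
    have := key 1
    rw [h] at this
    simp only [Nat.cast_one, one_mul] at this
    exact absurd (top_le_iff.1 this) (ENat.natCast_ne_top _)
  obtain ⟨l, hl⟩ := ENat.ne_top_iff_exists.1 hfin
  rw [← hl] at key ⊢
  have key' : ∀ s : ℕ, s * l ≤ (M + d * s) * L := fun s => by exact_mod_cast key s
  have : l ≤ d * L := by
    by_contra hcon
    have h1 := key' (M * L + 1)
    have h2 : (M * L + 1) * (d * L + 1) ≤ (M * L + 1) * l := Nat.mul_le_mul_left _ (by omega)
    nlinarith
  exact_mod_cast this

end ell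


lemma quot_finite {K : Ideal (MvPolynomial (Fin n) ℝ)} (hK : HomI K)
    {c : MvPolynomial (Fin n) ℝ} (hc : c.IsHomogeneous 1) {M : ℕ}
    (hM : Cof M (K ⊔ Ideal.span {c})) :
    Module.Finite ℝ (MvPolynomial (Fin n) ℝ ⧸ (K ⊔ Ideal.span {c - 1})) := by
  set L := K ⊔ Ideal.span {c - 1} with hL
  let W : Submodule ℝ (MvPolynomial (Fin n) ℝ ⧸ L) :=
    (⨆ i ∈ Finset.range M, homogeneousSubmodule (Fin n) ℝ i).map (Ideal.Quotient.mkₐ ℝ L).toLinearMap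
  have key : ∀ j, ∀ p : MvPolynomial (Fin n) ℝ, p.IsHomogeneous j → Ideal.Quotient.mk L p ∈ W := by
    intro j
    induction j with
    | zero =>
      intro p hp
      by_cases h : M ≤ 0
      · rcases hom_decomp hK hc hp (hM 0 h p hp) with h1 | ⟨h1, -⟩
        · rw [Ideal.Quotient.eq_zero_iff_mem.2 (Ideal.mem_sup_left h1)]
          exact zero_mem _
        · omega
      · exact ⟨p, Submodule.mem_iSup_of_mem 0 (Submodule.mem_iSup_of_mem (by simp; omega) hp), rfl⟩
    | succ j ih =>
      intro p hp
      by_cases h : M ≤ j + 1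
      · rcases hom_decomp hK hc hp (hM _ h p hp) with h1 | ⟨h1, u, hu, a, ha, rfl⟩
        · rw [Ideal.Quotient.eq_zero_iff_mem.2 (Ideal.mem_sup_left h1)]
          exact zero_mem _
        · have : Ideal.Quotient.mk L (u + c * a) = Ideal.Quotient.mk L a := by
            rw [Ideal.Quotient.eq]
            exact mem_sup_single.2 ⟨u, hu, a, by ring⟩
          rw [this]
          exact ih a (by simpa using ha)
      · exact ⟨p, Submodule.mem_iSup_of_mem (j + 1)
          (Submodule.mem_iSup_of_mem (by simp; omega) hp), rfl⟩
  have hW : W = ⊤ := by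
    rw [eq_top_iff]
    rintro x -
    obtain ⟨p, rfl⟩ := Ideal.Quotient.mk_surjective x
    rw [← sum_homogeneousComponent p, map_sum]
    exact sum_mem fun i _ => key i _ (homogeneousComponent_isHomogeneous _ _)
  refine ⟨hW ▸ Submodule.FG.map _ ?_⟩
  exact Submodule.fg_biSup _ _ fun i _ => homogeneousSubmodule_fg _ _ _

lemma exists_Q {K : Ideal (MvPolynomial (Fin n) ℝ)} (hK : HomI K)
    {c : MvPolynomial (Fin n) ℝ} (hc : c.IsHomogeneous 1) {M : ℕ}
    (hM : Cof M (K ⊔ Ideal.span {c})) {d k : ℕ} {P : Fin n → MvPolynomial (Fin n) ℝ}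
    (hP : ∀ i, (P i).IsHomogeneous d) (hk : Cof k (Ideal.span (Set.range P))) :
    ∃ Q : MvPolynomial (Fin n) ℝ, Q.IsHomogeneous d ∧ Q ∈ Ideal.span (Set.range P) ∧
      ∃ N, c ^ N ∈ K ⊔ Ideal.span {Q} := by
  have hfin := quot_finite hK hc hM
  set L := K ⊔ Ideal.span {c - 1} with hL
  have hart : IsArtinianRing (MvPolynomial (Fin n) ℝ ⧸ L) := IsArtinianRing.of_finite ℝ _
  let φ : (Fin n → ℝ) →ₗ[ℝ] MvPolynomial (Fin n) ℝ := Fintype.linearCombination ℝ P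
  let S : MaximalSpectrum (MvPolynomial (Fin n) ℝ ⧸ L) → Submodule ℝ (Fin n → ℝ) := fun m =>
    (m.asIdeal.restrictScalars ℝ).comap ((Ideal.Quotient.mkₐ ℝ L).toLinearMap.comp φ)
  have hS : ∃ l : Fin n → ℝ, ∀ m, l ∉ S m := by
    by_contra hcon
    push Not at hcon
    have hU : ⋃ m, (S m : Set (Fin n → ℝ)) = Set.univ := by
      ext l
      simpa using hcon l
    obtain ⟨m, hm⟩ := Subspace.exists_eq_top_of_iUnion_eq_univ hU
    have h1 : ∀ i, Ideal.Quotient.mk L (P i) ∈ m.asIdeal := by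
      intro i
      have : (Pi.single i 1 : Fin n → ℝ) ∈ S m := hm ▸ Submodule.mem_top
      have h2 : φ (Pi.single i 1) = P i := by
        simp [φ, Fintype.linearCombination_apply_single]
      have h3 : Ideal.Quotient.mk L (φ (Pi.single i 1)) ∈ m.asIdeal := this
      rwa [h2] at h3
    have h2 : Ideal.span (Set.range P) ≤ m.asIdeal.comap (Ideal.Quotient.mk L) := by
      rw [Ideal.span_le]
      rintro _ ⟨i, rfl⟩
      exact h1 i
    have h3 : Ideal.Quotient.mk L (c ^ k) ∈ m.asIdeal :=
      h2 (hk k le_rfl _ (by simpa using hc.pow k))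
    have h4 : Ideal.Quotient.mk L c = 1 := by
      rw [← map_one (Ideal.Quotient.mk L), Ideal.Quotient.eq]
      exact Ideal.mem_sup_right (Ideal.mem_span_singleton_self _)
    rw [map_pow, h4, one_pow] at h3
    exact m.isMaximal.ne_top ((Ideal.eq_top_iff_one _).2 h3)
  obtain ⟨l, hl⟩ := hS
  refine ⟨φ l, ?_, ?_, ?_⟩
  · simp only [φ, Fintype.linearCombination_apply]
    refine IsHomogeneous.sum _ _ _ fun i _ => ?_
    exact Submodule.smul_mem (homogeneousSubmodule (Fin n) ℝ d) _ (hP i)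
  · simp only [φ, Fintype.linearCombination_apply]
    refine Ideal.sum_mem _ fun i _ => ?_
    rw [MvPolynomial.smul_eq_C_mul]
    exact Ideal.mul_mem_left _ _ (Ideal.subset_span ⟨i, rfl⟩)
  · have hQd : (φ l).IsHomogeneous d := by
      simp only [φ, Fintype.linearCombination_apply]
      refine IsHomogeneous.sum _ _ _ fun i _ => ?_
      exact Submodule.smul_mem (homogeneousSubmodule (Fin n) ℝ d) _ (hP i)
    have hl' : ∀ m : MaximalSpectrum (MvPolynomial (Fin n) ℝ ⧸ L),
        Ideal.Quotient.mk L (φ l) ∉ m.asIdeal := hl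
    clear hl
    generalize φ l = Q at *
    have hu : IsUnit (Ideal.Quotient.mk L Q) := by
      by_contra hcon
      obtain ⟨m, hm, hm2⟩ := exists_max_ideal_of_mem_nonunits hcon
      exact hl' ⟨m, hm⟩ hm2
    obtain ⟨b, hb⟩ := hu.exists_right_inv
    obtain ⟨a, rfl⟩ := Ideal.Quotient.mk_surjective b
    rw [← map_mul, ← map_one (Ideal.Quotient.mk L), Ideal.Quotient.eq] at hb
    obtain ⟨u, hu, h, e⟩ := mem_sup_single.1 hb
    have hK2 : HomI (K ⊔ Ideal.span {Q}) := hK.sup (HomI.single hQd)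
    set w := Q * a - u with hw
    have hwm : w ∈ K ⊔ Ideal.span {Q} := mem_sup_single.2 ⟨-u, neg_mem hu, a, by rw [hw]; ring⟩
    have e2 : 1 = w - c * h + h := by rw [hw]; linear_combination -e
    have key : ∀ j, homogeneousComponent j h - c ^ j ∈ K ⊔ Ideal.span {Q} := by
      intro j
      induction j with
      | zero =>
        have e3 := congrArg (homogeneousComponent 0) e2
        rw [map_add, map_sub, hc_mul hc, if_neg (by omega), hc_of_hom (isHomogeneous_one _ _),
          if_pos rfl] at e3
        have : homogeneousComponent 0 h - c ^ 0 = - homogeneousComponent 0 w := by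
          rw [pow_zero]; linear_combination -e3
        rw [this]
        exact neg_mem (hK2 _ hwm _)
      | succ j ih =>
        have e3 := congrArg (homogeneousComponent (j + 1)) e2
        rw [map_add, map_sub, hc_mul hc, if_pos (by omega), hc_of_hom (isHomogeneous_one _ _),
          if_neg (by omega), Nat.add_sub_cancel] at e3
        have : homogeneousComponent (j + 1) h - c ^ (j + 1) =
            c * (homogeneousComponent j h - c ^ j) - homogeneousComponent (j + 1) w := by
          linear_combination -e3
        rw [this]
        exact sub_mem (Ideal.mul_mem_left _ _ ih) (hK2 _ hwm _)
    refine ⟨h.totalDegree + 1, ?_⟩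
    have := key (h.totalDegree + 1)
    rw [homogeneousComponent_eq_zero _ _ (by omega), zero_sub] at this
    exact neg_mem_iff.1 this

/-- the `j`-th variable (or zero) -/
def xv (n j : ℕ) : MvPolynomial (Fin n) ℝ := if h : j < n then X ⟨j, h⟩ else 0

/-- the ideal generated by the first `j` variables -/
def XI (n : ℕ) : ℕ → Ideal (MvPolynomial (Fin n) ℝ)
  | 0 => ⊥
  | j + 1 => XI n j ⊔ Ideal.span {xv n j}

lemma xv_hom (n j : ℕ) : (xv n j).IsHomogeneous 1 := by
  unfold xv
  split_ifs
  · exact isHomogeneous_X _ _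
  · exact isHomogeneous_zero _ _ _

lemma XI_hom (n j : ℕ) : HomI (XI n j) := by
  induction j with
  | zero => exact HomI.bot
  | succ j ih => exact ih.sup (HomI.single (xv_hom n j))

lemma XI_eq (n j : ℕ) :
    XI n j = Ideal.span ((X : Fin n → MvPolynomial (Fin n) ℝ) '' {i | i.val < j}) := by
  induction j with
  | zero => simp [XI]
  | succ j ih =>
    rw [XI, ih, ← Ideal.span_union]
    unfold xv
    split_ifs with h
    · congr 1
      rw [← Set.image_singleton (f := (X : Fin n → MvPolynomial (Fin n) ℝ)), ← Set.image_union]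
      congr 1
      ext i
      simp [Fin.ext_iff]
      omega
    · rw [Ideal.span_union, Ideal.span_singleton_eq_bot.2 rfl, sup_bot_eq]
      congr 2
      ext i
      simp
      omega

lemma XI_nzd (n j : ℕ) (hj : j < n) : Nzd (xv n j) (XI n j) := by
  intro z hz
  rw [XI_eq, mem_ideal_span_X_image] at hz ⊢
  intro m hm
  have h1 : m + Finsupp.single (⟨j, hj⟩ : Fin n) 1 ∈ (xv n j * z).support := by
    rw [mem_support_iff] at hm ⊢
    rw [xv, dif_pos hj, mul_comm, coeff_mul_X]
    exact hm
  obtain ⟨i, hi, h2⟩ := hz _ h1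
  refine ⟨i, hi, ?_⟩
  have : (⟨j, hj⟩ : Fin n) ≠ i := by
    intro h
    simp [← h] at hi
  simpa [Finsupp.single_apply, this] using h2

lemma XI_cof (n : ℕ) : Cof 1 (XI n n) := by
  intro j hj p hp
  rw [XI_eq, mem_ideal_span_X_image]
  intro m hm
  by_contra hcon
  push Not at hcon
  have : m = 0 := by
    ext i
    simpa using hcon i (by simp)
  have h2 := hp.coeff_eq_zero (d := m) (by rw [this]; simp; omega)
  exact (mem_support_iff.1 hm) h2

lemma XI_ell (n : ℕ) : ell (XI n n) ≤ 1 := by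
  have : Module.length ℝ ℝ = 1 := Module.length_eq_one ℝ ℝ
  rw [← this]
  refine Module.length_le_of_surjective (Algebra.linearMap ℝ _) ?_
  intro x
  obtain ⟨p, rfl⟩ := Ideal.Quotient.mk_surjective x
  refine ⟨coeff 0 p, ?_⟩
  change Ideal.Quotient.mk (XI n n) (C (coeff 0 p)) = _
  rw [Ideal.Quotient.eq]
  apply mem_of_hc
  intro j
  rw [← homogeneousComponent_zero, map_sub,
    hc_of_hom (homogeneousComponent_isHomogeneous 0 p)]
  split_ifs with h
  · simp [← h]
  · rw [zero_sub]
    exact neg_mem (XI_cof n j (by omega) _ (homogeneousComponent_isHomogeneous _ _))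

lemma alg_step {d k : ℕ} {P : Fin n → MvPolynomial (Fin n) ℝ}
    (hP : ∀ i, (P i).IsHomogeneous d) (hk : Cof k (Ideal.span (Set.range P))) (t r : ℕ)
    (htr : r + t = n) :
    ∃ J : Ideal (MvPolynomial (Fin n) ℝ), HomI J ∧ J ≤ Ideal.span (Set.range P) ∧
      (∀ j < r, Nzd (xv n j) (J ⊔ XI n j)) ∧ (∃ M, Cof M (J ⊔ XI n r)) ∧
      ell (J ⊔ XI n r) ≤ (d ^ t : ℕ) := by
  induction t generalizing r with
  | zero =>
    obtain rfl : r = n := by omega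
    refine ⟨⊥, HomI.bot, bot_le, ?_, ⟨1, ?_⟩, ?_⟩
    · intro j hj
      rw [bot_sup_eq]
      exact XI_nzd _ _ hj
    · rw [bot_sup_eq]
      exact XI_cof _
    · rw [bot_sup_eq]
      simpa using XI_ell _
  | succ t ih =>
    obtain ⟨J₀, hJ, hJP, hnz, ⟨M, hM⟩, hell⟩ := ih (r + 1) (by omega)
    have hK : HomI (J₀ ⊔ XI n r) := hJ.sup (XI_hom n r)
    have hsplit : J₀ ⊔ XI n (r + 1) = (J₀ ⊔ XI n r) ⊔ Ideal.span {xv n r} := by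
      rw [XI, sup_assoc]
    rw [hsplit] at hM hell
    obtain ⟨Q, hQ, hQP, N, hN⟩ := exists_Q hK (xv_hom n r) hM hP hk
    have hQr : Nzd Q (J₀ ⊔ XI n r) := nzd_of_pow (hnz r (by omega)) hN
    have hQj : ∀ i ≤ r, Nzd Q (J₀ ⊔ XI n (r - i)) := by
      intro i
      induction i with
      | zero => intro _; exact hQr
      | succ i ih2 =>
        intro hi
        refine swap1 (hJ.sup (XI_hom n _)) (xv_hom n (r - (i + 1))) (hnz _ (by omega)) ?_
        have : r - i = (r - (i + 1)) + 1 := by omega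
        have h3 := ih2 (by omega)
        rw [this, XI, ← sup_assoc] at h3
        exact h3
    have hcomm : ∀ j, (J₀ ⊔ Ideal.span {Q}) ⊔ XI n j = (J₀ ⊔ XI n j) ⊔ Ideal.span {Q} :=
      fun j => sup_right_comm _ _ _
    have hM2 : Cof (M + N) ((J₀ ⊔ XI n r) ⊔ Ideal.span {Q}) := by
      have h1 := cof_pow hK (xv_hom n r) hM N
      intro j hj p hp
      have h2 := h1 j (by omega) p hp
      exact (sup_le le_sup_left ((Ideal.span_singleton_le_iff_mem _).2 hN)) h2
    refine ⟨J₀ ⊔ Ideal.span {Q}, hJ.sup (HomI.single hQ),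
      sup_le hJP ((Ideal.span_singleton_le_iff_mem _).2 hQP), ?_, ⟨M + N, ?_⟩, ?_⟩
    · intro j hj
      rw [hcomm]
      apply swap2 (hnz j (by omega))
      have h3 := hQj (r - (j + 1)) (by omega)
      have : r - (r - (j + 1)) = j + 1 := by omega
      rw [this, XI, ← sup_assoc] at h3
      exact h3
    · rw [hcomm]
      exact hM2
    · rw [hcomm, pow_succ, mul_comm]
      refine ell_exchange (M := M + N) hQr ?_ hell
      intro s
      exact cof_pow hK hQ hM2 s _ le_rfl _ (by simpa using (xv_hom n r).pow (M + N + d * s))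

/-- Bezout upper bound. -/
lemma alg_upper {d k : ℕ} {P : Fin n → MvPolynomial (Fin n) ℝ}
    (hP : ∀ i, (P i).IsHomogeneous d) (hk : Cof k (Ideal.span (Set.range P))) :
    ell (Ideal.span (Set.range P)) ≤ (d ^ n : ℕ) := by
  obtain ⟨J, -, h1, -, -, h2⟩ := alg_step hP hk n 0 (by omega)
  rw [XI, sup_bot_eq] at h2
  exact (ell_mono h1).trans h2

end MilnorAux


namespace MilnorAux

open MvPolynomial

/-- exponents of degree `< K` -/
abbrev Dlt (n K : ℕ) : Type := {α : Fin n →₀ ℕ // α.degree < K}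

instance (n K : ℕ) : Finite (Dlt n K) := (Finsupp.finite_of_degree_lt (σ := Fin n) K).to_subtype

lemma card_Dlt_le (n K : ℕ) : Nat.card (Dlt n K) ≤ K ^ n := by
  have : Nat.card (Fin n → Fin K) = K ^ n := by simp
  rw [← this]
  refine Nat.card_le_card_of_injective
    (fun α i => ⟨α.1 i, lt_of_le_of_lt (Finsupp.le_degree i α.1) α.2⟩) ?_
  intro α β h
  ext i
  have := congrFun h i
  simpa [Fin.ext_iff] using this

lemma card_Dlt_one (n : ℕ) : 1 ≤ Nat.card (Dlt n 1) := by
  have : Nonempty (Dlt n 1) := ⟨⟨0, by simp⟩⟩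
  exact Nat.card_pos

lemma card_Dlt_mul (n M d : ℕ) (hd : 0 < d) :
    d ^ n * Nat.card (Dlt n M) ≤ Nat.card (Dlt n (d * (M + n))) := by
  have : Nat.card ((Fin n → Fin d) × Dlt n M) = d ^ n * Nat.card (Dlt n M) := by
    rw [Nat.card_prod]; simp
  rw [← this]
  refine Nat.card_le_card_of_injective
    (fun x => ⟨Finsupp.equivFunOnFinite.symm (fun i => d * x.2.1 i + (x.1 i).val), ?_⟩) ?_
  · rw [Finsupp.degree_eq_sum]
    simp only [Finsupp.equivFunOnFinite_symm_apply_apply]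
    rw [Finset.sum_add_distrib, ← Finset.mul_sum, ← Finsupp.degree_eq_sum, mul_add]
    have h1 : ∑ i, (x.1 i).val ≤ d * n := by
      calc ∑ i, (x.1 i).val ≤ ∑ _i : Fin n, d := Finset.sum_le_sum fun i _ => (x.1 i).2.le
        _ = d * n := by simp [mul_comm]
    have h2 : d * x.2.1.degree < d * M := Nat.mul_lt_mul_of_pos_left x.2.2 hd
    omega
  · rintro ⟨γ, β⟩ ⟨γ', β'⟩ h
    have h1 : ∀ i, d * β.1 i + (γ i).val = d * β'.1 i + (γ' i).val := by
      intro i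
      have := DFunLike.congr_fun (Subtype.ext_iff.1 h) i
      simpa using this
    have h2 : ∀ i, (γ i).val = (γ' i).val := by
      intro i
      have := congrArg (· % d) (h1 i)
      simpa [Nat.mul_add_mod, Nat.mod_eq_of_lt (γ i).2, Nat.mod_eq_of_lt (γ' i).2] using this
    have h3 : ∀ i, β.1 i = β'.1 i := by
      intro i
      have := h1 i
      rw [h2 i] at this
      exact Nat.eq_of_mul_eq_mul_left hd (by omega)
    ext i
    · exact h2 i
    · exact h3 i

lemma growth {n d r : ℕ} (hn : n ≠ 0)
    (h : ∀ N, Nat.card (Dlt n (d * N)) ≤ Nat.card (Dlt n N) * r) : d ^ n ≤ r := by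
  rcases Nat.eq_zero_or_pos d with rfl | hd
  · simp [hn]
  by_contra hcon
  push Not at hcon
  have h1 : ∀ M, (r + 1) * Nat.card (Dlt n M) ≤ r * Nat.card (Dlt n (M + n)) := by
    intro M
    calc (r + 1) * Nat.card (Dlt n M) ≤ d ^ n * Nat.card (Dlt n M) := by gcongr; omega
      _ ≤ _ := card_Dlt_mul n M d hd
      _ ≤ _ := h _
      _ = _ := mul_comm _ _
  have h2 : ∀ s, (r + 1) ^ s ≤ r ^ s * Nat.card (Dlt n (1 + n * s)) := by
    intro s
    induction s with
    | zero => simpa using card_Dlt_one n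
    | succ s ih =>
      calc (r + 1) ^ (s + 1) = (r + 1) * (r + 1) ^ s := by ring
        _ ≤ (r + 1) * (r ^ s * Nat.card (Dlt n (1 + n * s))) := by gcongr
        _ = r ^ s * ((r + 1) * Nat.card (Dlt n (1 + n * s))) := by ring
        _ ≤ r ^ s * (r * Nat.card (Dlt n (1 + n * s + n))) := by gcongr r ^ s * ?_; exact h1 _
        _ = _ := by rw [show 1 + n * s + n = 1 + n * (s + 1) by ring]; ring
  have h3 : ∀ s : ℕ, 1 ≤ s → ((r : ℝ) + 1) ^ s ≤ r ^ s * ((1 + n) ^ n * (s : ℝ) ^ n) := by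
    intro s hs
    have : (r + 1) ^ s ≤ r ^ s * ((1 + n) ^ n * s ^ n) := by
      refine (h2 s).trans ?_
      gcongr
      refine (card_Dlt_le _ _).trans ?_
      rw [← mul_pow]
      gcongr
      nlinarith
    exact_mod_cast this
  have hr1 : (0 : ℝ) < (r : ℝ) + 1 := by positivity
  have hq : (r : ℝ) / (r + 1) < 1 := by rw [div_lt_one hr1]; linarith
  have ht := (tendsto_pow_const_mul_const_pow_of_lt_one n (by positivity) hq).const_mul
    ((1 + (n : ℝ)) ^ n)
  rw [mul_zero] at ht
  have ht2 := (ht.eventually (gt_mem_nhds (zero_lt_one))).and (eventually_ge_atTop 1)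
  obtain ⟨s, hs, hs1⟩ := ht2.exists
  have h4 := h3 s hs1
  have h5 : (1 + (n : ℝ)) ^ n * ((s : ℝ) ^ n * (r / (r + 1)) ^ s) * (r + 1) ^ s
      = r ^ s * ((1 + n) ^ n * (s : ℝ) ^ n) := by
    rw [div_pow]; field_simp
  have h6 : (0 : ℝ) < ((r : ℝ) + 1) ^ s := by positivity
  nlinarith

variable {n : ℕ} {E : Type} [CommRing E] [Algebra ℝ E]

lemma filt {κ : Type*} (x : Fin n → E) (w : κ → E)
    (hw : ∀ e, e ∈ Submodule.span ℝ (Set.range w) ⊔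
      (Ideal.span (Set.range x)).restrictScalars ℝ) (N : ℕ) (e : E)
    (he : e ∈ Ideal.span (Set.range x) ^ N) :
    ∃ e' ∈ Ideal.span (Set.range x) ^ (N + 1), e - e' ∈ Submodule.span ℝ
      {y | ∃ α : Fin n →₀ ℕ, α.degree = N ∧ ∃ k, y = (∏ i, x i ^ α i) * w k} := by
  obtain ⟨q, hq, rfl⟩ := (Ideal.mem_span_pow_iff_exists_isHomogeneous _ _).1 he
  have h1 : ∀ α : Fin n →₀ ℕ, ∃ b ∈ Submodule.span ℝ (Set.range w),
      ∃ c ∈ Ideal.span (Set.range x), b + c = coeff α q := by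
    intro α
    obtain ⟨b, hb, c, hc, h⟩ := Submodule.mem_sup.1 (hw (coeff α q))
    exact ⟨b, hb, c, hc, h⟩
  choose b hb c hc hbc using h1
  have hdeg : ∀ α ∈ q.support, α.degree = N := by
    intro α hα
    by_contra hcon
    exact (mem_support_iff.1 hα) (hq.coeff_eq_zero hcon)
  refine ⟨∑ α ∈ q.support, c α * ∏ i, x i ^ α i, ?_, ?_⟩
  · refine Ideal.sum_mem _ fun α hα => ?_
    rw [mul_comm, pow_succ]
    refine Ideal.mul_mem_mul ?_ (hc α)
    rw [← hdeg α hα, Finsupp.degree_eq_sum, ← Finset.prod_pow_eq_pow_sum]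
    exact Ideal.prod_mem_prod fun i _ => Ideal.pow_mem_pow (Ideal.subset_span (Set.mem_range_self i)) _
  · rw [eval_eq', ← Finset.sum_sub_distrib]
    refine sum_mem fun α hα => ?_
    rw [← sub_mul, ← hbc α, add_sub_cancel_right, mul_comm]
    have := Submodule.mem_map_of_mem (f := LinearMap.mulLeft ℝ (∏ i, x i ^ α i)) (hb α)
    rw [Submodule.map_span] at this
    refine Submodule.span_mono ?_ this
    rintro _ ⟨_, ⟨k, rfl⟩, rfl⟩
    exact ⟨α, hdeg α hα, k, rfl⟩

/-- Abstract setting. -/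
structure Setup (φ : MvPolynomial (Fin n) ℝ →ₐ[ℝ] E) (m : Ideal E) : Prop where
  hm : m = Ideal.span (Set.range fun i => φ (X i))
  const : ∀ e : E, ∃ r : ℝ, e - algebraMap ℝ E r ∈ m
  inj : ∀ K p, φ p ∈ m ^ K → ∀ j < K, homogeneousComponent j p = 0
  jac : m ≤ Ideal.jacobson ⊥

variable {φ : MvPolynomial (Fin n) ℝ →ₐ[ℝ] E} {m : Ideal E}

lemma phi_eval (p : MvPolynomial (Fin n) ℝ) :
    φ p = eval (fun i => φ (X i)) (map (algebraMap ℝ E) p) := by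
  rw [eval_map]
  change _ = aeval (fun i => φ (X i)) p
  conv_lhs => rw [MvPolynomial.aeval_unique φ]
  rfl

lemma Setup.hom_mem (S : Setup φ m) {p : MvPolynomial (Fin n) ℝ} {j : ℕ} (hp : p.IsHomogeneous j) :
    φ p ∈ m ^ j := by
  rw [S.hm, Ideal.mem_span_pow_iff_exists_isHomogeneous]
  exact ⟨_, hp.map _, (phi_eval p).symm⟩

lemma Setup.lift (S : Setup φ m) (N : ℕ) (e : E) (he : e ∈ m ^ N) :
    ∃ p : MvPolynomial (Fin n) ℝ, p.IsHomogeneous N ∧ e - φ p ∈ m ^ (N + 1) := by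
  have hm := S.hm
  obtain ⟨e', he', h⟩ := filt (fun i => φ (X i)) (fun _ : Unit => (1 : E)) (by
    intro e
    obtain ⟨r, hr⟩ := S.const e
    rw [hm] at hr
    refine Submodule.mem_sup.2 ⟨algebraMap ℝ E r, ?_, _, hr, by ring⟩
    rw [Algebra.algebraMap_eq_smul_one]
    exact Submodule.smul_mem _ _ (Submodule.subset_span ⟨(), rfl⟩)) N e (hm ▸ he)
  have h2 : e - e' ∈ (homogeneousSubmodule (Fin n) ℝ N).map φ.toLinearMap := by
    refine Submodule.span_le.2 ?_ h
    rintro _ ⟨α, hα, -, rfl⟩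
    refine ⟨monomial α 1, isHomogeneous_monomial _ hα, ?_⟩
    rw [monomial_eq]
    simp [Finsupp.prod_fintype]
  obtain ⟨p, hp, hpe⟩ := h2
  refine ⟨p, hp, ?_⟩
  have : e - φ p = e' := by
    have h3 : φ p = e - e' := hpe
    rw [h3]; ring
  rw [this, hm]
  exact he'

lemma Setup.approx (S : Setup φ m) (N : ℕ) (e : E) :
    ∃ p : MvPolynomial (Fin n) ℝ, e - φ p ∈ m ^ N := by
  induction N with
  | zero => exact ⟨0, by simp⟩
  | succ N ih =>
    obtain ⟨p, hp⟩ := ih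
    obtain ⟨q, -, hq⟩ := S.lift N _ hp
    exact ⟨p + q, by rw [map_add, ← sub_sub]; exact hq⟩

lemma Setup.nak (S : Setup φ m) {J : Ideal E} {k : ℕ} (h : m ^ k ≤ J ⊔ m ^ (k + 1)) :
    m ^ k ≤ J := by
  refine Submodule.le_of_le_smul_of_le_jacobson_bot (I := m) (Ideal.FG.pow ?_) S.jac ?_
  · rw [S.hm]
    exact Submodule.fg_span (Set.finite_range _)
  · rwa [smul_eq_mul, ← pow_succ']

lemma Setup.exists_pow (S : Setup φ m) {J : Ideal E} (h : Module.Finite ℝ (E ⧸ J)) :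
    ∃ k, m ^ k ≤ J := by
  have hart : IsArtinianRing (E ⧸ J) := IsArtinianRing.of_finite ℝ _
  let f : ℕ →o (Ideal (E ⧸ J))ᵒᵈ :=
    ⟨fun k => OrderDual.toDual ((m ^ k).map (Ideal.Quotient.mk J)), fun a b hab =>
      OrderDual.toDual_le_toDual.2 (Ideal.map_mono (Ideal.pow_le_pow_right hab))⟩
  obtain ⟨k, hk⟩ := IsArtinian.monotone_stabilizes f
  refine ⟨k, S.nak ?_⟩
  have h1 : (m ^ k).map (Ideal.Quotient.mk J) = (m ^ (k + 1)).map (Ideal.Quotient.mk J) :=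
    hk (k + 1) (by omega)
  have h2 := (Ideal.le_comap_map (f := Ideal.Quotient.mk J) (I := m ^ k))
  rw [h1, Ideal.comap_map_of_surjective _ Ideal.Quotient.mk_surjective] at h2
  rw [sup_comm]
  convert h2 using 2
  rw [← RingHom.ker_eq_comap_bot, Ideal.mk_ker]

section main
variable {d : ℕ} {P : Fin n → MvPolynomial (Fin n) ℝ} {g : Fin n → E}

lemma Setup.cof (S : Setup φ m) (hP : ∀ i, (P i).IsHomogeneous d) {k : ℕ}
    (h : m ^ k ≤ Ideal.span (Set.range fun i => φ (P i))) :
    Cof k (Ideal.span (Set.range P)) := by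
  intro j hj p hp
  have h1 := h (Ideal.pow_le_pow_right hj (S.hom_mem hp))
  obtain ⟨c, hc⟩ := Ideal.mem_span_range_iff_exists_fun.1 h1
  have h2 := fun i => S.approx (j + 1) (c i)
  choose q hq using h2
  have h3 : φ (p - ∑ i, q i * P i) ∈ m ^ (j + 1) := by
    rw [map_sub, ← hc, map_sum, ← Finset.sum_sub_distrib]
    refine Ideal.sum_mem _ fun i _ => ?_
    rw [map_mul, ← sub_mul]
    exact Ideal.mul_mem_right _ _ (hq i)
  have h4 := S.inj _ _ h3 j (by omega)
  rw [map_sub, hc_of_hom hp, if_pos rfl, sub_eq_zero] at h4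
  rw [h4]
  refine HomI.span hP _ ?_ j
  exact Ideal.sum_mem _ fun i _ => Ideal.mul_mem_left _ _ (Ideal.subset_span ⟨i, rfl⟩)

lemma Setup.key (S : Setup φ m) (hP : ∀ i, (P i).IsHomogeneous d)
    (hg : ∀ i, g i - φ (P i) ∈ m ^ (d + 1)) {p : MvPolynomial (Fin n) ℝ} {j : ℕ}
    (hp : p.IsHomogeneous j) (hpI : p ∈ Ideal.span (Set.range P)) :
    φ p ∈ Ideal.span (Set.range g) ⊔ m ^ (j + 1) := by
  obtain ⟨c, hc⟩ := Ideal.mem_span_range_iff_exists_fun.1 hpI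
  have h1 := congrArg (homogeneousComponent j) hc
  rw [hc_of_hom hp, if_pos rfl, map_sum] at h1
  rw [← h1, map_sum]
  refine Ideal.sum_mem _ fun i _ => ?_
  rw [mul_comm, hc_mul (hP i)]
  split_ifs with hd
  · set a := homogeneousComponent (j - d) (c i) with ha
    have h2 : φ a ∈ m ^ (j - d) := S.hom_mem (homogeneousComponent_isHomogeneous _ _)
    have h3 : φ (P i * a) = φ a * g i - (g i - φ (P i)) * φ a := by rw [map_mul]; ring
    rw [h3]
    refine sub_mem (Ideal.mem_sup_left (Ideal.mul_mem_left _ _ (Ideal.subset_span ⟨i, rfl⟩)))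
      (Ideal.mem_sup_right ?_)
    have h4 := Ideal.mul_mem_mul (hg i) h2
    rw [← pow_add] at h4
    rwa [show d + 1 + (j - d) = j + 1 by omega] at h4
  · simp

lemma Setup.pow_le (S : Setup φ m) (hP : ∀ i, (P i).IsHomogeneous d)
    (hg : ∀ i, g i - φ (P i) ∈ m ^ (d + 1)) {k : ℕ}
    (hk : Cof k (Ideal.span (Set.range P))) : m ^ k ≤ Ideal.span (Set.range g) := by
  apply S.nak
  intro e he
  obtain ⟨p, hp, hpe⟩ := S.lift k e he
  have := S.key hP hg hp (hk k le_rfl p hp)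
  have h2 : e = φ p + (e - φ p) := by ring
  rw [h2]
  exact add_mem this (Ideal.mem_sup_right hpe)

lemma Setup.upper (S : Setup φ m) (hP : ∀ i, (P i).IsHomogeneous d)
    (hg : ∀ i, g i - φ (P i) ∈ m ^ (d + 1)) {k : ℕ}
    (hk : Cof k (Ideal.span (Set.range P))) :
    Module.rank ℝ (E ⧸ Ideal.span (Set.range g)) ≤
      Module.rank ℝ (MvPolynomial (Fin n) ℝ ⧸ Ideal.span (Set.range P)) := by
  set I := Ideal.span (Set.range P) with hI
  set G := Ideal.span (Set.range g) with hG
  let mons : (Fin n →₀ ℕ) → MvPolynomial (Fin n) ℝ ⧸ I := fun α =>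
    Ideal.Quotient.mk I (monomial α 1)
  obtain ⟨b, hb1, hb2, hb3⟩ := exists_linearIndependent ℝ (Set.range mons)
  have htop : Submodule.span ℝ (Set.range mons) = ⊤ := by
    rw [eq_top_iff]
    rintro x -
    obtain ⟨p, rfl⟩ := Ideal.Quotient.mk_surjective x
    rw [p.as_sum, map_sum]
    refine sum_mem fun α _ => ?_
    have : Ideal.Quotient.mk I (monomial α (coeff α p)) = coeff α p • mons α := by
      have h : monomial α (coeff α p) = coeff α p • (monomial α (1 : ℝ)) := by
        rw [smul_monomial]; simp
      rw [h]
      rfl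
    rw [this]
    exact Submodule.smul_mem _ _ (Submodule.subset_span ⟨α, rfl⟩)
  rw [htop] at hb2
  have hbx : ∀ v : b, ∃ α, mons α = v := fun v => hb1 v.2
  choose α hα using hbx
  have hrank : Cardinal.mk b ≤ Module.rank ℝ (MvPolynomial (Fin n) ℝ ⧸ I) :=
    hb3.cardinal_le_rank
  refine le_trans ?_ hrank
  -- the polynomial statement
  have hpoly : ∀ p : MvPolynomial (Fin n) ℝ,
      p ∈ Submodule.span ℝ (Set.range fun v : b => monomial (α v) (1 : ℝ)) ⊔
        I.restrictScalars ℝ := by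
    intro p
    have h1 : Ideal.Quotient.mk I p ∈ Submodule.span ℝ b := hb2 ▸ Submodule.mem_top
    have h2 : b = (Ideal.Quotient.mkₐ ℝ I).toLinearMap ''
        (Set.range fun v : b => monomial (α v) (1 : ℝ)) := by
      rw [← Set.range_comp]
      conv_lhs => rw [← Subtype.range_coe (s := b)]
      congr 1
      funext v
      exact (hα v).symm
    rw [h2, ← Submodule.map_span] at h1
    obtain ⟨q, hq, hqe⟩ := h1
    refine Submodule.mem_sup.2 ⟨q, hq, p - q, ?_, by ring⟩
    exact Ideal.Quotient.eq.1 hqe.symm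
  have hcomp : ∀ j, ∀ p ∈ Submodule.span ℝ (Set.range fun v : b => monomial (α v) (1 : ℝ)),
      homogeneousComponent j p ∈
        Submodule.span ℝ (Set.range fun v : b => monomial (α v) (1 : ℝ)) := by
    intro j p hp
    have : Submodule.span ℝ (Set.range fun v : b => monomial (α v) (1 : ℝ)) ≤
        (Submodule.span ℝ (Set.range fun v : b => monomial (α v) (1 : ℝ))).comap
          (homogeneousComponent j) := by
      rw [Submodule.span_le]
      rintro _ ⟨v, rfl⟩
      rw [Submodule.comap_coe, Set.mem_preimage, SetLike.mem_coe]
      rw [hc_of_hom (isHomogeneous_monomial (1 : ℝ) rfl)]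
      split_ifs
      · exact Submodule.subset_span ⟨v, rfl⟩
      · exact zero_mem _
    exact this hp
  set U : Submodule ℝ E := Submodule.span ℝ (Set.range fun v : b => φ (monomial (α v) (1 : ℝ))) ⊔
    G.restrictScalars ℝ with hU
  have hφU : ∀ p ∈ Submodule.span ℝ (Set.range fun v : b => monomial (α v) (1 : ℝ)),
      φ p ∈ U := by
    intro p hp
    have h1 := Submodule.mem_map_of_mem (f := φ.toLinearMap) hp
    rw [Submodule.map_span, ← Set.range_comp] at h1
    exact Submodule.mem_sup_left h1
  have hstep : ∀ j, ∀ e ∈ m ^ j, ∃ e' ∈ m ^ (j + 1), e - e' ∈ U := by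
    intro j e he
    obtain ⟨p, hp, hpe⟩ := S.lift j e he
    obtain ⟨q, hq, u, hu, hqu⟩ := Submodule.mem_sup.1 (hpoly p)
    have h1 : p = homogeneousComponent j q + homogeneousComponent j u := by
      rw [← map_add, hqu, hc_of_hom hp, if_pos rfl]
    have h2 : homogeneousComponent j u ∈ I := HomI.span hP u hu j
    have h3 := S.key hP hg (homogeneousComponent_isHomogeneous j u) h2
    obtain ⟨v, hv, w, hw, hvw⟩ := Submodule.mem_sup.1 h3
    refine ⟨w + (e - φ p), add_mem hw hpe, ?_⟩
    have h4 : e - (w + (e - φ p)) = φ (homogeneousComponent j q) + v := by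
      conv_lhs => rw [h1, map_add, ← hvw]
      ring
    rw [h4]
    exact add_mem (hφU _ (hcomp j q hq)) (Submodule.mem_sup_right hv)
  have hall : ∀ j e, ∃ e' ∈ m ^ j, e - e' ∈ U := by
    intro j e
    induction j with
    | zero => exact ⟨e, by simp, by simp⟩
    | succ j ih =>
      obtain ⟨e', he', h⟩ := ih
      obtain ⟨e'', he'', h'⟩ := hstep j e' he'
      exact ⟨e'', he'', by simpa using add_mem h h'⟩
  have hUtop : ∀ e, e ∈ U := by
    intro e
    obtain ⟨e', he', h⟩ := hall k e
    have : e = (e - e') + e' := by ring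
    rw [this]
    exact add_mem h (Submodule.mem_sup_right (S.pow_le hP hg hk he'))
  have hspan : Submodule.span ℝ (Set.range fun v : b =>
      Ideal.Quotient.mk G (φ (monomial (α v) (1 : ℝ)))) = ⊤ := by
    rw [eq_top_iff]
    rintro x -
    obtain ⟨e, rfl⟩ := Ideal.Quotient.mk_surjective x
    obtain ⟨q, hq, u, hu, rfl⟩ := Submodule.mem_sup.1 (hUtop e)
    rw [map_add, Ideal.Quotient.eq_zero_iff_mem.2 hu, add_zero]
    have h1 := Submodule.mem_map_of_mem (f := (Ideal.Quotient.mkₐ ℝ G).toLinearMap) hq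
    rw [Submodule.map_span, ← Set.range_comp] at h1
    exact h1
  rw [← rank_top ℝ (E ⧸ G), ← hspan]
  exact (rank_span_le _).trans Cardinal.mk_range_le

lemma Setup.lower (S : Setup φ m) (hn : n ≠ 0) (hg : ∀ i, g i ∈ m ^ d)
    [Module.Finite ℝ (E ⧸ Ideal.span (Set.range g))] :
    d ^ n ≤ Module.finrank ℝ (E ⧸ Ideal.span (Set.range g)) := by
  apply growth hn
  intro N
  set G := Ideal.span (Set.range g) with hG
  set r := Module.finrank ℝ (E ⧸ G) with hr
  let bas := Module.finBasis ℝ (E ⧸ G)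
  have hlift : ∀ i, ∃ w : E, Ideal.Quotient.mk G w = bas i := fun i =>
    Ideal.Quotient.mk_surjective _
  choose w hw using hlift
  have hwspan : ∀ e, e ∈ Submodule.span ℝ (Set.range w) ⊔ G.restrictScalars ℝ := by
    intro e
    have h1 : Ideal.Quotient.mk G e ∈ Submodule.span ℝ (Set.range bas) := by
      rw [bas.span_eq]; exact Submodule.mem_top
    have h2 : Set.range bas = (Ideal.Quotient.mkₐ ℝ G).toLinearMap '' (Set.range w) := by
      rw [← Set.range_comp]
      congr 1
      funext i
      exact (hw i).symm
    rw [h2, ← Submodule.map_span] at h1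
    obtain ⟨q, hq, hqe⟩ := h1
    refine Submodule.mem_sup.2 ⟨q, hq, e - q, ?_, by ring⟩
    exact Ideal.Quotient.eq.1 hqe.symm
  have hall : ∀ N e, ∃ e' ∈ G ^ N, e - e' ∈ Submodule.span ℝ
      (Set.range fun x : Dlt n N × Fin r => (∏ i, g i ^ x.1.1 i) * w x.2) := by
    intro N e
    induction N with
    | zero => exact ⟨e, by simp, by simp⟩
    | succ N ih =>
      obtain ⟨e', he', h⟩ := ih
      obtain ⟨e'', he'', h'⟩ := filt g w hwspan N e' he'
      refine ⟨e'', he'', ?_⟩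
      have h1 : e - e'' = (e - e') + (e' - e'') := by ring
      rw [h1]
      refine add_mem (Submodule.span_mono ?_ h) (Submodule.span_mono ?_ h')
      · rintro _ ⟨⟨α, i⟩, rfl⟩
        exact ⟨⟨⟨α.1, α.2.trans (Nat.lt_succ_self _)⟩, i⟩, rfl⟩
      · rintro _ ⟨α, hα, i, rfl⟩
        exact ⟨⟨⟨α, by omega⟩, i⟩, rfl⟩
  set L := m ^ (d * N) with hL
  have hGL : G ^ N ≤ L := by
    rw [hL, pow_mul]
    apply Ideal.pow_right_mono
    rw [hG, Ideal.span_le]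
    rintro _ ⟨i, rfl⟩
    exact hg i
  have hspan : Submodule.span ℝ (Set.range fun x : Dlt n N × Fin r =>
      Ideal.Quotient.mk L ((∏ i, g i ^ x.1.1 i) * w x.2)) = ⊤ := by
    rw [eq_top_iff]
    rintro x -
    obtain ⟨e, rfl⟩ := Ideal.Quotient.mk_surjective x
    obtain ⟨e', he', h⟩ := hall N e
    have h0 : Ideal.Quotient.mk L e = Ideal.Quotient.mk L (e - e') := by
      rw [Ideal.Quotient.eq]
      simpa using hGL he'
    rw [h0]
    have h1 := Submodule.mem_map_of_mem (f := (Ideal.Quotient.mkₐ ℝ L).toLinearMap) h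
    rw [Submodule.map_span, ← Set.range_comp] at h1
    exact h1
  have hli : LinearIndependent ℝ (fun α : Dlt n (d * N) =>
      Ideal.Quotient.mk L (φ (monomial α.1 (1 : ℝ)))) := by
    cases nonempty_fintype (Dlt n (d * N))
    rw [Fintype.linearIndependent_iff]
    intro c hc
    set p : MvPolynomial (Fin n) ℝ := ∑ α : Dlt n (d * N), monomial α.1 (c α) with hp
    have h1 : φ p ∈ L := by
      rw [← Ideal.Quotient.eq_zero_iff_mem, ← hc, hp, map_sum, map_sum]
      refine Finset.sum_congr rfl fun α _ => ?_
      have h : monomial α.1 (c α) = c α • (monomial α.1 (1 : ℝ)) := by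
        rw [smul_monomial]; simp
      rw [h, map_smul]
      rfl
    have h2 := S.inj _ _ h1
    intro α
    have h3 := congrArg (coeff α.1) (h2 α.1.degree α.2)
    rw [coeff_homogeneousComponent, if_pos rfl, hp, coeff_sum, coeff_zero] at h3
    rw [← h3, Finset.sum_eq_single α]
    · simp
    · intro β _ hβ
      rw [coeff_monomial, if_neg]
      intro h
      exact hβ (Subtype.ext h)
    · simp
  cases nonempty_fintype (Dlt n (d * N))
  cases nonempty_fintype (Dlt n N)
  have hfin : Module.Finite ℝ (E ⧸ L) := ⟨hspan ▸ Submodule.fg_span (Set.finite_range _)⟩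
  have h1 := hli.fintype_card_le_finrank
  have h2 := finrank_range_le_card (R := ℝ) (fun x : Dlt n N × Fin r =>
      Ideal.Quotient.mk L ((∏ i, g i ^ x.1.1 i) * w x.2))
  rw [Set.finrank, hspan, finrank_top] at h2
  rw [Nat.card_eq_fintype_card, Nat.card_eq_fintype_card]
  refine h1.trans (h2.trans ?_)
  simp

theorem Setup.main (S : Setup φ m) (hn : n ≠ 0) (hP : ∀ i, (P i).IsHomogeneous d)
    (hg : ∀ i, g i - φ (P i) ∈ m ^ (d + 1))
    (hfin : Module.rank ℝ (E ⧸ Ideal.span (Set.range fun i => φ (P i))) < Cardinal.aleph0) :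
    Module.rank ℝ (E ⧸ Ideal.span (Set.range g)) = ((d ^ n : ℕ) : Cardinal) := by
  obtain ⟨k, hk⟩ := S.exists_pow (Module.rank_lt_aleph0_iff.1 hfin)
  have hcof := S.cof hP hk
  have h1 := alg_upper hP hcof
  rw [ell, Module.length_eq_rank] at h1
  have h2 : Module.rank ℝ (MvPolynomial (Fin n) ℝ ⧸ Ideal.span (Set.range P)) ≤
      ((d ^ n : ℕ) : Cardinal) := by
    rwa [Cardinal.toENat_le_natCast] at h1
  have h3 := (S.upper hP hg hcof).trans h2
  have hf : Module.Finite ℝ (E ⧸ Ideal.span (Set.range g)) :=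
    Module.rank_lt_aleph0_iff.1 (h3.trans_lt (Cardinal.natCast_lt_aleph0))
  refine le_antisymm h3 ?_
  rw [← Module.finrank_eq_rank]
  have hgd : ∀ i, g i ∈ m ^ d := by
    intro i
    have : g i = (g i - φ (P i)) + φ (P i) := by ring
    rw [this]
    exact add_mem (Ideal.pow_le_pow_right (by omega) (hg i)) (S.hom_mem (hP i))
  exact_mod_cast S.lower hn hgd

end main

end MilnorAux

namespace MilnorAux
open MeasureTheory

lemma contDiff_param {H : Type} [NormedAddCommGroup H] [NormedSpace ℝ H] [ProperSpace H]
    (k : ℕ) : ∀ {F : Type} [NormedAddCommGroup F] [NormedSpace ℝ F] [CompleteSpace F]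
    (Φ : H × ℝ → F), ContDiff ℝ k Φ →
    ContDiff ℝ k (fun x : H => ∫ t in (0 : ℝ)..1, Φ (x, t)) := by
  induction k with
  | zero =>
    intro F _ _ _ Φ h
    rw [Nat.cast_zero, contDiff_zero] at h ⊢
    exact intervalIntegral.continuous_parametric_intervalIntegral_of_continuous' (f := fun x t => Φ (x, t)) h 0 1
  | succ k ih =>
    intro F _ _ _ Φ h
    have hd : Differentiable ℝ Φ := h.differentiable (by simp)
    set Ψ : H × ℝ → (H →L[ℝ] F) := fun z => (fderiv ℝ Φ z).comp (ContinuousLinearMap.inl ℝ H ℝ)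
    have hΨ : ContDiff ℝ k Ψ := by
      have : ContDiff ℝ k (fderiv ℝ Φ) := h.fderiv_right (by norm_cast)
      exact this.clm_comp contDiff_const
    have hΨc : Continuous Ψ := hΨ.continuous
    push_cast
    rw [contDiff_succ_iff_hasFDerivAt]
    refine ⟨_, ih Ψ hΨ, fun x => ?_⟩
    have hK : IsCompact (closedBall x 1 ×ˢ Icc (0:ℝ) 1) :=
      (isCompact_closedBall x 1).prod isCompact_Icc
    obtain ⟨C, hC⟩ := hK.exists_bound_of_continuousOn hΨc.continuousOn
    refine intervalIntegral.hasFDerivAt_integral_of_dominated_of_fderiv_le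
      (F := fun x t => Φ (x, t)) (F' := fun x t => Ψ (x, t)) (bound := fun _ => C)
      (ball_mem_nhds x one_pos) ?_ ?_ ?_ ?_ ?_ ?_
    · refine Eventually.of_forall fun y => ?_
      exact (h.continuous.comp (by fun_prop : Continuous fun t : ℝ => (y, t))).aestronglyMeasurable
    · exact (h.continuous.comp (by fun_prop : Continuous fun t : ℝ => (x, t))).intervalIntegrable _ _
    · exact (hΨc.comp (by fun_prop : Continuous fun t : ℝ => (x, t))).aestronglyMeasurable
    · refine Eventually.of_forall fun t ht y hy => hC _ ⟨ball_subset_closedBall hy, ?_⟩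
      rw [uIoc_of_le zero_le_one] at ht
      exact ⟨ht.1.le, ht.2⟩
    · exact intervalIntegrable_const
    · refine Eventually.of_forall fun t _ y _ => ?_
      have h1 : HasFDerivAt (fun y : H => (y, t)) (ContinuousLinearMap.inl ℝ H ℝ) y :=
        hasFDerivAt_prodMk_left y t
      exact (hd (y, t)).hasFDerivAt.comp y h1

/-- Hadamard's lemma -/
lemma hadamard {n : ℕ} (g : Eucl n → ℝ) (hg : ContDiff ℝ (⊤ : ℕ∞) g) :
    ∃ q : Fin n → Eucl n → ℝ, (∀ i, ContDiff ℝ (⊤ : ℕ∞) (q i)) ∧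
      ∀ x, g x = g 0 + ∑ i, x i * q i x := by
  have hg' : ContDiff ℝ (⊤ : ℕ∞) (fderiv ℝ g) := hg.fderiv_right (by norm_cast)
  set Φ : Eucl n × ℝ → (Eucl n →L[ℝ] ℝ) := fun z => fderiv ℝ g (z.2 • z.1)
  have hΦ : ContDiff ℝ (⊤ : ℕ∞) Φ := hg'.comp (contDiff_snd.smul contDiff_fst)
  have hG : ContDiff ℝ (⊤ : ℕ∞) (fun x : Eucl n => ∫ t in (0 : ℝ)..1, Φ (x, t)) := by
    rw [contDiff_infty]
    intro k
    exact contDiff_param k Φ (hΦ.of_le (by exact_mod_cast le_top))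
  refine ⟨fun i x => (∫ t in (0 : ℝ)..1, Φ (x, t)) (EuclideanSpace.single i 1),
    fun i => hG.clm_apply contDiff_const, fun x => ?_⟩
  have hc : Continuous fun t : ℝ => Φ (x, t) := hΦ.continuous.comp (by fun_prop)
  have h1 : ∫ t in (0 : ℝ)..1, Φ (x, t) x = g ((1 : ℝ) • x) - g ((0 : ℝ) • x) := by
    refine intervalIntegral.integral_eq_sub_of_hasDerivAt (f := fun t : ℝ => g (t • x)) ?_ ?_
    · intro t _
      have h2 : HasDerivAt (fun t : ℝ => t • x) x t := by
        simpa using (hasDerivAt_id t).smul_const x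
      exact ((hg.differentiable (by simp)) (t • x)).hasFDerivAt.comp_hasDerivAt t h2
    · exact (hc.clm_apply continuous_const).intervalIntegrable _ _
  have h3 : (∫ t in (0 : ℝ)..1, Φ (x, t)) x = ∫ t in (0 : ℝ)..1, Φ (x, t) x :=
    ContinuousLinearMap.intervalIntegral_apply (hc.intervalIntegrable _ _) x
  have h4 : x = ∑ i, x i • EuclideanSpace.single i (1 : ℝ) := by
    ext j
    simp [Pi.single_apply]
  have h5 : (∫ t in (0 : ℝ)..1, Φ (x, t)) x =
      ∑ i, x i * (∫ t in (0 : ℝ)..1, Φ (x, t)) (EuclideanSpace.single i 1) := by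
    conv_lhs => arg 2; rw [h4]
    rw [map_sum]
    simp
  rw [← h5, h3, h1]
  simp

lemma coeff_zero_of_isBigO (K : ℕ) (a : ℕ → ℝ)
    (h : (fun t : ℝ => ∑ j ∈ Finset.range K, a j * t ^ j) =O[𝓝[>] (0 : ℝ)] fun t => t ^ K) :
    ∀ j < K, a j = 0 := by
  intro j
  induction j using Nat.strong_induction_on with
  | _ j ih =>
  intro hj
  have h0 : ∀ i ∈ Finset.range j, a i = 0 := fun i hi =>
    ih i (Finset.mem_range.1 hi) ((Finset.mem_range.1 hi).trans hj)
  -- everything except the j-th term is `o(t^j)`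
  have hlt : ∀ k, j < k → (fun t : ℝ => t ^ k) =o[𝓝[>] (0 : ℝ)] fun t => t ^ j := fun k hk =>
    (isLittleO_pow_pow (𝕜 := ℝ) hk).mono nhdsWithin_le_nhds
  have h1 : (fun t : ℝ => ∑ i ∈ Finset.range K, a i * t ^ i) =o[𝓝[>] (0 : ℝ)] fun t => t ^ j :=
    h.trans_isLittleO (hlt K hj)
  have h2 : (fun t : ℝ => ∑ i ∈ (Finset.range K).erase j, a i * t ^ i)
      =o[𝓝[>] (0 : ℝ)] fun t => t ^ j := by
    refine IsLittleO.fun_sum fun i hi => ?_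
    rcases lt_trichotomy i j with hij | hij | hij
    · simp [h0 i (Finset.mem_range.2 hij)]
    · simp [hij] at hi
    · exact (hlt i hij).const_mul_left _
  have h3 : (fun t : ℝ => a j * t ^ j) =o[𝓝[>] (0 : ℝ)] fun t => t ^ j := by
    refine (h1.sub h2).congr_left fun t => ?_
    rw [← Finset.add_sum_erase _ _ (Finset.mem_range.2 hj)]
    ring
  by_contra hne
  have h4 : (fun t : ℝ => t ^ j) =o[𝓝[>] (0 : ℝ)] fun t => t ^ j := by
    refine (h3.const_mul_left (a j)⁻¹).congr_left fun t => ?_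
    field_simp
  refine isLittleO_irrefl (Eventually.frequently ?_) h4
  filter_upwards [self_mem_nhdsWithin] with t ht
  exact pow_ne_zero _ (ne_of_gt ht)
end MilnorAux

namespace MilnorAux
open MvPolynomial

/-- the germ of a smooth function -/
def mk {n : ℕ} (f : Eucl n → ℝ) (hf : ContDiff ℝ (⊤ : ℕ∞) f) : smoothGerms n :=
  ⟨(f : Filter.Germ (𝓝 (0 : Eucl n)) ℝ), f, hf, rfl⟩

variable {n : ℕ}

lemma mk_eq {f g : Eucl n → ℝ} (hf : ContDiff ℝ (⊤ : ℕ∞) f) (hg : ContDiff ℝ (⊤ : ℕ∞) g) :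
    mk f hf = mk g hg ↔ f =ᶠ[𝓝 0] g := by
  rw [← Filter.Germ.coe_eq]
  exact ⟨fun h => congrArg Subtype.val h, fun h => Subtype.ext h⟩

lemma exists_mk (e : smoothGerms n) : ∃ f, ∃ hf : ContDiff ℝ (⊤ : ℕ∞) f, e = mk f hf := by
  obtain ⟨e, f, hf, rfl⟩ := e
  exact ⟨f, hf, rfl⟩

lemma mk_add {f g : Eucl n → ℝ} (hf : ContDiff ℝ (⊤ : ℕ∞) f) (hg : ContDiff ℝ (⊤ : ℕ∞) g) :
    mk f hf + mk g hg = mk (fun x => f x + g x) (hf.add hg) := rfl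

lemma mk_sub {f g : Eucl n → ℝ} (hf : ContDiff ℝ (⊤ : ℕ∞) f) (hg : ContDiff ℝ (⊤ : ℕ∞) g) :
    mk f hf - mk g hg = mk (fun x => f x - g x) (hf.sub hg) := rfl

lemma mk_mul {f g : Eucl n → ℝ} (hf : ContDiff ℝ (⊤ : ℕ∞) f) (hg : ContDiff ℝ (⊤ : ℕ∞) g) :
    mk f hf * mk g hg = mk (fun x => f x * g x) (hf.mul hg) := rfl

lemma algebraMap_mk (r : ℝ) :
    algebraMap ℝ (smoothGerms n) r = mk (fun _ => r) contDiff_const := by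
  apply Subtype.ext
  change algebraMap ℝ (Filter.Germ (𝓝 (0 : Eucl n)) ℝ) r = _
  rw [Algebra.algebraMap_eq_smul_one, ← Filter.Germ.coe_one, ← Filter.Germ.coe_smul]
  change _ = ((fun _ => r : Eucl n → ℝ) : Filter.Germ (𝓝 (0 : Eucl n)) ℝ)
  congr 1
  funext x
  simp

lemma one_mk : (1 : smoothGerms n) = mk (fun _ => (1 : ℝ)) contDiff_const := rfl
lemma zero_mk : (0 : smoothGerms n) = mk (fun _ => (0 : ℝ)) contDiff_const := rfl

lemma mk_sum {ι : Type} (s : Finset ι) (f : ι → Eucl n → ℝ)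
    (hf : ∀ i, ContDiff ℝ (⊤ : ℕ∞) (f i)) :
    ∑ i ∈ s, mk (f i) (hf i) = mk (fun x => ∑ i ∈ s, f i x) (ContDiff.sum fun i _ => hf i) := by
  classical
  induction s using Finset.induction_on with
  | empty => simp only [Finset.sum_empty]; rfl
  | insert a s ha ih =>
    simp only [Finset.sum_insert ha, ih, mk_add]

lemma contDiff_coord (i : Fin n) : ContDiff ℝ (⊤ : ℕ∞) (fun x : Eucl n => x i) := by
  fun_prop

lemma contDiff_pf (p : MvPolynomial (Fin n) ℝ) :
    ContDiff ℝ (⊤ : ℕ∞) (fun x : Eucl n => eval (fun i => x i) p) := by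
  induction p using MvPolynomial.induction_on with
  | C a => simpa using contDiff_const
  | add p q hp hq => simpa using hp.add hq
  | mul_X p i hp => simpa using hp.mul (contDiff_coord i)

/-- polynomials as germs -/
def phi (n : ℕ) : MvPolynomial (Fin n) ℝ →ₐ[ℝ] smoothGerms n :=
  aeval fun i => mk (fun x => x i) (contDiff_coord i)

lemma phi_X (i : Fin n) : phi n (X i) = mk (fun x => x i) (contDiff_coord i) := by
  simp [phi]

lemma phi_eq (p : MvPolynomial (Fin n) ℝ) : phi n p = mk _ (contDiff_pf p) := by
  induction p using MvPolynomial.induction_on with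
  | C a =>
    rw [← MvPolynomial.algebraMap_eq, AlgHom.commutes, algebraMap_mk, mk_eq]
    exact Eventually.of_forall fun x => by simp
  | add p q hp hq =>
    rw [map_add, hp, hq, mk_add, mk_eq]
    exact Eventually.of_forall fun x => by simp
  | mul_X p i hp =>
    rw [map_mul, hp, phi_X, mk_mul, mk_eq]
    exact Eventually.of_forall fun x => by simp

/-- the maximal ideal -/
def mI (n : ℕ) : Ideal (smoothGerms n) := Ideal.span (Set.range fun i => phi n (X i))

lemma const_mI (e : smoothGerms n) : ∃ r : ℝ, e - algebraMap ℝ _ r ∈ mI n := by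
  obtain ⟨g, hg, rfl⟩ := exists_mk e
  obtain ⟨q, hq, h⟩ := hadamard g hg
  refine ⟨g 0, ?_⟩
  have : mk g hg - algebraMap ℝ _ (g 0) = ∑ i, mk (q i) (hq i) * phi n (X i) := by
    simp only [phi_X, mk_mul]
    rw [mk_sum _ _ (fun i => (hq i).mul (contDiff_coord i)), algebraMap_mk, mk_sub, mk_eq]
    refine Eventually.of_forall fun x => ?_
    simp only [h x, add_sub_cancel_left, mul_comm]
  rw [this]
  exact Ideal.sum_mem _ fun i _ => Ideal.mul_mem_left _ _ (Ideal.subset_span ⟨i, rfl⟩)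

/-- elements of the powers of the maximal ideal vanish to high order -/
lemma isBigO_mI : ∀ (e : smoothGerms n), e ∈ mI n →
    ∀ f hf, e = mk f hf → f =O[𝓝 0] fun x => ‖x‖ := by
  intro e he
  refine Submodule.span_induction (p := fun e _ => ∀ f hf, e = mk f hf → f =O[𝓝 0] fun x => ‖x‖)
    ?_ ?_ ?_ ?_ he
  · rintro _ ⟨i, rfl⟩ f hf h
    dsimp only at h
    rw [phi_X, mk_eq] at h
    refine IsBigO.congr' ?_ h EventuallyEq.rfl
    refine IsBigO.of_bound 1 (Eventually.of_forall fun x => ?_)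
    rw [one_mul, norm_norm]
    exact PiLp.norm_apply_le x i
  · intro f hf h
    rw [zero_mk, mk_eq] at h
    exact IsBigO.congr' (isBigO_zero _ _) h EventuallyEq.rfl
  · intro a b _ _ ha hb f hf h
    obtain ⟨fa, hfa, rfl⟩ := exists_mk a
    obtain ⟨fb, hfb, rfl⟩ := exists_mk b
    rw [mk_add, mk_eq] at h
    exact ((ha _ _ rfl).add (hb _ _ rfl)).congr' h EventuallyEq.rfl
  · intro c a _ ha f hf h
    obtain ⟨fa, hfa, rfl⟩ := exists_mk a
    obtain ⟨fc, hfc, rfl⟩ := exists_mk c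
    rw [smul_eq_mul, mk_mul, mk_eq] at h
    have h1 : fc =O[𝓝 0] fun _ => (1 : ℝ) := (hfc.continuous.tendsto 0).isBigO_one ℝ
    simpa using (h1.mul (ha _ _ rfl)).congr' h EventuallyEq.rfl

lemma isBigO_pow (K : ℕ) : ∀ (e : smoothGerms n), e ∈ mI n ^ K →
    ∀ f hf, e = mk f hf → f =O[𝓝 0] fun x => ‖x‖ ^ K := by
  induction K with
  | zero =>
    intro e _ f hf _
    simpa using (hf.continuous.tendsto 0).isBigO_one ℝ
  | succ K ih =>
    intro e he
    rw [pow_succ] at he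
    refine Submodule.mul_induction_on he ?_ ?_
    · intro a ha b hb f hf h
      obtain ⟨fa, hfa, rfl⟩ := exists_mk a
      obtain ⟨fb, hfb, rfl⟩ := exists_mk b
      rw [mk_mul, mk_eq] at h
      simp only [pow_succ]
      exact ((ih _ ha _ _ rfl).mul (isBigO_mI _ hb _ _ rfl)).congr' h EventuallyEq.rfl
    · intro a b ha hb f hf h
      obtain ⟨fa, hfa, rfl⟩ := exists_mk a
      obtain ⟨fb, hfb, rfl⟩ := exists_mk b
      rw [mk_add, mk_eq] at h
      exact ((ha _ _ rfl).add (hb _ _ rfl)).congr' h EventuallyEq.rfl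

lemma isBigO_line {K : ℕ} {f : Eucl n → ℝ} (h : f =O[𝓝 0] fun x => ‖x‖ ^ K) (v : Eucl n) :
    (fun t : ℝ => f (t • v)) =O[𝓝[>] (0 : ℝ)] fun t => t ^ K := by
  have h1 : Tendsto (fun t : ℝ => t • v) (𝓝[>] (0 : ℝ)) (𝓝 0) := by
    refine tendsto_nhdsWithin_of_tendsto_nhds ?_
    have : Continuous fun t : ℝ => t • v := by fun_prop
    simpa using this.tendsto 0
  refine (h.comp_tendsto h1).trans (IsBigO.of_bound (‖v‖ ^ K) (Eventually.of_forall fun t => ?_))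
  simp [norm_smul, mul_pow, mul_comm]

lemma eval_hom {p : MvPolynomial (Fin n) ℝ} {j : ℕ} (hp : p.IsHomogeneous j) (t : ℝ)
    (v : Eucl n) : eval (fun i => (t • v) i) p = eval (fun i => v i) p * t ^ j := by
  rw [eval_eq', eval_eq', Finset.sum_mul]
  refine Finset.sum_congr rfl fun d hd => ?_
  have h1 : ∑ i, d i = j := by
    have := hp (mem_support_iff.1 hd)
    have h3 : Finsupp.degree d = Finsupp.weight 1 d := by
      rw [Finsupp.degree_eq_weight_one]; rfl
    rw [← h3, Finsupp.degree_eq_sum] at this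
    exact this
  have h2 : ∏ i, ((t • v) i) ^ d i = (∏ i, (v i) ^ d i) * t ^ j := by
    rw [← h1, ← Finset.prod_pow_eq_pow_sum, ← Finset.prod_mul_distrib]
    refine Finset.prod_congr rfl fun i _ => ?_
    simp [mul_pow, mul_comm]
  rw [h2]
  ring

lemma eval_line (p : MvPolynomial (Fin n) ℝ) (K : ℕ) (v : Eucl n) :
    (fun t : ℝ => eval (fun i => (t • v) i) p -
      ∑ j ∈ Finset.range K, eval (fun i => v i) (homogeneousComponent j p) * t ^ j)
      =O[𝓝[>] (0 : ℝ)] fun t => t ^ K := by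
  set N := max K (p.totalDegree + 1)
  have hp : ∀ t : ℝ, eval (fun i => (t • v) i) p =
      ∑ j ∈ Finset.range N, eval (fun i => v i) (homogeneousComponent j p) * t ^ j := by
    intro t
    have h0 : p = ∑ j ∈ Finset.range N, homogeneousComponent j p := by
      conv_lhs => rw [← sum_homogeneousComponent p]
      refine Finset.sum_subset (Finset.range_mono (le_max_right _ _)) ?_
      intro j _ hj
      refine homogeneousComponent_eq_zero _ _ ?_
      simpa using hj
    conv_lhs => rw [h0]
    rw [map_sum]
    exact Finset.sum_congr rfl fun j _ => eval_hom (homogeneousComponent_isHomogeneous j p) t v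
  have h1 : (fun t : ℝ => ∑ j ∈ Finset.Ico K N,
      eval (fun i => v i) (homogeneousComponent j p) * t ^ j) =O[𝓝[>] (0 : ℝ)] fun t => t ^ K := by
    refine IsBigO.fun_sum fun j hj => ?_
    refine IsBigO.const_mul_left ?_ _
    rcases (Finset.mem_Ico.1 hj).1.eq_or_lt with hKj | hKj
    · rw [hKj]
      exact isBigO_refl _ _
    · exact (isLittleO_pow_pow (𝕜 := ℝ) hKj).isBigO.mono nhdsWithin_le_nhds
  refine h1.congr_left fun t => ?_
  rw [hp, ← Finset.sum_range_add_sum_Ico _ (le_max_left K (p.totalDegree + 1))]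
  simp [N]

lemma inj_mI (K : ℕ) (p : MvPolynomial (Fin n) ℝ) (h : phi n p ∈ mI n ^ K) :
    ∀ j < K, homogeneousComponent j p = 0 := by
  intro j hj
  refine MvPolynomial.funext fun v => ?_
  rw [map_zero]
  have h1 := isBigO_line (isBigO_pow K _ h _ _ (phi_eq p)) (WithLp.toLp 2 v)
  have h2 := h1.sub (eval_line p K (WithLp.toLp 2 v))
  refine coeff_zero_of_isBigO K (fun j => eval v (homogeneousComponent j p)) ?_ j hj
  simpa using h2

lemma jac_mI : mI n ≤ Ideal.jacobson ⊥ := by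
  intro e he
  rw [Ideal.mem_jacobson_bot]
  intro y
  have hey : e * y ∈ mI n := Ideal.mul_mem_right _ _ he
  obtain ⟨a, ha, hea⟩ := exists_mk (e * y)
  have ha0 : a 0 = 0 := by
    have := isBigO_mI _ hey a ha hea
    exact this.eq_zero_imp.self_of_nhds norm_zero
  have hpos : ∀ᶠ x in 𝓝 (0 : Eucl n), 0 < a x + 1 := by
    have hc : Continuous fun x => a x + 1 := ha.continuous.add continuous_const
    refine hc.continuousAt.eventually (lt_mem_nhds ?_)
    simp [ha0]
  obtain ⟨r, hr, hrp⟩ := Metric.eventually_nhds_iff_ball.1 hpos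
  let χ : ContDiffBump (0 : Eucl n) := ⟨r / 2, r, by linarith, by linarith⟩
  have hχ : ContDiff ℝ (⊤ : ℕ∞) χ := χ.contDiff
  have hw : ContDiff ℝ (⊤ : ℕ∞) (fun x => χ x * (a x + 1) + (1 - χ x)) :=
    (hχ.mul (ha.add contDiff_const)).add (contDiff_const.sub hχ)
  have hw0 : ∀ x, χ x * (a x + 1) + (1 - χ x) ≠ 0 := by
    intro x
    by_cases hx : x ∈ ball (0 : Eucl n) r
    · have h1 := χ.pos_of_mem_ball hx
      have h2 := χ.le_one (x := x)
      have h3 := mul_pos h1 (hrp x hx)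
      exact ne_of_gt (by linarith)
    · have h1 : χ x = 0 := χ.zero_of_le_dist (not_lt.1 hx)
      simp [h1]
  refine IsUnit.of_mul_eq_one (mk _ (hw.inv hw0)) ?_
  rw [hea, one_mk, mk_add, mk_mul, mk_eq]
  filter_upwards [χ.eventuallyEq_one] with x hx
  have h0 := hw0 x
  rw [Pi.inv_apply]
  rw [hx] at h0 ⊢
  simp only [Pi.one_apply, one_mul, sub_self, add_zero] at h0 ⊢
  exact mul_inv_cancel₀ h0

lemma setup (n : ℕ) : Setup (phi n) (mI n) where
  hm := rfl
  const := const_mI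
  inj := inj_mI
  jac := jac_mI

/-- partial derivative on germs -/
def D (i : Fin n) (e : smoothGerms n) : smoothGerms n :=
  mk (fun x => fderiv ℝ (exists_mk e).choose x (EuclideanSpace.single i 1))
    (((exists_mk e).choose_spec.choose.fderiv_right (by norm_cast)).clm_apply contDiff_const)

lemma contDiff_D {f : Eucl n → ℝ} (hf : ContDiff ℝ (⊤ : ℕ∞) f) (i : Fin n) :
    ContDiff ℝ (⊤ : ℕ∞) (fun x => fderiv ℝ f x (EuclideanSpace.single i 1)) :=
  (hf.fderiv_right (by norm_cast)).clm_apply contDiff_const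

lemma D_mk {f : Eucl n → ℝ} (hf : ContDiff ℝ (⊤ : ℕ∞) f) (i : Fin n) :
    D i (mk f hf) = mk _ (contDiff_D hf i) := by
  unfold D
  rw [mk_eq]
  have h := (exists_mk (mk f hf)).choose_spec.choose_spec
  rw [mk_eq] at h
  filter_upwards [h.fderiv (𝕜 := ℝ)] with x hx
  rw [hx]

lemma D_add (i : Fin n) (a b : smoothGerms n) : D i (a + b) = D i a + D i b := by
  obtain ⟨fa, hfa, rfl⟩ := exists_mk a
  obtain ⟨fb, hfb, rfl⟩ := exists_mk b
  rw [mk_add, D_mk, D_mk, D_mk, mk_add, mk_eq]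
  refine Eventually.of_forall fun x => ?_
  have h1 := hfa.differentiable (by simp) x
  have h2 := hfb.differentiable (by simp) x
  simp only []
  rw [fderiv_fun_add h1 h2]
  rfl

lemma D_mul (i : Fin n) (a b : smoothGerms n) : D i (a * b) = a * D i b + b * D i a := by
  obtain ⟨fa, hfa, rfl⟩ := exists_mk a
  obtain ⟨fb, hfb, rfl⟩ := exists_mk b
  rw [mk_mul, D_mk, D_mk, D_mk, mk_mul, mk_mul, mk_add, mk_eq]
  refine Eventually.of_forall fun x => ?_
  have h1 := hfa.differentiable (by simp) x
  have h2 := hfb.differentiable (by simp) x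
  simp only []
  rw [fderiv_fun_mul h1 h2]
  rfl

lemma D_phi (i : Fin n) (p : MvPolynomial (Fin n) ℝ) : D i (phi n p) = phi n (pderiv i p) := by
  induction p using MvPolynomial.induction_on with
  | C a =>
    rw [pderiv_C, map_zero, ← MvPolynomial.algebraMap_eq, AlgHom.commutes, algebraMap_mk, D_mk,
      zero_mk, mk_eq]
    exact Eventually.of_forall fun x => by simp
  | add p q hp hq => rw [map_add, D_add, hp, hq, map_add, map_add]
  | mul_X p j hp =>
    have hX : D i (phi n (X j)) = phi n (pderiv i (X j)) := by
      rw [phi_X, D_mk, pderiv_X, phi_eq, mk_eq]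
      refine Eventually.of_forall fun x => ?_
      have : (fun x : Eucl n => x j) = (EuclideanSpace.proj j : Eucl n →L[ℝ] ℝ) := rfl
      simp only [this, ContinuousLinearMap.fderiv]
      by_cases h : i = j
      · subst h; simp
      · simp [Ne.symm h]
    rw [map_mul, D_mul, hp, hX, Derivation.leibniz]
    simp

lemma D_sub (i : Fin n) (a b : smoothGerms n) : D i (a - b) = D i a - D i b := by
  rw [eq_sub_iff_add_eq, ← D_add, sub_add_cancel]

lemma D_pow (i : Fin n) (K : ℕ) : ∀ e ∈ mI n ^ (K + 1), D i e ∈ mI n ^ K := by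
  induction K with
  | zero => intro e _; simp
  | succ K ih =>
    intro e he
    rw [pow_succ] at he
    refine Submodule.mul_induction_on he ?_ ?_
    · intro a ha b hb
      rw [D_mul]
      refine add_mem (Ideal.mul_mem_right _ _ ha) ?_
      rw [mul_comm, pow_succ]
      exact Ideal.mul_mem_mul (ih a ha) hb
    · intro a b ha hb
      rw [D_add]
      exact add_mem ha hb

lemma jacobianIdeal_eq {f : Eucl n → ℝ} (hf : ContDiff ℝ (⊤ : ℕ∞) f) :
    jacobianIdeal n f = Ideal.span (Set.range fun i => D i (mk f hf)) := by
  unfold jacobianIdeal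
  congr 1
  ext γ
  simp only [Set.mem_ofPred_eq, Set.mem_range, D_mk]
  refine exists_congr fun i => ?_
  constructor
  · intro h
    exact (Subtype.ext h).symm
  · rintro rfl
    rfl

end MilnorAux

namespace MilnorAux
open MvPolynomial

lemma taylor_line {n : ℕ} (f : Eucl n → ℝ) (hf : ContDiff ℝ (⊤ : ℕ∞) f) (m : ℕ) (v : Eucl n) :
    (fun t : ℝ => f (t • v) - ∑ j ∈ Finset.range (m + 1), inPart f j v * t ^ j)
      =O[𝓝[>] (0 : ℝ)] fun t => t ^ (m + 1) := by
  set I : ℝ → ℝ := fun t => ∫ s in (0 : ℝ)..1,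
    (1 - s) ^ m • iteratedFDeriv ℝ (m + 1) f (s • t • v) (fun _ => v)
  have hI : Continuous I := by
    have hc : Continuous (iteratedFDeriv ℝ (m + 1) f) :=
      hf.continuous_iteratedFDeriv (by exact_mod_cast le_top)
    refine intervalIntegral.continuous_parametric_intervalIntegral_of_continuous'
      (f := fun t s => (1 - s) ^ m • iteratedFDeriv ℝ (m + 1) f (s • t • v) (fun _ => v)) ?_ 0 1
    have h1 : Continuous fun z : ℝ × ℝ => iteratedFDeriv ℝ (m + 1) f (z.2 • z.1 • v) :=
      hc.comp (by fun_prop)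
    have h2 : Continuous fun z : ℝ × ℝ =>
        iteratedFDeriv ℝ (m + 1) f (z.2 • z.1 • v) (fun _ => v) :=
      (ContinuousMultilinearMap.apply ℝ (fun _ : Fin (m + 1) => Eucl n) ℝ
        (fun _ => v)).continuous.comp h1
    have h3 : Continuous fun z : ℝ × ℝ => (1 - z.2) ^ m := by fun_prop
    exact h3.smul h2
  have hh : ∀ t : ℝ, f (t • v) - ∑ j ∈ Finset.range (m + 1), inPart f j v * t ^ j =
      ((m.factorial : ℝ)⁻¹ * I t) * t ^ (m + 1) := by
    intro t
    have h := map_add_eq_sum_add_integral_iteratedFDeriv (n := m) (f := f) (x := 0) (y := t • v)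
      (fun s _ => (hf.of_le (by exact_mod_cast le_top)).contDiffAt)
    have hs : ∀ (k : ℕ) (x : Eucl n), iteratedFDeriv ℝ k f x (fun _ => t • v) =
        t ^ k * iteratedFDeriv ℝ k f x (fun _ => v) := by
      intro k x
      have := (iteratedFDeriv ℝ k f x).map_smul_univ (fun _ => t) (fun _ => v)
      simpa using this
    have hI2 : ∫ s in (0 : ℝ)..1, (1 - s) ^ m • (t ^ (m + 1) *
        iteratedFDeriv ℝ (m + 1) f (s • t • v) (fun _ => v)) = t ^ (m + 1) * I t := by
      rw [← intervalIntegral.integral_const_mul]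
      congr 1
      funext s
      simp only [smul_eq_mul]
      ring
    simp only [hs, zero_add] at h
    rw [hI2] at h
    rw [h]
    have h5 : ∑ j ∈ Finset.range (m + 1), inPart f j v * t ^ j =
        ∑ k ∈ Finset.range (m + 1), ((k.factorial : ℝ))⁻¹ •
          (t ^ k * iteratedFDeriv ℝ k f 0 (fun _ => v)) := by
      refine Finset.sum_congr rfl fun j _ => ?_
      simp only [inPart, smul_eq_mul]
      ring
    rw [h5, add_sub_cancel_left, smul_eq_mul]
    ring
  have h1 : (fun t : ℝ => (m.factorial : ℝ)⁻¹ * I t) =O[𝓝[>] (0 : ℝ)] fun _ => (1 : ℝ) := by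
    have : Continuous fun t : ℝ => (m.factorial : ℝ)⁻¹ * I t := by fun_prop
    exact ((this.tendsto 0).mono_left nhdsWithin_le_nhds).isBigO_one ℝ
  have h2 := h1.mul (isBigO_refl (fun t : ℝ => t ^ (m + 1)) (𝓝[>] (0 : ℝ)))
  simp only [one_mul] at h2
  exact h2.congr_left fun t => (hh t).symm

end MilnorAux

/-- if `f : (ℝ^n, 0) → (ℝ, 0)` is a `C^∞` germ of finite order `m` whose
initial part has an algebraically isolated singularity at the origin, then
`μ(f) = (m - 1) ^ n`. -/
theorem milnor_eq_order_sub_one_pow {n : ℕ} (f : Eucl n → ℝ)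
    (hf : ContDiff ℝ (⊤ : ℕ∞) f) (hf0 : f 0 = 0)
    (m : ℕ) (hord : HasOrderAt f 0 (m : ℝ))
    (hiso : milnor n (inPart f m) < Cardinal.aleph0) :
    milnor n f = (((m - 1) ^ n : ℕ) : Cardinal) := by
  obtain ⟨hlim, v₀, hv₀, L₀, hL₀, hL₀t⟩ := hord
  have hn : n ≠ 0 := by
    rintro rfl
    exact hv₀ (Subsingleton.elim _ _)
  have hm : m ≠ 0 := by
    rintro rfl
    simp only [Nat.cast_zero, Real.rpow_zero, inv_one, one_smul, zero_add] at hL₀t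
    have hc : Continuous fun t : ℝ => f (t • v₀) := hf.continuous.comp (by fun_prop)
    have h1 : Tendsto (fun t : ℝ => f (t • v₀)) (𝓝[>] (0 : ℝ)) (𝓝 (f ((0 : ℝ) • v₀))) :=
      (hc.tendsto 0).mono_left nhdsWithin_le_nhds
    rw [zero_smul, hf0] at h1
    exact hL₀ (tendsto_nhds_unique hL₀t h1)
  obtain ⟨d, rfl⟩ : ∃ d, m = d + 1 := ⟨m - 1, by omega⟩
  have S := MilnorAux.setup n
  obtain ⟨p, hp⟩ := S.approx (d + 1 + 1) (MilnorAux.mk f hf)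
  have hO : ∀ v : Eucl n, (fun t : ℝ => f (t • v)) =O[𝓝[>] (0 : ℝ)] fun t => t ^ (d + 1) := by
    intro v
    by_cases hv : v = 0
    · subst hv
      simp only [smul_zero, hf0]
      exact isBigO_zero _ _
    obtain ⟨L, hL⟩ := hlim v hv
    have h1 := (hL.isBigO_one ℝ).mul
      (isBigO_refl (fun t : ℝ => t ^ (d + 1)) (𝓝[>] (0 : ℝ)))
    simp only [one_mul] at h1
    refine h1.congr' ?_ EventuallyEq.rfl
    filter_upwards [self_mem_nhdsWithin] with t ht
    have ht' : t ^ (d + 1) ≠ 0 := pow_ne_zero _ (ne_of_gt ht)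
    rw [Real.rpow_natCast, zero_add, smul_eq_mul]
    field_simp
  have hrem : ∀ K, MilnorAux.mk f hf - MilnorAux.phi n p ∈ MilnorAux.mI n ^ K → ∀ v : Eucl n,
      (fun t : ℝ => f (t • v) - ∑ j ∈ Finset.range K,
        MvPolynomial.eval (fun i => v i) (MvPolynomial.homogeneousComponent j p) * t ^ j)
        =O[𝓝[>] (0 : ℝ)] fun t => t ^ K := by
    intro K hK v
    have h1 : MilnorAux.mk f hf - MilnorAux.phi n p = _ :=
      congrArg (fun z => MilnorAux.mk f hf - z) (MilnorAux.phi_eq p)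
    dsimp only at h1
    rw [MilnorAux.mk_sub] at h1
    have h2 := MilnorAux.isBigO_line (MilnorAux.isBigO_pow K _ hK _ _ h1) v
    refine (h2.add (MilnorAux.eval_line p K v)).congr_left fun t => ?_
    ring
  -- low order components vanish
  have hlow : ∀ j < d + 1, MvPolynomial.homogeneousComponent j p = 0 := by
    intro j hj
    refine MvPolynomial.funext fun v => ?_
    rw [map_zero]
    have h1 := (hO (WithLp.toLp 2 v)).sub
      (hrem (d + 1) (Ideal.pow_le_pow_right (Nat.le_succ _) hp) (WithLp.toLp 2 v))
    refine MilnorAux.coeff_zero_of_isBigO (d + 1)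
      (fun j => MvPolynomial.eval v (MvPolynomial.homogeneousComponent j p)) ?_ j hj
    simpa using h1
  set q := MvPolynomial.homogeneousComponent (d + 1) p with hq
  have hqh : q.IsHomogeneous (d + 1) := MvPolynomial.homogeneousComponent_isHomogeneous _ _
  -- the initial part is the polynomial `q`
  have hin : inPart f (d + 1) = fun x : Eucl n => MvPolynomial.eval (fun i => x i) q := by
    funext v
    have h1 := (hrem (d + 1 + 1) hp v).sub (MilnorAux.taylor_line f hf (d + 1) v)
    have h2 := MilnorAux.coeff_zero_of_isBigO (d + 1 + 1) (fun j => inPart f j v -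
      MvPolynomial.eval (fun i => v i) (MvPolynomial.homogeneousComponent j p))
      (h1.congr_left fun t => by simp only [sub_mul, Finset.sum_sub_distrib]; ring) (d + 1)
      (Nat.lt_succ_self _)
    exact sub_eq_zero.1 h2
  -- the remainder
  have hr : MilnorAux.mk f hf - MilnorAux.phi n q ∈ MilnorAux.mI n ^ (d + 1 + 1) := by
    have h1 : MilnorAux.phi n p - MilnorAux.phi n q ∈ MilnorAux.mI n ^ (d + 1 + 1) := by
      rw [← map_sub]
      have h2 : p - q = ∑ j ∈ (Finset.range (max (d + 1 + 1) (p.totalDegree + 1))).erase (d + 1),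
          MvPolynomial.homogeneousComponent j p := by
        rw [sub_eq_iff_eq_add, hq, Finset.sum_erase_add _ _
          (Finset.mem_range.2 (lt_of_lt_of_le (Nat.lt_succ_self _) (le_max_left _ _)))]
        conv_lhs => rw [← MvPolynomial.sum_homogeneousComponent p]
        refine Finset.sum_subset (Finset.range_mono (le_max_right _ _)) ?_
        intro j _ hj
        refine MvPolynomial.homogeneousComponent_eq_zero _ _ ?_
        simpa using hj
      rw [h2, map_sum]
      refine Ideal.sum_mem _ fun j hj => ?_
      rw [Finset.mem_erase] at hj
      rcases lt_or_ge j (d + 1) with hjd | hjd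
      · rw [hlow j hjd, map_zero]
        exact zero_mem _
      · refine Ideal.pow_le_pow_right (m := d + 1 + 1) (n := j) (by omega) ?_
        exact S.hom_mem (MvPolynomial.homogeneousComponent_isHomogeneous j p)
    have h3 := add_mem hp h1
    rwa [sub_add_sub_cancel] at h3
  have hP : ∀ i, (MvPolynomial.pderiv i q).IsHomogeneous d := fun i => by
    simpa using hqh.pderiv (i := i)
  have hg : ∀ i, MilnorAux.D i (MilnorAux.mk f hf) - MilnorAux.phi n (MvPolynomial.pderiv i q) ∈
      MilnorAux.mI n ^ (d + 1) := by
    intro i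
    rw [← MilnorAux.D_phi, ← MilnorAux.D_sub]
    exact MilnorAux.D_pow i (d + 1) _ hr
  have hJ : jacobianIdeal n (inPart f (d + 1)) =
      Ideal.span (Set.range fun i => MilnorAux.phi n (MvPolynomial.pderiv i q)) := by
    rw [hin, MilnorAux.jacobianIdeal_eq (MilnorAux.contDiff_pf q), ← MilnorAux.phi_eq]
    simp only [MilnorAux.D_phi]
  unfold milnor at hiso ⊢
  rw [hJ] at hiso
  rw [MilnorAux.jacobianIdeal_eq hf, S.main hn hP hg hiso]
  rfl
end
end

section
/- Let f, g : (ℝ^n,0) → (ℝ,0) be germs of C^∞ functions of finite order whose initial parts in(f) and in(g) have algebraically isolated singularities at the origin, i.e. μ(in(f)) < +∞ and μ(in(g)) < +∞. If f and g are R-asymptotically Lipschitz equivalent at the origin, then μ(f) = μ(g). -/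
open Filter Set Metric Topology Asymptotics

noncomputable section

set_option synthInstance.maxHeartbeats 1000000

variable {V W : Type*} [NormedAddCommGroup V] [NormedSpace ℝ V]
  [NormedAddCommGroup W] [NormedSpace ℝ W]

/-- `φ` is a germ at `0` of a lipeomorphism `(ℝ^n, 0) → (ℝ^n, 0)`. -/
def IsLipeoGermAt {n : ℕ} (φ : Eucl n → Eucl n) : Prop :=
  φ 0 = 0 ∧ ∃ U V : Set (Eucl n), U ∈ 𝓝 (0 : Eucl n) ∧ V ∈ 𝓝 (0 : Eucl n) ∧
    IsLipeoOn φ U V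

/-- `a` is a nonzerodivisor modulo `I`. -/
def NZD {A : Type*} [CommRing A] (I : Ideal A) (a : A) : Prop := ∀ u, a * u ∈ I → u ∈ I

/-- `I` together with the first `j` terms of `a`. -/
def stepIdeal {A : Type*} [CommRing A] (I : Ideal A) (a : ℕ → A) (j : ℕ) : Ideal A :=
  I ⊔ Ideal.span (a '' Set.Iio j)

def RegSeq {A : Type*} [CommRing A] (I : Ideal A) (a : ℕ → A) (i : ℕ) : Prop :=
  ∀ j < i, NZD (stepIdeal I a j) (a j)

def Soc0 {A : Type*} [CommRing A] (m I : Ideal A) : Prop :=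
  ∀ u, (∀ c ∈ m, c * u ∈ I) → u ∈ I

section algA
variable {A : Type*} [CommRing A]

lemma stepIdeal_zero (I : Ideal A) (a : ℕ → A) : stepIdeal I a 0 = I := by
  simp [stepIdeal]

lemma stepIdeal_succ (I : Ideal A) (a : ℕ → A) (j : ℕ) :
    stepIdeal I a (j+1) = stepIdeal I a j ⊔ Ideal.span {a j} := by
  have : Set.Iio (j+1) = insert j (Set.Iio j) := by ext; simp
  rw [stepIdeal, stepIdeal, this, Set.image_insert_eq, Ideal.span_insert, sup_assoc,
    sup_comm (Ideal.span {a j})]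

lemma stepIdeal_sup (I : Ideal A) (l : A) (a : ℕ → A) (j : ℕ) :
    stepIdeal (I ⊔ Ideal.span {l}) a j = stepIdeal I a j ⊔ Ideal.span {l} := by
  rw [stepIdeal, stepIdeal, sup_assoc, sup_assoc, sup_comm (Ideal.span {l})]

lemma stepIdeal_congr (I : Ideal A) (a b : ℕ → A) (j : ℕ) (h : ∀ l < j, a l = b l) :
    stepIdeal I a j = stepIdeal I b j := by
  rw [stepIdeal, stepIdeal]
  congr 2
  exact Set.image_congr (fun l hl => h l hl)

lemma mem_sup_span_singleton' (I : Ideal A) (l x : A) :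
    x ∈ I ⊔ Ideal.span {l} ↔ ∃ i ∈ I, ∃ w, x = i + l * w := by
  rw [Submodule.mem_sup]
  constructor
  · rintro ⟨y, hy, z, hz, rfl⟩
    obtain ⟨w, rfl⟩ := Ideal.mem_span_singleton'.1 hz
    exact ⟨y, hy, w, by ring⟩
  · rintro ⟨i, hi, w, rfl⟩
    exact ⟨i, hi, l * w, Ideal.mem_span_singleton'.2 ⟨w, by ring⟩, rfl⟩

lemma exch {m I : Ideal A} {a l : A} (ha : NZD I a) (hl : NZD I l) (ham : a ∈ m)
    (h : Soc0 m (I ⊔ Ideal.span {a})) : Soc0 m (I ⊔ Ideal.span {l}) := by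
  intro v hv
  obtain ⟨i, hi, u, hu⟩ := (mem_sup_span_singleton' _ _ _).1 (hv a ham)
  have hu' : u ∈ I ⊔ Ideal.span {a} := by
    apply h
    intro c hc
    obtain ⟨i', hi', w, hw⟩ := (mem_sup_span_singleton' _ _ _).1 (hv c hc)
    have : c * u - a * w ∈ I := by
      apply hl
      have e : l * (c * u - a * w) = a * i' - c * i := by
        linear_combination (-c) * hu + a * hw
      rw [e]
      exact I.sub_mem (I.mul_mem_left _ hi') (I.mul_mem_left _ hi)
    exact (mem_sup_span_singleton' _ _ _).2 ⟨_, this, w, by ring⟩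
  obtain ⟨i2, hi2, z, hz⟩ := (mem_sup_span_singleton' _ _ _).1 hu'
  have : v - l * z ∈ I := by
    apply ha
    have e : a * (v - l * z) = i + l * i2 := by
      linear_combination hu + l * hz
    rw [e]
    exact I.add_mem hi (I.mul_mem_left _ hi2)
  exact (mem_sup_span_singleton' _ _ _).2 ⟨_, this, z, by ring⟩

lemma nzd_perm {I : Ideal A} {a l : A} (ha : NZD I a) (hl' : NZD (I ⊔ Ideal.span {a}) l) :
    NZD (I ⊔ Ideal.span {l}) a := by
  intro u hu
  obtain ⟨i, hi, v, hv⟩ := (mem_sup_span_singleton' _ _ _).1 hu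
  have : v ∈ I ⊔ Ideal.span {a} := by
    apply hl'
    exact (mem_sup_span_singleton' _ _ _).2 ⟨-i, I.neg_mem hi, u, by linear_combination -hv⟩
  obtain ⟨i2, hi2, w, hw⟩ := (mem_sup_span_singleton' _ _ _).1 this
  have : u - l * w ∈ I := by
    apply ha
    have e : a * (u - l * w) = i + l * i2 := by
      linear_combination hv + l * hw
    rw [e]
    exact I.add_mem hi (I.mul_mem_left _ hi2)
  exact (mem_sup_span_singleton' _ _ _).2 ⟨_, this, w, by ring⟩

lemma avoid [IsNoetherianRing A] [Algebra ℝ A] (W : Submodule ℝ A) (S : Set (Ideal A))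
    (hS : S.Finite)
    (h : ∀ I ∈ S, ∀ u, (∀ w ∈ W, w * u ∈ I) → u ∈ I) :
    ∃ w ∈ W, ∀ I ∈ S, NZD I w := by
  classical
  let T : Set (Ideal A) := ⋃ I ∈ S, associatedPrimes A (A ⧸ I)
  have hT : T.Finite := hS.biUnion (fun I _ => associatedPrimes.finite A (A ⧸ I))
  let F : Finset (Subspace ℝ W) :=
    hT.toFinset.image (fun p => (p.restrictScalars ℝ).comap W.subtype)
  have hF : ⊤ ∉ F := by
    intro hmem
    obtain ⟨p, hp, hpt⟩ := Finset.mem_image.1 hmem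
    rw [Set.Finite.mem_toFinset] at hp
    obtain ⟨I, hI, hpI⟩ := Set.mem_iUnion₂.1 hp
    rw [AssociatedPrimes.mem_iff, isAssociatedPrime_iff] at hpI
    obtain ⟨hprime, x, hx⟩ := hpI
    obtain ⟨u, rfl⟩ := Ideal.Quotient.mk_surjective x
    have hu : u ∈ I := by
      apply h I hI
      intro w hw
      have : (⟨w, hw⟩ : W) ∈ (p.restrictScalars ℝ).comap W.subtype := by rw [hpt]; trivial
      have hwp : w ∈ p := this
      rw [hx, Submodule.mem_colon_singleton] at hwp
      have h2 : Ideal.Quotient.mk I (w * u) = 0 := by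
        rw [map_mul]; simpa [Algebra.smul_def] using hwp
      exact Ideal.Quotient.eq_zero_iff_mem.1 h2
    apply hprime.ne_top
    rw [hx, Ideal.Quotient.eq_zero_iff_mem.2 hu]
    ext; simp
  have := Subspace.biUnion_ne_univ_of_top_notMem hF
  obtain ⟨w, hw⟩ := (Set.ne_univ_iff_exists_notMem _).1 this
  refine ⟨w, w.2, fun I hI u hu => ?_⟩
  by_contra hcon
  apply hw
  have h1 : (w : A) ∈ { r : A | ∃ x : A ⧸ I, x ≠ 0 ∧ r • x = 0 } := by
    refine ⟨Ideal.Quotient.mk I u, fun h0 => hcon (Ideal.Quotient.eq_zero_iff_mem.1 h0), ?_⟩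
    have : (w : A) • Ideal.Quotient.mk I u = Ideal.Quotient.mk I (w * u) := by
      rw [map_mul]; rfl
    rw [this]; exact Ideal.Quotient.eq_zero_iff_mem.2 hu
  rw [← biUnion_associatedPrimes_eq_zero_divisors] at h1
  obtain ⟨p, hp, hwp⟩ := Set.mem_iUnion₂.1 h1
  refine Set.mem_iUnion₂.2 ⟨(p.restrictScalars ℝ).comap W.subtype, ?_, hwp⟩
  refine Finset.mem_image.2 ⟨p, ?_, rfl⟩
  rw [Set.Finite.mem_toFinset]
  exact Set.mem_iUnion₂.2 ⟨I, hI, hp⟩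

lemma exchange [IsNoetherianRing A] [Algebra ℝ A] (m : Ideal A) (i : ℕ) :
    ∀ (I : Ideal A) (a b : ℕ → A), (∀ j, a j ∈ m) → (∀ j, b j ∈ m) →
      RegSeq I a i → RegSeq I b i → Soc0 m (stepIdeal I a i) → Soc0 m (stepIdeal I b i) := by
  induction i with
  | zero => intro I a b _ _ _ _ h; rwa [stepIdeal_zero] at h ⊢
  | succ i ih =>
    intro I a b ha hb hra hrb h
    obtain ⟨l, hlm, hl⟩ := avoid (m.restrictScalars ℝ)
      ((stepIdeal I a '' Set.Iio (i+1)) ∪ (stepIdeal I b '' Set.Iio (i+1)))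
      (((Set.finite_Iio _).image _).union ((Set.finite_Iio _).image _)) (by
        rintro J (⟨j, hj, rfl⟩ | ⟨j, hj, rfl⟩) u hu
        · exact hra j hj _ (hu _ (ha j))
        · exact hrb j hj _ (hu _ (hb j)))
    have hla : ∀ j < i+1, NZD (stepIdeal I a j) l := fun j hj => hl _ (Or.inl ⟨j, hj, rfl⟩)
    have hlb : ∀ j < i+1, NZD (stepIdeal I b j) l := fun j hj => hl _ (Or.inr ⟨j, hj, rfl⟩)
    have key : ∀ c : ℕ → A, RegSeq I c (i+1) → (∀ j < i+1, NZD (stepIdeal I c j) l) →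
        RegSeq (I ⊔ Ideal.span {l}) c i := by
      intro c hc hlc j hj
      rw [stepIdeal_sup]
      apply nzd_perm (hc j (by omega))
      rw [← stepIdeal_succ]
      exact hlc _ (by omega)
    rw [stepIdeal_succ] at h ⊢
    have h1 := exch (hra i (by omega)) (hla i (by omega)) (ha i) h
    rw [← stepIdeal_sup] at h1
    have h2 := ih _ a b ha hb (key a hra hla) (key b hrb hlb) h1
    rw [stepIdeal_sup] at h2
    exact exch (hlb i (by omega)) (hrb i (by omega)) hlm h2

/-- Existence of a regular sequence inside the span of generators of an `m`-primary ideal. -/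
lemma exists_regSeq [IsNoetherianRing A] [Algebra ℝ A] (m : Ideal A) (n : ℕ) (x : ℕ → A)
    (hxm : ∀ j, x j ∈ m) (hx : RegSeq ⊥ x n) (W : Submodule ℝ A) (hW : ∀ w ∈ W, w ∈ m)
    (k : ℕ) (hk : m ^ k ≤ Ideal.span (W : Set A)) :
    ∀ i ≤ n, ∃ Q : ℕ → A, (∀ j, Q j ∈ W) ∧ RegSeq ⊥ Q i := by
  intro i
  induction i with
  | zero => intro _; exact ⟨fun _ => 0, fun _ => W.zero_mem, fun j hj => by omega⟩
  | succ i ih =>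
    intro hi
    obtain ⟨Q, hQW, hQ⟩ := ih (by omega)
    have hs : Soc0 m (stepIdeal ⊥ Q i) := by
      apply exchange m i ⊥ x Q hxm (fun j => hW _ (hQW j)) (fun j hj => hx j (by omega)) hQ
      intro u hu
      exact hx i (by omega) u (hu _ (hxm i))
    obtain ⟨w, hw, hwn⟩ := avoid W {stepIdeal ⊥ Q i} (Set.finite_singleton _) (by
      rintro I rfl u hu
      have h1 : ∀ c ∈ m ^ k, c * u ∈ stepIdeal ⊥ Q i := by
        intro c hc
        have := hk hc
        refine Submodule.span_induction (p := fun c _ => c * u ∈ stepIdeal ⊥ Q i)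
          (fun c hc => hu c hc) (by simp) (fun a b _ _ ha hb => ?_) (fun a b _ hb => ?_) this
        · rw [add_mul]; exact Ideal.add_mem _ ha hb
        · rw [smul_eq_mul, mul_assoc]; exact Ideal.mul_mem_left _ _ hb
      have h2 : ∀ e, (∀ c ∈ m ^ e, c * u ∈ stepIdeal ⊥ Q i) → u ∈ stepIdeal ⊥ Q i := by
        intro e
        induction e with
        | zero => intro h; simpa using h 1 (by simp)
        | succ e ihe =>
          intro h
          apply ihe
          intro c hc
          apply hs
          intro c' hc'
          rw [← mul_assoc]
          apply h
          rw [pow_succ']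
          exact Ideal.mul_mem_mul hc' hc
      exact h2 k h1)
    refine ⟨Function.update Q i w, fun j => ?_, fun j hj => ?_⟩
    · by_cases hji : j = i
      · subst hji; simpa using hw
      · simpa [hji] using hQW j
    · rw [stepIdeal_congr ⊥ _ Q j (fun l hl => by
        rw [Function.update_of_ne (by omega)])]
      by_cases hji : j = i
      · subst hji; simpa using hwn _ rfl
      · rw [Function.update_of_ne hji]; exact hQ j (by omega)

end algA

section algB
variable {R : Type*} [CommRing R]

/-- Strict regularity with respect to the `m`-adic filtration -/
def StrictReg (m : Ideal R) (q : ℕ → R) (d i : ℕ) : Prop :=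
  ∀ e u, u ∈ m ^ e → q i * u ∈ stepIdeal ⊥ q i * m ^ e ⊔ m ^ (e + d + 1) →
    u ∈ stepIdeal ⊥ q i * m ^ (e - d) ⊔ m ^ (e + 1)

lemma step_S (m : Ideal R) (q : ℕ → R) (d i : ℕ) (hq : ∀ i, q i ∈ m ^ d)
    (hR : StrictReg m q d i)
    (hT : ∀ j, stepIdeal ⊥ q i ⊓ m ^ j ≤ stepIdeal ⊥ q i * m ^ (j - d) ⊔ m ^ (j + 1))
    (K : ℕ) (u : R) (hu : q i * u ∈ stepIdeal ⊥ q i ⊔ m ^ K) :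
    u ∈ stepIdeal ⊥ q i ⊔ m ^ (K - d) := by
  have key : ∀ e ≤ K - d, u ∈ stepIdeal ⊥ q i ⊔ m ^ e := by
    intro e
    induction e with
    | zero => intro _; simp
    | succ e ih =>
      intro he
      obtain ⟨v, hv, u', hu', rfl⟩ := Submodule.mem_sup.1 (ih (by omega))
      obtain ⟨w0, hw0, z, hz, hwz⟩ := Submodule.mem_sup.1 hu
      have hw : w0 - q i * v ∈ stepIdeal ⊥ q i :=
        Ideal.sub_mem _ hw0 (Ideal.mul_mem_left _ _ hv)
      have e1 : q i * u' = (w0 - q i * v) + z := by linear_combination -hwz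
      have h1 : q i * u' ∈ m ^ (e + d) := by
        rw [add_comm, pow_add]; exact Ideal.mul_mem_mul (hq i) hu'
      have h2 : w0 - q i * v ∈ m ^ (e + d) := by
        have : w0 - q i * v = q i * u' - z := by rw [e1]; ring
        rw [this]
        exact Ideal.sub_mem _ h1 (Ideal.pow_le_pow_right (by omega) hz)
      have h3 := hT (e + d) ⟨hw, h2⟩
      rw [Nat.add_sub_cancel] at h3
      have h4 : q i * u' ∈ stepIdeal ⊥ q i * m ^ e ⊔ m ^ (e + d + 1) := by
        rw [e1]
        exact Ideal.add_mem _ h3 (Ideal.mem_sup_right (Ideal.pow_le_pow_right (by omega) hz))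
      have h5 := hR e u' hu' h4
      have h6 : u' ∈ stepIdeal ⊥ q i ⊔ m ^ (e + 1) :=
        (sup_le_sup_right Ideal.mul_le_left _ : _ ≤ stepIdeal ⊥ q i ⊔ m ^ (e + 1)) h5
      exact Ideal.add_mem _ (Ideal.mem_sup_left hv) h6
  exact key _ le_rfl

lemma step_T (m : Ideal R) (q : ℕ → R) (d n : ℕ) (hq : ∀ i, q i ∈ m ^ d)
    (hR : ∀ i < n, StrictReg m q d i) : ∀ i ≤ n, ∀ j,
    stepIdeal ⊥ q i ⊓ m ^ j ≤ stepIdeal ⊥ q i * m ^ (j - d) ⊔ m ^ (j + 1) := by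
  intro i
  induction i with
  | zero => intro _ j; rw [stepIdeal_zero]; simp
  | succ i ih =>
    intro hi j w hw
    obtain ⟨hw1, hw2⟩ := hw
    rw [SetLike.mem_coe, stepIdeal_succ] at hw1
    obtain ⟨v, hv, a, rfl⟩ := (mem_sup_span_singleton' _ _ _).1 hw1
    have h1 : q i * a ∈ stepIdeal ⊥ q i ⊔ m ^ j :=
      Submodule.mem_sup.2 ⟨-v, neg_mem hv, _, hw2, by ring⟩
    have h2 := step_S m q d i hq (hR i (by omega)) (ih (by omega)) j a h1
    obtain ⟨v', hv', a', ha', rfl⟩ := Submodule.mem_sup.1 h2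
    have h3 : q i * a' ∈ m ^ j := by
      have : q i * a' ∈ m ^ (d + (j - d)) := by
        rw [pow_add]; exact Ideal.mul_mem_mul (hq i) ha'
      exact Ideal.pow_le_pow_right (by omega) this
    have h4 : v + q i * v' ∈ stepIdeal ⊥ q i ⊓ m ^ j := by
      refine ⟨Ideal.add_mem _ hv (Ideal.mul_mem_left _ _ hv'), ?_⟩
      have : v + q i * v' = (v + q i * (v' + a')) - q i * a' := by ring
      rw [this]; exact Ideal.sub_mem _ hw2 h3
    have h5 := ih (by omega) j h4
    have hle : stepIdeal ⊥ q i ≤ stepIdeal ⊥ q (i+1) := by rw [stepIdeal_succ]; exact le_sup_left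
    have h6 := sup_le_sup_right (Ideal.mul_mono_left hle (K := m ^ (j - d))) (m ^ (j+1)) h5
    have h7 : q i ∈ stepIdeal ⊥ q (i+1) := by
      rw [stepIdeal_succ]
      exact Ideal.mem_sup_right (Ideal.mem_span_singleton_self _)
    have : v + q i * (v' + a') = (v + q i * v') + q i * a' := by ring
    rw [this]
    exact Ideal.add_mem _ h6 (Ideal.mem_sup_left (Ideal.mul_mem_mul h7 ha'))

lemma rank_rec [Algebra ℝ R] (m : Ideal R) (q : ℕ → R) (d n : ℕ) (hq : ∀ i, q i ∈ m ^ d)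
    (hR : ∀ i < n, StrictReg m q d i) (i : ℕ) (hi : i < n) (K : ℕ) :
    Module.rank ℝ (R ⧸ (stepIdeal ⊥ q (i+1) ⊔ m ^ K)) +
      Module.rank ℝ (R ⧸ (stepIdeal ⊥ q i ⊔ m ^ (K - d))) =
      Module.rank ℝ (R ⧸ (stepIdeal ⊥ q i ⊔ m ^ K)) := by
  set I := stepIdeal ⊥ q i with hI
  set I' := stepIdeal ⊥ q (i+1) with hI'
  have hII' : I' = I ⊔ Ideal.span {q i} := stepIdeal_succ _ _ _
  have hle : I ⊔ m ^ K ≤ I' ⊔ m ^ K := sup_le_sup_right (hII' ▸ le_sup_left) _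
  let φ : R →ₗ[ℝ] R ⧸ (I ⊔ m ^ K) :=
    (Ideal.Quotient.mkₐ ℝ (I ⊔ m ^ K)).toLinearMap ∘ₗ LinearMap.mulLeft ℝ (q i)
  let π : R →ₗ[ℝ] R ⧸ (I ⊔ m ^ (K - d)) := (Ideal.Quotient.mkₐ ℝ (I ⊔ m ^ (K-d))).toLinearMap
  let ψ : (R ⧸ (I ⊔ m ^ K)) →ₗ[ℝ] (R ⧸ (I' ⊔ m ^ K)) :=
    (Ideal.Quotient.factorₐ ℝ hle).toLinearMap
  have hφ : ∀ r, φ r = Ideal.Quotient.mk _ (q i * r) := fun r => rfl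
  have hψ : ∀ r, ψ (Ideal.Quotient.mk _ r) = Ideal.Quotient.mk _ r := fun r => rfl
  have hkφ : LinearMap.ker φ = LinearMap.ker π := by
    ext u
    rw [LinearMap.mem_ker, LinearMap.mem_ker, hφ]
    change _ ↔ Ideal.Quotient.mk _ u = 0
    rw [Ideal.Quotient.eq_zero_iff_mem, Ideal.Quotient.eq_zero_iff_mem]
    constructor
    · exact step_S m q d i hq (hR i hi) (step_T m q d n hq hR i hi.le) K u
    · intro hu
      obtain ⟨v, hv, a, ha, rfl⟩ := Submodule.mem_sup.1 hu
      rw [mul_add]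
      refine Ideal.add_mem _ (Ideal.mem_sup_left (Ideal.mul_mem_left _ _ hv))
        (Ideal.mem_sup_right ?_)
      have : q i * a ∈ m ^ (d + (K - d)) := by
        rw [pow_add]; exact Ideal.mul_mem_mul (hq i) ha
      exact Ideal.pow_le_pow_right (by omega) this
  have hkψ : LinearMap.ker ψ = LinearMap.range φ := by
    ext y
    obtain ⟨r, rfl⟩ := Ideal.Quotient.mk_surjective y
    rw [LinearMap.mem_ker, hψ, Ideal.Quotient.eq_zero_iff_mem, LinearMap.mem_range]
    constructor
    · intro hr
      rw [hII', sup_right_comm] at hr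
      obtain ⟨z, hz, w, rfl⟩ := (mem_sup_span_singleton' _ _ _).1 hr
      refine ⟨w, ?_⟩
      rw [hφ, Ideal.Quotient.eq]
      have : q i * w - (z + q i * w) = -z := by ring
      rw [this]; exact neg_mem hz
    · rintro ⟨w, hw⟩
      rw [hφ, Ideal.Quotient.eq] at hw
      have h7 : q i ∈ I' := by
        rw [hII']; exact Ideal.mem_sup_right (Ideal.mem_span_singleton_self _)
      have : r = q i * w - (q i * w - r) := by ring
      rw [this]
      exact Ideal.sub_mem _ (Ideal.mem_sup_left (Ideal.mul_mem_right _ _ h7)) (hle hw)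
  have hψs : Function.Surjective ψ := by
    intro y
    obtain ⟨r, rfl⟩ := Ideal.Quotient.mk_surjective y
    exact ⟨_, hψ r⟩
  have hπs : Function.Surjective π := Ideal.Quotient.mk_surjective
  have h1 := LinearMap.rank_range_add_rank_ker ψ
  rw [hkψ, LinearMap.range_eq_top.2 hψs, rank_top] at h1
  rw [← h1]
  congr 1
  have e1 := (LinearMap.quotKerEquivRange φ).rank_eq
  have e2 := (LinearMap.quotKerEquivOfSurjective π hπs).rank_eq
  rw [← e1, ← e2, hkφ]

lemma rank_eq_of_strict [Algebra ℝ R] (m : Ideal R) (q q' : ℕ → R) (d n : ℕ)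
    (hq : ∀ i, q i ∈ m ^ d) (hR : ∀ i < n, StrictReg m q d i)
    (hq' : ∀ i, q' i ∈ m ^ d) (hR' : ∀ i < n, StrictReg m q' d i)
    (hfin : ∀ K, Module.rank ℝ (R ⧸ m ^ K) < Cardinal.aleph0) :
    ∀ i ≤ n, ∀ K, Module.rank ℝ (R ⧸ (stepIdeal ⊥ q i ⊔ m ^ K)) =
      Module.rank ℝ (R ⧸ (stepIdeal ⊥ q' i ⊔ m ^ K)) := by
  intro i
  induction i with
  | zero => intro _ K; rw [stepIdeal_zero, stepIdeal_zero]
  | succ i ih =>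
    intro hi K
    have h1 := rank_rec m q d n hq hR i hi K
    have h2 := rank_rec m q' d n hq' hR' i hi K
    rw [← ih (by omega), ← ih (by omega), ← h1] at h2
    refine (Cardinal.eq_of_add_eq_add_right h2 ?_).symm
    refine lt_of_le_of_lt ?_ (hfin (K - d))
    exact LinearMap.rank_le_of_surjective
      (Ideal.Quotient.factorₐ ℝ (le_sup_right : m ^ (K-d) ≤ stepIdeal ⊥ q i ⊔ m ^ (K-d))).toLinearMap
      (Ideal.Quotient.factor_surjective
        (le_sup_right : m ^ (K-d) ≤ stepIdeal ⊥ q i ⊔ m ^ (K-d)))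

end algB

open MvPolynomial in
/-- The algebraic properties of the ring of smooth germs that we need. -/
structure LocalModel {n : ℕ} {R : Type*} [CommRing R] [Algebra ℝ R]
    (ι : MvPolynomial (Fin n) ℝ →ₐ[ℝ] R) (m : Ideal R) : Prop where
  gen : m = Ideal.span (Set.range fun i => ι (MvPolynomial.X i))
  const : ∀ r, ∃ c : ℝ, r - algebraMap ℝ R c ∈ m
  sep : ∀ j (p : MvPolynomial (Fin n) ℝ), p.IsHomogeneous j → ι p ∈ m ^ (j + 1) → p = 0
  jac : m ≤ Ideal.jacobson ⊥

section algC
open MvPolynomial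
variable {n : ℕ} {R : Type*} [CommRing R] [Algebra ℝ R]
  {ι : MvPolynomial (Fin n) ℝ →ₐ[ℝ] R} {m : Ideal R}

lemma LocalModel.map_eq (H : LocalModel ι m) (e : ℕ) :
    m ^ e = ((idealOfVars (Fin n) ℝ) ^ e).map ι := by
  rw [Ideal.map_pow, H.gen, Ideal.map_span, ← Set.range_comp]
  rfl

lemma homog_mem_pow {e : ℕ} {p : MvPolynomial (Fin n) ℝ} (hp : p.IsHomogeneous e) :
    p ∈ (idealOfVars (Fin n) ℝ) ^ e := by
  rw [mem_pow_idealOfVars_iff]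
  intro x hx
  exact (hp.degree_eq_sum_deg_support hx).le

lemma LocalModel.homog_mem (H : LocalModel ι m) {e : ℕ} {p : MvPolynomial (Fin n) ℝ}
    (hp : p.IsHomogeneous e) : ι p ∈ m ^ e := by
  rw [H.map_eq]
  exact Ideal.mem_map_of_mem _ (homog_mem_pow hp)

lemma LocalModel.exists_homog (H : LocalModel ι m) (e : ℕ) : ∀ u ∈ m ^ e,
    ∃ p : MvPolynomial (Fin n) ℝ, p.IsHomogeneous e ∧ u - ι p ∈ m ^ (e + 1) := by
  induction e with
  | zero =>
    intro u _
    obtain ⟨c, hc⟩ := H.const u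
    refine ⟨C c, isHomogeneous_C _ _, ?_⟩
    have : ι (C c) = algebraMap ℝ R c := by
      rw [← algebraMap_eq]; exact ι.commutes c
    rw [this]; simpa using hc
  | succ e ih =>
    intro u hu
    rw [pow_succ'] at hu
    have hX : ∀ i, ι (X i) ∈ m := fun i => by
      rw [H.gen]; exact Ideal.subset_span ⟨i, rfl⟩
    refine Submodule.mul_induction_on hu ?_ ?_
    · intro a ha
      rw [H.gen] at ha
      refine Submodule.span_induction (p := fun a _ => ∀ b ∈ m ^ e,
        ∃ p : MvPolynomial (Fin n) ℝ, p.IsHomogeneous (e+1) ∧ a * b - ι p ∈ m ^ (e + 1 + 1))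
        ?_ ?_ ?_ ?_ ha
      · rintro _ ⟨i, rfl⟩ b hb
        obtain ⟨p, hp, hbp⟩ := ih b hb
        refine ⟨X i * p, ?_, ?_⟩
        · have := (isHomogeneous_X ℝ i).mul hp
          rwa [add_comm] at this
        · simp only [map_mul, ← mul_sub]
          rw [pow_succ' m (e+1)]
          exact Ideal.mul_mem_mul (hX i) hbp
      · intro b _
        exact ⟨0, isHomogeneous_zero _ _ _, by simp⟩
      · intro x y _ _ hx hy b hb
        obtain ⟨p, hp, h1⟩ := hx b hb
        obtain ⟨p', hp', h2⟩ := hy b hb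
        refine ⟨p + p', hp.add hp', ?_⟩
        have : (x + y) * b - ι (p + p') = (x * b - ι p) + (y * b - ι p') := by
          rw [map_add]; ring
        rw [this]; exact Ideal.add_mem _ h1 h2
      · intro r x _ hx b hb
        obtain ⟨p, hp, h1⟩ := hx (r * b) (Ideal.mul_mem_left _ _ hb)
        refine ⟨p, hp, ?_⟩
        have : r • x * b = x * (r * b) := by rw [smul_eq_mul]; ring
        rwa [this]
    · rintro x y ⟨p, hp, h1⟩ ⟨p', hp', h2⟩
      refine ⟨p + p', hp.add hp', ?_⟩
      have : (x + y) - ι (p + p') = (x - ι p) + (y - ι p') := by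
        rw [map_add]; ring
      rw [this]; exact Ideal.add_mem _ h1 h2

lemma LocalModel.exists_poly (H : LocalModel ι m) (r : R) (k : ℕ) :
    ∃ p : MvPolynomial (Fin n) ℝ, p.totalDegree ≤ k ∧ r - ι p ∈ m ^ k := by
  induction k with
  | zero => exact ⟨0, by simp, by simp⟩
  | succ k ih =>
    obtain ⟨p, hp, h⟩ := ih
    obtain ⟨p', hp', h'⟩ := H.exists_homog k _ h
    refine ⟨p + p', (totalDegree_add _ _).trans (max_le (by omega) ?_), ?_⟩
    · exact hp'.totalDegree_le.trans (by omega)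
    · rw [map_add, ← sub_sub]; exact h'

lemma LocalModel.rank_lt (H : LocalModel ι m) (K : ℕ) :
    Module.rank ℝ (R ⧸ m ^ K) < Cardinal.aleph0 := by
  let φ : restrictTotalDegree (Fin n) ℝ K →ₗ[ℝ] R ⧸ m ^ K :=
    (Ideal.Quotient.mkₐ ℝ (m ^ K)).toLinearMap ∘ₗ ι.toLinearMap ∘ₗ Submodule.subtype _
  have hφ : Function.Surjective φ := by
    intro y
    obtain ⟨r, rfl⟩ := Ideal.Quotient.mk_surjective y
    obtain ⟨p, hp, h⟩ := H.exists_poly r K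
    refine ⟨⟨p, (mem_restrictTotalDegree _ _ _).2 hp⟩, ?_⟩
    change Ideal.Quotient.mk (m ^ K) (ι p) = _
    rw [eq_comm, Ideal.Quotient.eq]; exact h
  have := Module.Finite.of_surjective φ hφ
  exact Module.rank_lt_aleph0 ℝ _

lemma LocalModel.sep' (H : LocalModel ι m) {k : ℕ} {p : MvPolynomial (Fin n) ℝ}
    (hp : ι p ∈ m ^ (k+1)) : ∀ j ≤ k, homogeneousComponent j p = 0 := by
  intro j
  induction j using Nat.strong_induction_on with
  | _ j ih =>
    intro hj
    apply H.sep j _ (homogeneousComponent_isHomogeneous _ _)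
    by_cases hjd : j ∈ Finset.range (p.totalDegree + 1)
    swap
    · rw [homogeneousComponent_eq_zero _ _ (by simpa using hjd)]; simp
    have h1 : ι p = ι (homogeneousComponent j p) +
        ∑ i ∈ (Finset.range (p.totalDegree + 1)).erase j, ι (homogeneousComponent i p) := by
      conv_lhs => rw [← sum_homogeneousComponent p]
      rw [map_sum, Finset.add_sum_erase _ (fun i => ι (homogeneousComponent i p)) hjd]
    have h2 : ι (homogeneousComponent j p) = ι p -
        ∑ i ∈ (Finset.range (p.totalDegree + 1)).erase j, ι (homogeneousComponent i p) := by
      rw [h1]; ring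
    rw [h2]
    refine Ideal.sub_mem _ (Ideal.pow_le_pow_right (by omega) hp) (Ideal.sum_mem _ ?_)
    intro i hi
    have hij := Finset.ne_of_mem_erase hi
    rcases lt_or_gt_of_ne hij with h | h
    · rw [ih i h (by omega)]; simp
    · exact Ideal.pow_le_pow_right (by omega)
        (H.homog_mem (homogeneousComponent_isHomogeneous i p))

lemma comp_mul_homog {d : ℕ} {Q : MvPolynomial (Fin n) ℝ} (hQ : Q.IsHomogeneous d)
    (a : MvPolynomial (Fin n) ℝ) (e : ℕ) :
    homogeneousComponent e (a * Q) =
      if d ≤ e then homogeneousComponent (e - d) a * Q else 0 := by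
  conv_lhs => rw [← sum_homogeneousComponent a]
  rw [Finset.sum_mul, map_sum]
  have : ∀ i, homogeneousComponent e (homogeneousComponent i a * Q) =
      if i + d = e then homogeneousComponent i a * Q else 0 := by
    intro i
    rw [homogeneousComponent_of_mem (m := e) (n := i + d)
      ((homogeneousComponent_isHomogeneous i a).mul hQ)]
    simp [eq_comm]
  simp_rw [this]
  split_ifs with h
  · by_cases h3 : e - d ∈ Finset.range (a.totalDegree + 1)
    · rw [Finset.sum_eq_single_of_mem (e-d) h3]
      · rw [if_pos (by omega)]
      · intro b _ hb; rw [if_neg (by omega)]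
    · rw [homogeneousComponent_eq_zero _ _ (by rw [Finset.mem_range] at h3; omega), zero_mul]
      apply Finset.sum_eq_zero
      intro i hi
      rw [if_neg]
      rintro rfl
      apply h3
      rwa [Nat.add_sub_cancel]
  · apply Finset.sum_eq_zero
    intro i _
    rw [if_neg (by omega)]

/-- pushing a homogeneous relation through perturbation of the generators. -/
lemma LocalModel.push (H : LocalModel ι m) {κ : Type*} (Q : κ → MvPolynomial (Fin n) ℝ)
    (q : κ → R) (d : ℕ) (hQ : ∀ l, (Q l).IsHomogeneous d) (hqQ : ∀ l, q l - ι (Q l) ∈ m ^ (d+1))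
    (s : Set κ) (e : ℕ) (p : MvPolynomial (Fin n) ℝ) (hp : p ∈ Ideal.span (Q '' s)) :
    ι (homogeneousComponent e p) ∈ Ideal.span (q '' s) * m ^ (e - d) ⊔ m ^ (e + 1) := by
  have := Submodule.span_induction (p := fun p _ => ∀ a,
    ι (homogeneousComponent e (a * p)) ∈ Ideal.span (q '' s) * m ^ (e - d) ⊔ m ^ (e + 1))
    ?_ ?_ ?_ ?_ hp
  · simpa using this 1
  · rintro _ ⟨l, hl, rfl⟩ a
    rw [comp_mul_homog (hQ l)]
    split_ifs with h
    · have h1 : ι (homogeneousComponent (e-d) a) ∈ m ^ (e-d) :=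
        H.homog_mem (homogeneousComponent_isHomogeneous _ _)
      have h2 : ι (homogeneousComponent (e-d) a * Q l) =
          q l * ι (homogeneousComponent (e-d) a) -
          ι (homogeneousComponent (e-d) a) * (q l - ι (Q l)) := by
        rw [map_mul]; ring
      rw [h2]
      refine Ideal.sub_mem _ (Ideal.mem_sup_left
        (Ideal.mul_mem_mul (Ideal.subset_span ⟨l, hl, rfl⟩) h1)) (Ideal.mem_sup_right ?_)
      have h3 := Ideal.mul_mem_mul h1 (hqQ l)
      rw [← pow_add] at h3
      exact Ideal.pow_le_pow_right (by omega) h3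
    · simp
  · intro a; simp
  · intro x y _ _ hx hy a
    rw [mul_add, map_add, map_add]
    exact Ideal.add_mem _ (hx a) (hy a)
  · intro r x _ hx a
    rw [smul_eq_mul, ← mul_assoc]
    exact hx _

/-- lifting elements of the perturbed ideal to the homogeneous one. -/
lemma LocalModel.pull (H : LocalModel ι m) {κ : Type*} (Q : κ → MvPolynomial (Fin n) ℝ)
    (q : κ → R) (d : ℕ) (hQ : ∀ l, (Q l).IsHomogeneous d) (hqQ : ∀ l, q l - ι (Q l) ∈ m ^ (d+1))
    (s : Set κ) (e : ℕ) (y : R) (hy : y ∈ Ideal.span (q '' s) * m ^ e) :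
    ∃ z ∈ Ideal.span (Q '' s), z.IsHomogeneous (e + d) ∧ y - ι z ∈ m ^ (e + d + 1) := by
  refine Submodule.mul_induction_on hy ?_ ?_
  · intro x hx
    refine Submodule.span_induction (p := fun x _ => ∀ b ∈ m ^ e,
      ∃ z ∈ Ideal.span (Q '' s), z.IsHomogeneous (e + d) ∧ x * b - ι z ∈ m ^ (e + d + 1))
      ?_ ?_ ?_ ?_ hx
    · rintro _ ⟨l, hl, rfl⟩ b hb
      obtain ⟨b', hb', h1⟩ := H.exists_homog e b hb
      refine ⟨b' * Q l, Ideal.mul_mem_left _ _ (Ideal.subset_span ⟨l, hl, rfl⟩),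
        hb'.mul (hQ l), ?_⟩
      have : q l * b - ι (b' * Q l) = (q l - ι (Q l)) * b + ι (Q l) * (b - ι b') := by
        rw [map_mul]; ring
      rw [this]
      have h2 := Ideal.mul_mem_mul (hqQ l) hb
      have h3 := Ideal.mul_mem_mul (H.homog_mem (hQ l)) h1
      rw [← pow_add] at h2 h3
      exact Ideal.add_mem _ (Ideal.pow_le_pow_right (by omega) h2)
        (Ideal.pow_le_pow_right (by omega) h3)
    · intro b _
      exact ⟨0, Ideal.zero_mem _, isHomogeneous_zero _ _ _, by simp⟩
    · intro x y _ _ hx hy b hb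
      obtain ⟨z, hz, hp, h1⟩ := hx b hb
      obtain ⟨z', hz', hp', h2⟩ := hy b hb
      refine ⟨z + z', Ideal.add_mem _ hz hz', hp.add hp', ?_⟩
      have : (x + y) * b - ι (z + z') = (x * b - ι z) + (y * b - ι z') := by
        rw [map_add]; ring
      rw [this]; exact Ideal.add_mem _ h1 h2
    · intro r x _ hx b hb
      obtain ⟨z, hz, hp, h1⟩ := hx (r * b) (Ideal.mul_mem_left _ _ hb)
      refine ⟨z, hz, hp, ?_⟩
      have : r • x * b = x * (r * b) := by rw [smul_eq_mul]; ring
      rwa [this]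
  · rintro x y ⟨z, hz, hp, h1⟩ ⟨z', hz', hp', h2⟩
    refine ⟨z + z', Ideal.add_mem _ hz hz', hp.add hp', ?_⟩
    have : (x + y) - ι (z + z') = (x - ι z) + (y - ι z') := by
      rw [map_add]; ring
    rw [this]; exact Ideal.add_mem _ h1 h2

lemma LocalModel.mem_pow_of (H : LocalModel ι m) {d : ℕ} {q : R} {Q : MvPolynomial (Fin n) ℝ}
    (hQ : Q.IsHomogeneous d) (hqQ : q - ι Q ∈ m ^ (d+1)) : q ∈ m ^ d := by
  have : q = (q - ι Q) + ι Q := by ring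
  rw [this]
  exact Ideal.add_mem _ (Ideal.pow_le_pow_right (by omega) hqQ) (H.homog_mem hQ)

lemma LocalModel.strictReg (H : LocalModel ι m) (Q : ℕ → MvPolynomial (Fin n) ℝ)
    (q : ℕ → R) (d : ℕ) (hQ : ∀ l, (Q l).IsHomogeneous d) (hqQ : ∀ l, q l - ι (Q l) ∈ m ^ (d+1))
    (i : ℕ) (hreg : NZD (stepIdeal ⊥ Q i) (Q i)) : StrictReg m q d i := by
  intro e u hu hqu
  unfold stepIdeal NZD at *
  rw [bot_sup_eq] at *
  obtain ⟨p, hp, hup⟩ := H.exists_homog e u hu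
  obtain ⟨y, hy, t, ht, hyt⟩ := Submodule.mem_sup.1 hqu
  obtain ⟨z, hz, hzh, hyz⟩ := H.pull Q q d hQ hqQ _ e y hy
  have h0 : Q i * p - z = 0 := by
    refine H.sep (e + d) _ (IsHomogeneous.sub ?_ hzh) ?_
    · have := (hQ i).mul hp
      rwa [add_comm] at this
    · have : ι (Q i * p - z) = -((q i - ι (Q i)) * u) - ι (Q i) * (u - ι p) + (y - ι z) + t := by
        rw [map_sub, map_mul]; linear_combination -hyt
      rw [this]
      have h2 := Ideal.mul_mem_mul (hqQ i) hu
      have h3 := Ideal.mul_mem_mul (H.homog_mem (hQ i)) hup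
      rw [← pow_add] at h2 h3
      refine Ideal.add_mem _ (Ideal.add_mem _ (Ideal.sub_mem _ (neg_mem ?_) ?_) hyz) ht
      · exact Ideal.pow_le_pow_right (by omega) h2
      · exact Ideal.pow_le_pow_right (by omega) h3
  have hpm := hreg p (by rw [sub_eq_zero.1 h0]; exact hz)
  have h4 := H.push Q q d hQ hqQ _ e p hpm
  rw [homogeneousComponent_eq_self hp] at h4
  have : u = (u - ι p) + ι p := by ring
  rw [this]
  exact Ideal.add_mem _ (Ideal.mem_sup_right hup) h4

lemma LocalModel.pow_fg (H : LocalModel ι m) (k : ℕ) : (m ^ k).FG := by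
  apply Ideal.FG.pow
  rw [H.gen]
  exact Submodule.fg_span (Set.finite_range _)

lemma LocalModel.nakayama (H : LocalModel ι m) (J : Ideal R) (k : ℕ)
    (h : m ^ k ≤ J ⊔ m ^ (k+1)) : m ^ k ≤ J := by
  apply Submodule.le_of_le_smul_of_le_jacobson_bot (H.pow_fg k) H.jac
  rw [smul_eq_mul, ← pow_succ']
  exact h

lemma LocalModel.exists_pow_le (H : LocalModel ι m) (J : Ideal R)
    (h : Module.rank ℝ (R ⧸ J) < Cardinal.aleph0) : ∃ k, m ^ k ≤ J := by
  have hfin : Module.Finite ℝ (R ⧸ J) := Module.rank_lt_aleph0_iff.1 h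
  let π : R →ₗ[ℝ] R ⧸ J := (Ideal.Quotient.mkₐ ℝ J).toLinearMap
  let F : ℕ →o (Submodule ℝ (R ⧸ J))ᵒᵈ :=
    ⟨fun k => OrderDual.toDual (((m ^ k).restrictScalars ℝ).map π), by
      intro a b hab
      change ((m ^ b).restrictScalars ℝ).map π ≤ ((m ^ a).restrictScalars ℝ).map π
      exact Submodule.map_mono (Ideal.pow_le_pow_right hab)⟩
  obtain ⟨k, hk⟩ := IsArtinian.monotone_stabilizes F
  refine ⟨k, H.nakayama J k ?_⟩
  intro u hu
  have h1 : ((m ^ k).restrictScalars ℝ).map π = ((m ^ (k+1)).restrictScalars ℝ).map π :=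
    hk (k+1) (by omega)
  have h2 : π u ∈ ((m ^ k).restrictScalars ℝ).map π := ⟨u, hu, rfl⟩
  rw [h1] at h2
  obtain ⟨v, hv, huv⟩ := h2
  have h3 : u - v ∈ J := by
    rw [← Ideal.Quotient.eq]; exact huv.symm
  exact Submodule.mem_sup.2 ⟨u - v, h3, v, hv, by ring⟩

lemma LocalModel.poly_pow_le (H : LocalModel ι m) (P : Fin n → MvPolynomial (Fin n) ℝ) (d : ℕ)
    (hP : ∀ l, (P l).IsHomogeneous d) (k : ℕ)
    (hk : m ^ k ≤ Ideal.span (Set.range fun l => ι (P l))) :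
    idealOfVars (Fin n) ℝ ^ k ≤ Ideal.span (Set.range P) := by
  rw [pow_idealOfVars_eq_span, Ideal.span_le]
  have key : ∀ p : MvPolynomial (Fin n) ℝ, p.IsHomogeneous k → p ∈ Ideal.span (Set.range P) := by
    intro p hp
    obtain ⟨r, hr⟩ := (Ideal.mem_span_range_iff_exists_fun).1 (hk (H.homog_mem hp))
    choose a _ ha using fun l => H.exists_poly (r l) (k+1)
    have h1 : ι (p - ∑ l, a l * P l) ∈ m ^ (k+1) := by
      have : ι (p - ∑ l, a l * P l) = ∑ l, (r l - ι (a l)) * ι (P l) := by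
        rw [map_sub, ← hr, map_sum, ← Finset.sum_sub_distrib]
        refine Finset.sum_congr rfl fun l _ => ?_
        rw [map_mul]; ring
      rw [this]
      exact Ideal.sum_mem _ fun l _ => Ideal.mul_mem_right _ _ (ha l)
    have h2 := H.sep' h1 k le_rfl
    rw [map_sub, homogeneousComponent_eq_self hp, sub_eq_zero, map_sum] at h2
    rw [h2]
    refine Ideal.sum_mem _ fun l _ => ?_
    rw [comp_mul_homog (hP l)]
    split_ifs
    · exact Ideal.mul_mem_left _ _ (Ideal.subset_span ⟨l, rfl⟩)
    · exact Ideal.zero_mem _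
  rintro _ ⟨x, hx, rfl⟩
  apply key
  exact isHomogeneous_monomial _ (by simpa using hx)

lemma LocalModel.pow_le_of_poly (H : LocalModel ι m) (P : Fin n → MvPolynomial (Fin n) ℝ)
    (f : Fin n → R) (d : ℕ)
    (hP : ∀ l, (P l).IsHomogeneous d) (hf : ∀ l, f l - ι (P l) ∈ m ^ (d+1)) (k : ℕ)
    (hk : idealOfVars (Fin n) ℝ ^ k ≤ Ideal.span (Set.range P)) :
    m ^ k ≤ Ideal.span (Set.range f) := by
  apply H.nakayama
  intro u hu
  obtain ⟨p, hp, hup⟩ := H.exists_homog k u hu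
  have h1 := hk (homog_mem_pow hp)
  rw [← Set.image_univ] at h1
  have h2 := H.push P f d hP hf Set.univ k p h1
  rw [homogeneousComponent_eq_self hp, Set.image_univ] at h2
  have h3 := (sup_le_sup_right Ideal.mul_le_left _ :
    _ ≤ Ideal.span (Set.range f) ⊔ m ^ (k+1)) h2
  have : u = (u - ι p) + ι p := by ring
  rw [this]
  exact Ideal.add_mem _ (Ideal.mem_sup_right hup) h3

/-- the coordinates, as an infinite sequence -/
def coordSeq (n : ℕ) (j : ℕ) : MvPolynomial (Fin n) ℝ :=
  if h : j < n then X ⟨j, h⟩ else 0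

lemma coordSeq_mem (n j : ℕ) : coordSeq n j ∈ idealOfVars (Fin n) ℝ := by
  unfold coordSeq
  split_ifs
  · rw [idealOfVars]; exact Ideal.subset_span (Set.mem_range_self _)
  · exact Ideal.zero_mem _

lemma coordSeq_reg (n : ℕ) : RegSeq ⊥ (coordSeq n) n := by
  intro j hj u hu
  have himg : coordSeq n '' Set.Iio j = X '' {i : Fin n | i.1 < j} := by
    ext p
    constructor
    · rintro ⟨l, hl, rfl⟩
      refine ⟨⟨l, lt_trans hl hj⟩, hl, ?_⟩
      rw [coordSeq, dif_pos]
    · rintro ⟨l, hl, rfl⟩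
      refine ⟨l, hl, ?_⟩
      rw [coordSeq, dif_pos]
  rw [stepIdeal, bot_sup_eq, himg, mem_ideal_span_X_image] at hu ⊢
  intro s hs
  rw [coordSeq, dif_pos hj] at hu
  obtain ⟨i, hi, hne⟩ := hu (Finsupp.single (⟨j, hj⟩ : Fin n) 1 + s) (by
    rw [mem_support_iff, coeff_X_mul]; exact mem_support_iff.1 hs)
  refine ⟨i, hi, ?_⟩
  have : (⟨j, hj⟩ : Fin n) ≠ i := by
    rintro rfl; exact lt_irrefl j hi
  simpa [Finsupp.single_apply, this] using hne

/-- After a linear change of generators, the sequence is strictly regular. -/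
lemma LocalModel.exists_strict (H : LocalModel ι m) (P : Fin n → MvPolynomial (Fin n) ℝ)
    (f : Fin n → R) (d : ℕ) (hd : 1 ≤ d)
    (hP : ∀ l, (P l).IsHomogeneous d) (hf : ∀ l, f l - ι (P l) ∈ m ^ (d+1)) (k : ℕ)
    (hk : idealOfVars (Fin n) ℝ ^ k ≤ Ideal.span (Set.range P)) :
    ∃ q : ℕ → R, (∀ i, q i ∈ m ^ d) ∧ (∀ i < n, StrictReg m q d i) ∧
      stepIdeal ⊥ q n = Ideal.span (Set.range f) := by
  let T : (Fin n → ℝ) →ₗ[ℝ] MvPolynomial (Fin n) ℝ := Fintype.linearCombination ℝ P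
  let Tf : (Fin n → ℝ) →ₗ[ℝ] R := Fintype.linearCombination ℝ f
  have hTh : ∀ c, (T c).IsHomogeneous d := by
    intro c
    simp only [T, Fintype.linearCombination_apply]
    exact IsHomogeneous.sum _ _ _ fun l _ => by
      rw [smul_eq_C_mul]; exact (hP l).C_mul _
  have hTf : ∀ c, Tf c - ι (T c) ∈ m ^ (d+1) := by
    intro c
    simp only [T, Tf, Fintype.linearCombination_apply]
    rw [map_sum, ← Finset.sum_sub_distrib]
    refine Ideal.sum_mem _ fun l _ => ?_
    rw [map_smul, ← smul_sub, Algebra.smul_def]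
    exact Ideal.mul_mem_left _ _ (hf l)
  have hTm : ∀ c, T c ∈ idealOfVars (Fin n) ℝ := by
    intro c
    have := homog_mem_pow (hTh c)
    have := Ideal.pow_le_pow_right hd this
    simpa using this
  obtain ⟨Q, hQW, hQ⟩ := exists_regSeq (idealOfVars (Fin n) ℝ) n (coordSeq n) (coordSeq_mem n)
    (coordSeq_reg n) (LinearMap.range T) (by rintro _ ⟨c, rfl⟩; exact hTm c) k
    (hk.trans (Ideal.span_mono (by
      rintro _ ⟨l, rfl⟩
      exact ⟨Pi.single l 1, by simp [T, Fintype.linearCombination_apply, Pi.single_apply]⟩))) n le_rfl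
  choose c hc using hQW
  have hQm : ∀ i, Q i ∈ idealOfVars (Fin n) ℝ := fun i => hc i ▸ hTm _
  have hone : (1 : MvPolynomial (Fin n) ℝ) ∉ idealOfVars (Fin n) ℝ := by
    have h1 := (C_mem_pow_idealOfVars_iff (σ := Fin n) (R := ℝ) 1 1).not.2 (by simp)
    simpa using h1
  have hlin : ∀ i ≤ n, LinearIndependent ℝ (fun j : Fin i => Q j) := by
    intro i
    induction i with
    | zero => intro _; exact linearIndependent_empty_type
    | succ i ih =>
      intro hi
      rw [linearIndependent_finSucc']
      refine ⟨ih (by omega), ?_⟩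
      intro hmem
      have hsub : Submodule.span ℝ (Set.range (Fin.init fun j : Fin (i+1) => Q j)) ≤
          (stepIdeal ⊥ Q i).restrictScalars ℝ := by
        rw [Submodule.span_le]
        rintro _ ⟨j, rfl⟩
        change Q j ∈ stepIdeal ⊥ Q i
        rw [stepIdeal, bot_sup_eq]
        exact Ideal.subset_span ⟨j, j.2, rfl⟩
      have h1 : Q i ∈ stepIdeal ⊥ Q i := by simpa using hsub hmem
      have h2 : (1 : MvPolynomial (Fin n) ℝ) ∈ stepIdeal ⊥ Q i :=
        hQ i (by omega) 1 (by simpa using h1)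
      apply hone
      have h3 : stepIdeal ⊥ Q i ≤ idealOfVars (Fin n) ℝ := by
        rw [stepIdeal, bot_sup_eq, Ideal.span_le]
        rintro _ ⟨j, _, rfl⟩
        exact hQm j
      exact h3 h2
  have hlc : LinearIndependent ℝ (fun j : Fin n => c j) := by
    apply LinearIndependent.of_comp T
    have : (T ∘ fun j : Fin n => c j) = fun j : Fin n => Q j := by
      funext j; exact hc j
    rw [this]; exact hlin n le_rfl
  have hspan := hlc.span_eq_top_of_card_eq_finrank' (by simp)
  have hQh : ∀ l, (Q l).IsHomogeneous d := fun l => hc l ▸ hTh _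
  have hqQ : ∀ l, Tf (c l) - ι (Q l) ∈ m ^ (d+1) := fun l => by
    rw [← hc l]; exact hTf _
  refine ⟨fun j => Tf (c j), fun i => H.mem_pow_of (hQh i) (hqQ i),
    fun i hi => H.strictReg Q _ d hQh hqQ i (hQ i hi), ?_⟩
  rw [stepIdeal, bot_sup_eq]
  apply le_antisymm
  · rw [Ideal.span_le]
    rintro _ ⟨j, _, rfl⟩
    simp only [Tf, Fintype.linearCombination_apply]
    refine Ideal.sum_mem _ fun l _ => ?_
    rw [Algebra.smul_def]
    exact Ideal.mul_mem_left _ _ (Ideal.subset_span ⟨l, rfl⟩)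
  · rw [Ideal.span_le]
    rintro _ ⟨l, rfl⟩
    have h1 : (Pi.single l 1 : Fin n → ℝ) ∈ Submodule.span ℝ (Set.range fun j : Fin n => c j) := by
      rw [hspan]; trivial
    have h2 : Submodule.span ℝ (Set.range fun j : Fin n => c j) ≤
        ((Ideal.span ((fun j => Tf (c j)) '' Set.Iio n)).restrictScalars ℝ).comap Tf := by
      rw [Submodule.span_le]
      rintro _ ⟨j, rfl⟩
      exact Ideal.subset_span ⟨j, j.2, rfl⟩
    have h3 := h2 h1
    have h4 : Tf (Pi.single l 1) = f l := by
      simp [Tf, Fintype.linearCombination_apply, Pi.single_apply]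
    rw [Submodule.mem_comap, h4] at h3
    exact h3

theorem LocalModel.main (H : LocalModel ι m) (d : ℕ) (hd : 1 ≤ d)
    (P P' : Fin n → MvPolynomial (Fin n) ℝ) (f f' : Fin n → R)
    (hP : ∀ l, (P l).IsHomogeneous d) (hf : ∀ l, f l - ι (P l) ∈ m ^ (d+1))
    (hP' : ∀ l, (P' l).IsHomogeneous d) (hf' : ∀ l, f' l - ι (P' l) ∈ m ^ (d+1))
    (hr : Module.rank ℝ (R ⧸ Ideal.span (Set.range fun l => ι (P l))) < Cardinal.aleph0)
    (hr' : Module.rank ℝ (R ⧸ Ideal.span (Set.range fun l => ι (P' l))) < Cardinal.aleph0) :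
    Module.rank ℝ (R ⧸ Ideal.span (Set.range f)) =
      Module.rank ℝ (R ⧸ Ideal.span (Set.range f')) := by
  obtain ⟨k, hk⟩ := H.exists_pow_le _ hr
  obtain ⟨k', hk'⟩ := H.exists_pow_le _ hr'
  have hk := H.poly_pow_le P d hP k hk
  have hk' := H.poly_pow_le P' d hP' k' hk'
  have h1 := H.pow_le_of_poly P f d hP hf k hk
  have h1' := H.pow_le_of_poly P' f' d hP' hf' k' hk'
  obtain ⟨q, hq, hqs, hqe⟩ := H.exists_strict P f d hd hP hf k hk
  obtain ⟨q', hq', hqs', hqe'⟩ := H.exists_strict P' f' d hd hP' hf' k' hk'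
  have := rank_eq_of_strict m q q' d n hq hqs hq' hqs' H.rank_lt n le_rfl (max k k')
  rw [hqe, hqe', sup_eq_left.2 ((Ideal.pow_le_pow_right (le_max_left _ _)).trans h1),
    sup_eq_left.2 ((Ideal.pow_le_pow_right (le_max_right _ _)).trans h1')] at this
  exact this

end algC

open MeasureTheory in
lemma contDiff_segment_integral {n : ℕ} {F : Eucl n → ℝ} (hF : ContDiff ℝ (⊤ : ℕ∞) F) :
    ContDiff ℝ (⊤ : ℕ∞) (fun x : Eucl n => ∫ t in (0:ℝ)..1, F (t • x)) := by
  let ψ : ContDiffBump (0 : ℝ) := ⟨1, 2, one_pos, one_lt_two⟩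
  let g : Eucl n → ℝ → ℝ := fun p y => ψ y * F ((-y) • p)
  have hg : ContDiff ℝ (⊤ : ℕ∞) (Function.HasUncurry.uncurry g) := by
    change ContDiff ℝ (⊤ : ℕ∞) (fun q : Eucl n × ℝ => ψ q.2 * F ((-q.2) • q.1))
    refine ContDiff.mul ?_ ?_
    · exact ψ.contDiff.comp contDiff_snd
    · exact hF.comp (contDiff_snd.neg.smul contDiff_fst)
  have h := contDiffOn_convolution_right_with_param_comp (μ := volume) (n := (⊤ : ℕ∞))
    (ContinuousLinearMap.mul ℝ ℝ) (s := univ) (v := fun _ : Eucl n => (0 : ℝ))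
    (f := indicator (Ioc (0:ℝ) 1) (fun _ => (1:ℝ))) (g := g) (k := closedBall 0 2)
    contDiffOn_const isOpen_univ (isCompact_closedBall _ _) ?_ ?_ hg.contDiffOn
  · rw [contDiffOn_univ] at h
    convert h using 1
    funext x
    rw [convolution, intervalIntegral.integral_of_le zero_le_one, ← integral_indicator measurableSet_Ioc]
    congr 1
    funext t
    by_cases ht : t ∈ Ioc (0:ℝ) 1
    · have : ψ (-t) = 1 := ψ.one_of_mem_closedBall (by
        simp only [mem_closedBall, dist_zero_right, norm_neg, Real.norm_eq_abs]
        change |t| ≤ 1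
        rw [abs_le]; constructor <;> linarith [ht.1, ht.2])
      simp [ht, g, this]
    · simp [ht]
  · intro p x _ hx
    have : ψ x = 0 := ψ.zero_of_le_dist (by
      have := not_le.1 (fun h => hx (mem_closedBall.2 h))
      exact this.le)
    simp [g, this]
  · exact ((integrableOn_const (by simp)).integrable_indicator measurableSet_Ioc).locallyIntegrable

lemma hadamard {n : ℕ} {F : Eucl n → ℝ} (hF : ContDiff ℝ (⊤ : ℕ∞) F) :
    ∃ h : Fin n → Eucl n → ℝ, (∀ i, ContDiff ℝ (⊤ : ℕ∞) (h i)) ∧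
      ∀ x, F x = F 0 + ∑ i, x i * h i x := by
  have hd : ContDiff ℝ (⊤ : ℕ∞) (fderiv ℝ F) := hF.fderiv_right (by simp)
  have hdi : ∀ i, ContDiff ℝ (⊤ : ℕ∞) (fun x => fderiv ℝ F x (EuclideanSpace.single i 1)) :=
    fun i => hd.clm_apply contDiff_const
  refine ⟨fun i x => ∫ t in (0:ℝ)..1, fderiv ℝ F (t • x) (EuclideanSpace.single i 1),
    fun i => contDiff_segment_integral (hdi i), ?_⟩
  intro x
  have hx : x = ∑ i, x i • EuclideanSpace.single i (1:ℝ) := by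
    ext j
    simp [Finset.sum_apply, Pi.single_apply]
  have h1 : ∀ t : ℝ, HasDerivAt (fun t : ℝ => F (t • x)) (fderiv ℝ F (t • x) x) t := by
    intro t
    have h2 : HasFDerivAt F (fderiv ℝ F (t • x)) (t • x) :=
      ((hF.differentiable (by simp)) _).hasFDerivAt
    have h3 : HasDerivAt (fun t : ℝ => t • x) x t := by
      simpa using (hasDerivAt_id t).smul_const x
    exact h2.comp_hasDerivAt t h3
  have hc : ∀ v, Continuous (fun t : ℝ => fderiv ℝ F (t • x) v) := fun v =>
    (hd.continuous.comp (continuous_id.smul continuous_const)).clm_apply continuous_const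
  have h4 := intervalIntegral.integral_eq_sub_of_hasDerivAt (a := 0) (b := 1)
    (fun t _ => h1 t) ((hc x).intervalIntegrable _ _)
  have h5 : ∀ t : ℝ, fderiv ℝ F (t • x) x =
      ∑ i, x i * fderiv ℝ F (t • x) (EuclideanSpace.single i 1) := by
    intro t
    generalize fderiv ℝ F (t • x) = L
    conv_lhs => rw [hx]
    rw [map_sum]
    simp
  simp only [h5, one_smul, zero_smul] at h4
  rw [intervalIntegral.integral_finsetSum (fun i _ =>
    ((hc _).const_mul _ |>.intervalIntegrable _ _))] at h4
  simp only [intervalIntegral.integral_const_mul] at h4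
  linarith

/-- The algebra of smooth functions. -/
def smoothFns (n : ℕ) : Subalgebra ℝ (Eucl n → ℝ) where
  carrier := {f | ContDiff ℝ (⊤ : ℕ∞) f}
  add_mem' := by
    intro f g hf hg
    exact ContDiff.add (Set.mem_ofPred.1 hf) (Set.mem_ofPred.1 hg)
  mul_mem' := by
    intro f g hf hg
    exact ContDiff.mul (Set.mem_ofPred.1 hf) (Set.mem_ofPred.1 hg)
  algebraMap_mem' := by
    intro r
    change ContDiff ℝ (⊤ : ℕ∞) (fun _ : Eucl n => r)
    exact contDiff_const

lemma sm {n : ℕ} (F : smoothFns n) : ContDiff ℝ (⊤ : ℕ∞) (F : Eucl n → ℝ) := F.2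

/-- The germ of a smooth function. -/
def toG (n : ℕ) : smoothFns n →ₐ[ℝ] smoothGerms n where
  toFun F := ⟨((F : Eucl n → ℝ) : Germ (𝓝 (0 : Eucl n)) ℝ), F, sm F, rfl⟩
  map_one' := rfl
  map_mul' _ _ := rfl
  map_zero' := rfl
  map_add' _ _ := rfl
  commutes' r := by
    apply Subtype.ext
    change (((fun _ => r) : Eucl n → ℝ) : Germ (𝓝 (0 : Eucl n)) ℝ) =
      algebraMap ℝ (Germ (𝓝 (0 : Eucl n)) ℝ) r
    rw [Algebra.algebraMap_eq_smul_one, ← Filter.Germ.coe_one, ← Filter.Germ.coe_smul]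
    congr 1
    funext x
    simp

variable {n : ℕ}

lemma toG_surj (γ : smoothGerms n) : ∃ F, toG n F = γ := by
  obtain ⟨γ, F, hF, rfl⟩ := γ
  exact ⟨⟨F, hF⟩, rfl⟩

lemma toG_eq_iff {F G : smoothFns n} : toG n F = toG n G ↔ (F : Eucl n → ℝ) =ᶠ[𝓝 0] G := by
  rw [Subtype.ext_iff]
  exact Germ.coe_eq

/-- Coordinate functions. -/
def coordF (n : ℕ) (i : Fin n) : smoothFns n :=
  ⟨fun x => x i, by
    change ContDiff ℝ (⊤ : ℕ∞) (fun x : Eucl n => x i)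
    exact (EuclideanSpace.proj (𝕜 := ℝ) i).contDiff⟩

/-- Polynomials as smooth functions. -/
def polyF (n : ℕ) : MvPolynomial (Fin n) ℝ →ₐ[ℝ] smoothFns n := MvPolynomial.aeval (coordF n)

/-- Polynomial germs. -/
def iotaG (n : ℕ) : MvPolynomial (Fin n) ℝ →ₐ[ℝ] smoothGerms n := (toG n).comp (polyF n)

lemma polyF_apply (p : MvPolynomial (Fin n) ℝ) (x : Eucl n) :
    (polyF n p : Eucl n → ℝ) x = MvPolynomial.eval (fun i => x i) p := by
  have := MvPolynomial.map_aeval (coordF n)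
    (((Pi.evalAlgHom ℝ (fun _ : Eucl n => ℝ) x).comp (smoothFns n).val : smoothFns n →ₐ[ℝ] ℝ) :
      smoothFns n →+* ℝ) p
  exact this

/-- The maximal ideal. -/
def mG (n : ℕ) : Ideal (smoothGerms n) := Ideal.span (Set.range fun i => iotaG n (MvPolynomial.X i))

lemma iotaG_X (i : Fin n) : iotaG n (MvPolynomial.X i) = toG n (coordF n i) := by
  simp [iotaG, polyF]

lemma toG_sub_const_mem (F : smoothFns n) :
    toG n F - algebraMap ℝ _ ((F : Eucl n → ℝ) 0) ∈ mG n := by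
  obtain ⟨h, hh, hF⟩ := hadamard (sm F)
  have : F = algebraMap ℝ _ ((F : Eucl n → ℝ) 0) +
      ∑ i, coordF n i * (⟨h i, hh i⟩ : smoothFns n) := by
    apply Subtype.ext
    funext x
    rw [hF x]
    change _ = _ + (((∑ i, coordF n i * (⟨h i, hh i⟩ : smoothFns n) : smoothFns n)) : Eucl n → ℝ) x
    rw [AddSubmonoidClass.coe_finsetSum, Finset.sum_apply]
    rfl
  have h2 : toG n F - algebraMap ℝ _ ((F : Eucl n → ℝ) 0) =
      ∑ i, toG n (coordF n i) * toG n (⟨h i, hh i⟩ : smoothFns n) := by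
    have h3 := congrArg (toG n) this
    rw [map_add, map_sum, AlgHom.commutes] at h3
    simp only [map_mul] at h3
    rw [h3, add_sub_cancel_left]
  rw [h2]
  refine Ideal.sum_mem _ fun i _ => Ideal.mul_mem_right _ _ (Ideal.subset_span ⟨i, iotaG_X i⟩)

/-- `γ` has a representative that is `O(‖x‖^k)`. -/
def IsBig (k : ℕ) (γ : smoothGerms n) : Prop :=
  ∃ F : smoothFns n, toG n F = γ ∧ (F : Eucl n → ℝ) =O[𝓝 0] fun x => ‖x‖ ^ k

lemma IsBig.add {k : ℕ} {a b : smoothGerms n} (ha : IsBig k a) (hb : IsBig k b) :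
    IsBig k (a + b) := by
  obtain ⟨F, rfl, hF⟩ := ha
  obtain ⟨G, rfl, hG⟩ := hb
  exact ⟨F + G, map_add _ _ _, hF.add hG⟩

lemma IsBig.mul {k l : ℕ} {a b : smoothGerms n} (ha : IsBig k a) (hb : IsBig l b) :
    IsBig (k + l) (a * b) := by
  obtain ⟨F, rfl, hF⟩ := ha
  obtain ⟨G, rfl, hG⟩ := hb
  refine ⟨F * G, map_mul _ _ _, ?_⟩
  simp_rw [pow_add]
  exact hF.mul hG

lemma IsBig.zero (a : smoothGerms n) : IsBig 0 a := by
  obtain ⟨F, rfl⟩ := toG_surj a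
  refine ⟨F, rfl, ?_⟩
  simp only [pow_zero]
  exact (ContDiff.continuous (sm F)).continuousAt.isBigO_one ℝ

lemma isBig_of_mem_mG {γ : smoothGerms n} (h : γ ∈ mG n) : IsBig 1 γ := by
  refine Submodule.span_induction ?_ ?_ ?_ ?_ h
  · rintro _ ⟨i, rfl⟩
    refine ⟨coordF n i, (iotaG_X i).symm, ?_⟩
    refine IsBigO.of_bound 1 (Eventually.of_forall fun x => ?_)
    simp only [pow_one, norm_norm, one_mul]
    exact PiLp.norm_apply_le x i
  · exact ⟨0, map_zero _, isBigO_zero _ _⟩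
  · intro x y _ _ hx hy; exact hx.add hy
  · intro a x _ hx
    have := (IsBig.zero a).mul hx
    rwa [zero_add] at this

lemma isBig_of_mem {γ : smoothGerms n} {k : ℕ} (h : γ ∈ mG n ^ k) : IsBig k γ := by
  induction k generalizing γ with
  | zero => exact IsBig.zero γ
  | succ k ih =>
    rw [pow_succ] at h
    refine Submodule.mul_induction_on h ?_ ?_
    · intro a ha b hb
      exact (ih ha).mul (isBig_of_mem_mG hb)
    · intro x y hx hy; exact hx.add hy

lemma isBigO_of_mem {F : smoothFns n} {k : ℕ} (h : toG n F ∈ mG n ^ k) :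
    (F : Eucl n → ℝ) =O[𝓝 0] fun x => ‖x‖ ^ k := by
  obtain ⟨G, hG, hb⟩ := isBig_of_mem h
  exact hb.congr' (toG_eq_iff.1 hG) EventuallyEq.rfl

lemma eval_zero_of_mem {F : smoothFns n} (h : toG n F ∈ mG n) : (F : Eucl n → ℝ) 0 = 0 := by
  rw [← pow_one (mG n)] at h
  have := isBigO_of_mem h
  have h2 := this.eq_zero_imp.self_of_nhds
  exact h2 (by simp)

lemma isUnit_toG {F : smoothFns n} (h : (F : Eucl n → ℝ) 0 ≠ 0) : IsUnit (toG n F) := by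
  have hc : Continuous (F : Eucl n → ℝ) := ContDiff.continuous (sm F)
  have hev : ∀ᶠ x in 𝓝 (0 : Eucl n), (F : Eucl n → ℝ) x ≠ 0 := hc.continuousAt.eventually_ne h
  obtain ⟨ε, hε, hball⟩ := Metric.eventually_nhds_iff.1 hev
  let χ : ContDiffBump (0 : Eucl n) := ⟨ε/2, ε, by positivity, by linarith⟩
  have hpos : ∀ x, (F : Eucl n → ℝ) x ^ 2 + (1 - χ x) ≠ 0 := by
    intro x
    by_cases hx : dist x 0 < ε
    · have := hball hx
      have h1 := χ.le_one (x := x)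
      have h2 : 0 < (F : Eucl n → ℝ) x ^ 2 := by positivity
      linarith
    · have : χ x = 0 := χ.zero_of_le_dist (not_lt.1 hx)
      rw [this]; positivity
  let G : smoothFns n := ⟨fun x => (F : Eucl n → ℝ) x / ((F : Eucl n → ℝ) x ^ 2 + (1 - χ x)), by
    have hF : ContDiff ℝ (⊤ : ℕ∞) (F : Eucl n → ℝ) := F.2
    exact hF.div ((hF.pow 2).add (contDiff_const.sub χ.contDiff)) hpos⟩
  refine IsUnit.of_mul_eq_one (toG n G) ?_
  rw [← map_mul, ← map_one (toG n), toG_eq_iff]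
  filter_upwards [hev, χ.eventuallyEq_one] with x hx hx2
  change (F : Eucl n → ℝ) x * ((F : Eucl n → ℝ) x / ((F : Eucl n → ℝ) x ^ 2 + (1 - χ x))) = 1
  rw [hx2]
  simp only [Pi.one_apply, sub_self, add_zero]
  field_simp

lemma poly_dvd (q : Polynomial ℝ) (k : ℕ)
    (h : (fun t : ℝ => q.eval t) =O[𝓝[>] 0] fun t : ℝ => t ^ k) : Polynomial.X ^ k ∣ q := by
  induction k with
  | zero => simp
  | succ k ih =>
    have h3 : (fun t : ℝ => t ^ (k+1)) =o[𝓝[>] 0] fun t : ℝ => t ^ k :=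
      (isLittleO_pow_pow (Nat.lt_succ_self k)).mono nhdsWithin_le_nhds
    have h4 := h.trans_isLittleO h3
    obtain ⟨r, rfl⟩ := ih h4.isBigO
    rw [pow_succ]
    refine mul_dvd_mul_left _ ?_
    rw [Polynomial.X_dvd_iff, Polynomial.coeff_zero_eq_eval_zero]
    have h5 : Tendsto (fun t : ℝ => r.eval t) (𝓝[>] 0) (𝓝 (r.eval 0)) :=
      (r.continuous.tendsto 0).mono_left nhdsWithin_le_nhds
    have h6 : Tendsto (fun t : ℝ => r.eval t) (𝓝[>] 0) (𝓝 0) := by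
      have := h4.tendsto_div_nhds_zero
      refine this.congr' ?_
      filter_upwards [self_mem_nhdsWithin] with t ht
      have : t ≠ 0 := ne_of_gt ht
      simp only [Polynomial.eval_mul, Polynomial.eval_pow, Polynomial.eval_X]
      field_simp
    exact tendsto_nhds_unique h5 h6

lemma homog_eval_smul {n j : ℕ} {p : MvPolynomial (Fin n) ℝ} (hp : p.IsHomogeneous j)
    (v : Fin n → ℝ) (t : ℝ) :
    MvPolynomial.eval (fun i => t * v i) p = t ^ j * MvPolynomial.eval v p := by
  rw [MvPolynomial.eval_eq', MvPolynomial.eval_eq', Finset.mul_sum]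
  refine Finset.sum_congr rfl fun d hd => ?_
  have : d.degree = j := by
    rw [Finsupp.degree_eq_weight_one]; exact hp (MvPolynomial.mem_support_iff.1 hd)
  rw [Finsupp.degree_eq_sum] at this
  simp only [mul_pow, Finset.prod_mul_distrib]
  rw [Finset.prod_pow_eq_pow_sum, this]
  ring

/-- The restriction of a polynomial to a line. -/
noncomputable def lineP {n : ℕ} (p : MvPolynomial (Fin n) ℝ) (v : Fin n → ℝ) : Polynomial ℝ :=
  ∑ j ∈ Finset.range (p.totalDegree + 1),
    Polynomial.monomial j (MvPolynomial.eval v (MvPolynomial.homogeneousComponent j p))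

lemma lineP_eval {n : ℕ} (p : MvPolynomial (Fin n) ℝ) (v : Fin n → ℝ) (t : ℝ) :
    (lineP p v).eval t = MvPolynomial.eval (fun i => t * v i) p := by
  conv_rhs => rw [← MvPolynomial.sum_homogeneousComponent p]
  rw [lineP, Polynomial.eval_finsetSum, map_sum]
  refine Finset.sum_congr rfl fun j _ => ?_
  rw [homog_eval_smul (MvPolynomial.homogeneousComponent_isHomogeneous j p),
    Polynomial.eval_monomial, mul_comm]

lemma lineP_coeff {n : ℕ} (p : MvPolynomial (Fin n) ℝ) (v : Fin n → ℝ) (j : ℕ) :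
    (lineP p v).coeff j = MvPolynomial.eval v (MvPolynomial.homogeneousComponent j p) := by
  rw [lineP, Polynomial.finsetSum_coeff]
  simp only [Polynomial.coeff_monomial]
  rw [Finset.sum_ite_eq' ]
  split_ifs with h
  · rfl
  · rw [MvPolynomial.homogeneousComponent_eq_zero, map_zero]
    rw [Finset.mem_range] at h; omega

lemma tendsto_line (w : Eucl n) : Tendsto (fun t : ℝ => t • w) (𝓝[>] 0) (𝓝 0) := by
  have : Tendsto (fun t : ℝ => t • w) (𝓝 0) (𝓝 ((0:ℝ) • w)) :=
    (continuous_id.smul continuous_const).tendsto _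
  rw [zero_smul] at this
  exact this.mono_left nhdsWithin_le_nhds

lemma isBigO_line {F : Eucl n → ℝ} {k : ℕ} (h : F =O[𝓝 0] fun x => ‖x‖ ^ k) (w : Eucl n) :
    (fun t : ℝ => F (t • w)) =O[𝓝[>] 0] fun t : ℝ => t ^ k := by
  refine (h.comp_tendsto (tendsto_line w)).trans ?_
  refine IsBigO.of_bound (‖w‖ ^ k) (Eventually.of_forall fun t => ?_)
  simp [norm_smul, mul_pow, mul_comm]

lemma comp_eq_zero_of_line (p : MvPolynomial (Fin n) ℝ) (v : Fin n → ℝ) (k : ℕ)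
    (h : (fun t : ℝ => MvPolynomial.eval (fun i => t * v i) p) =O[𝓝[>] 0] fun t : ℝ => t ^ k)
    (j : ℕ) (hj : j < k) : MvPolynomial.eval v (MvPolynomial.homogeneousComponent j p) = 0 := by
  rw [← lineP_coeff]
  simp_rw [← lineP_eval] at h
  exact Polynomial.X_pow_dvd_iff.1 (poly_dvd _ _ h) j hj

lemma localModel (n : ℕ) : LocalModel (iotaG n) (mG n) where
  gen := rfl
  const r := by
    obtain ⟨F, rfl⟩ := toG_surj r
    exact ⟨_, toG_sub_const_mem F⟩
  sep j p hp h := by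
    have hb := isBigO_of_mem (F := polyF n p) h
    refine MvPolynomial.funext fun v => ?_
    rw [map_zero]
    have h1 := isBigO_line hb (WithLp.toLp 2 v)
    simp only [polyF_apply] at h1
    have h2 := comp_eq_zero_of_line p v (j+1) h1 j (Nat.lt_succ_self j)
    rwa [MvPolynomial.homogeneousComponent_of_mem (m := j) hp, if_pos rfl] at h2
  jac := by
    intro x hx
    rw [Ideal.mem_jacobson_bot]
    intro y
    obtain ⟨F, rfl⟩ := toG_surj x
    obtain ⟨G, rfl⟩ := toG_surj y
    rw [← map_mul, ← map_one (toG n), ← map_add]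
    apply isUnit_toG
    change (F : Eucl n → ℝ) 0 * (G : Eucl n → ℝ) 0 + 1 ≠ 0
    rw [eval_zero_of_mem hx]
    simp


lemma taylor_line (F : smoothFns n) (w : Eucl n) (m : ℕ) :
    (fun t : ℝ => (F : Eucl n → ℝ) (t • w) -
      ∑ k ∈ Finset.range (m + 1), inPart (F : Eucl n → ℝ) k w * t ^ k) =O[𝓝[>] 0]
        fun t : ℝ => t ^ (m + 1) := by
  set f : Eucl n → ℝ := (F : Eucl n → ℝ) with hf
  have hsm : ContDiff ℝ (⊤ : ℕ∞) f := sm F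
  let G : Eucl n → ℝ := fun y => iteratedFDeriv ℝ (m + 1) f y (fun _ => w)
  have hG : Continuous G := by
    have h1 : Continuous (iteratedFDeriv ℝ (m + 1) f) :=
      hsm.continuous_iteratedFDeriv (by exact_mod_cast le_top)
    exact (ContinuousMultilinearMap.apply ℝ (fun _ : Fin (m+1) => Eucl n) ℝ
      (fun _ => w)).continuous.comp h1
  obtain ⟨M, hM⟩ := (isCompact_Icc (a := (0:ℝ)) (b := 1)).exists_bound_of_continuousOn
    (f := fun r : ℝ => G (r • w)) ((hG.comp (continuous_id.smul continuous_const)).continuousOn)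
  refine IsBigO.of_bound ((m.factorial : ℝ)⁻¹ * M) ?_
  have hmem : Ioc (0:ℝ) 1 ∈ 𝓝[>] (0:ℝ) := Ioc_mem_nhdsGT one_pos
  filter_upwards [hmem] with t ht
  have hT := map_add_eq_sum_add_integral_iteratedFDeriv (f := f) (x := 0) (y := t • w) (n := m)
    (fun s _ => (hsm.of_le (by exact_mod_cast le_top)).contDiffAt)
  simp only [zero_add] at hT
  have hs : ∀ k y, iteratedFDeriv ℝ k f y (fun _ => t • w) =
      t ^ k * iteratedFDeriv ℝ k f y (fun _ => w) := by
    intro k y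
    have := (iteratedFDeriv ℝ k f y).map_smul_univ (fun _ => t) (fun _ => w)
    simpa using this
  simp only [hs] at hT
  have hI : ∫ s in (0:ℝ)..1, (1 - s) ^ m • (t ^ (m + 1) *
      iteratedFDeriv ℝ (m + 1) f (s • t • w) (fun _ => w)) =
      t ^ (m + 1) * ∫ s in (0:ℝ)..1, (1 - s) ^ m * G ((s * t) • w) := by
    rw [← intervalIntegral.integral_const_mul]
    congr 1
    funext s
    simp only [smul_eq_mul, G, mul_smul]
    ring
  rw [hI] at hT
  have hb : ‖∫ s in (0:ℝ)..1, (1 - s) ^ m * G ((s * t) • w)‖ ≤ M * |1 - 0| := by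
    refine intervalIntegral.norm_integral_le_of_norm_le_const fun s hs => ?_
    rw [uIoc_of_le zero_le_one] at hs
    have h1 := hM (s * t) ⟨mul_nonneg hs.1.le ht.1.le, mul_le_one₀ hs.2 ht.1.le ht.2⟩
    rw [norm_mul]
    have h2 : ‖(1 - s) ^ m‖ ≤ 1 := by
      rw [norm_pow]
      refine pow_le_one₀ (norm_nonneg _) ?_
      rw [Real.norm_eq_abs, abs_le]; constructor <;> linarith [hs.1, hs.2]
    calc _ ≤ 1 * ‖G ((s * t) • w)‖ := by gcongr
      _ ≤ M := by simpa using h1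
  have e : f (t • w) - ∑ k ∈ Finset.range (m + 1), inPart f k w * t ^ k =
      (m.factorial : ℝ)⁻¹ * (t ^ (m + 1) * ∫ s in (0:ℝ)..1, (1 - s) ^ m * G ((s * t) • w)) := by
    rw [hT, smul_eq_mul]
    have : ∀ k, inPart f k w * t ^ k =
        (k.factorial : ℝ)⁻¹ • (t ^ k * iteratedFDeriv ℝ k f 0 fun _ => w) := by
      intro k; simp only [inPart, smul_eq_mul]; ring
    simp only [this]
    ring
  rw [e, norm_mul, norm_mul]
  have h3 : ‖(m.factorial : ℝ)⁻¹‖ = (m.factorial : ℝ)⁻¹ := by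
    rw [Real.norm_eq_abs, abs_of_nonneg (by positivity)]
  rw [h3]
  simp only [sub_zero, abs_one, mul_one] at hb
  calc _ ≤ (m.factorial : ℝ)⁻¹ * (‖t ^ (m+1)‖ * M) := by gcongr
    _ = _ := by ring

/-- For a smooth function of finite order `m`, the initial part is polynomial and
approximates the function. -/
lemma order_lemma (F : smoothFns n) (hF0 : (F : Eucl n → ℝ) 0 = 0) (m : ℕ)
    (hord : HasOrderAt (F : Eucl n → ℝ) 0 (m : ℝ)) :
    ∃ P : MvPolynomial (Fin n) ℝ, P.IsHomogeneous m ∧ P ≠ 0 ∧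
      toG n F - iotaG n P ∈ mG n ^ (m + 1) ∧
      inPart (F : Eucl n → ℝ) m = (polyF n P : Eucl n → ℝ) := by
  have H := localModel n
  obtain ⟨p, -, hp⟩ := H.exists_poly (toG n F) (m + 1)
  have hR : toG n (F - polyF n p) ∈ mG n ^ (m + 1) := by rw [map_sub]; exact hp
  have hRb := isBigO_of_mem hR
  -- growth along lines
  have hO : ∀ v : Eucl n, (fun t : ℝ => (F : Eucl n → ℝ) (t • v)) =O[𝓝[>] 0]
      fun t : ℝ => t ^ m := by
    intro v
    by_cases hv : v = 0
    · subst hv; simp only [smul_zero, hF0]; exact isBigO_zero _ _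
    · obtain ⟨L, hL⟩ := hord.1 v hv
      have h1 := hL.isBigO_one ℝ
      have h2 := (isBigO_refl (fun t : ℝ => t ^ m) (𝓝[>] 0)).mul h1
      simp only [mul_one] at h2
      refine h2.congr' ?_ EventuallyEq.rfl
      filter_upwards [self_mem_nhdsWithin] with t ht
      have ht' : t ≠ 0 := ne_of_gt ht
      simp only [Real.rpow_natCast, zero_add, smul_eq_mul]
      field_simp
  have hpline : ∀ w : Eucl n, (fun t : ℝ => (F : Eucl n → ℝ) (t • w) -
      MvPolynomial.eval (fun i => t * w i) p) =O[𝓝[>] 0] fun t : ℝ => t ^ (m + 1) := by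
    intro w
    have := isBigO_line hRb w
    refine this.congr_left fun t => ?_
    change (F : Eucl n → ℝ) (t • w) - (polyF n p : Eucl n → ℝ) (t • w) = _
    rw [polyF_apply]
    rfl
  have hmm : (fun t : ℝ => t ^ (m+1)) =O[𝓝[>] 0] fun t : ℝ => t ^ m :=
    ((isLittleO_pow_pow (Nat.lt_succ_self m)).mono nhdsWithin_le_nhds).isBigO
  have hlow : ∀ j < m, MvPolynomial.homogeneousComponent j p = 0 := by
    intro j hj
    refine MvPolynomial.funext fun v => ?_
    rw [map_zero]
    refine comp_eq_zero_of_line p v m ?_ j hj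
    have h1 := (hO (WithLp.toLp 2 v)).sub ((hpline (WithLp.toLp 2 v)).trans hmm)
    refine h1.congr_left fun t => ?_
    simp
  let P := MvPolynomial.homogeneousComponent m p
  have hPh : P.IsHomogeneous m := MvPolynomial.homogeneousComponent_isHomogeneous m p
  have hFP : toG n F - iotaG n P ∈ mG n ^ (m + 1) := by
    have : toG n F - iotaG n P = (toG n F - iotaG n p) + iotaG n (p - P) := by
      rw [map_sub]; ring
    rw [this]
    refine Ideal.add_mem _ hp ?_
    rw [← MvPolynomial.sum_homogeneousComponent (p - P), map_sum]
    refine Ideal.sum_mem _ fun j _ => ?_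
    rw [map_sub, MvPolynomial.homogeneousComponent_of_mem (m := j) (n := m) hPh]
    rcases lt_trichotomy j m with h | h | h
    · rw [hlow j h, if_neg (by omega)]; simp
    · subst h; simp [P]
    · rw [if_neg (by omega), sub_zero]
      exact Ideal.pow_le_pow_right h
        (H.homog_mem (MvPolynomial.homogeneousComponent_isHomogeneous j p))
  have hin : inPart (F : Eucl n → ℝ) m = (polyF n P : Eucl n → ℝ) := by
    funext w
    rw [polyF_apply]
    have h1 := ((taylor_line F w m).sub (hpline w))
    let q : Polynomial ℝ := lineP p (fun i => w i) - ∑ k ∈ Finset.range (m + 1),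
      Polynomial.monomial k (inPart (F : Eucl n → ℝ) k w)
    have h2 : (fun t : ℝ => q.eval t) =O[𝓝[>] 0] fun t : ℝ => t ^ (m + 1) := by
      refine h1.congr_left fun t => ?_
      simp only [q, Polynomial.eval_sub, lineP_eval, Polynomial.eval_finsetSum,
        Polynomial.eval_monomial]
      ring
    have h3 := Polynomial.X_pow_dvd_iff.1 (poly_dvd _ _ h2) m (Nat.lt_succ_self m)
    simp only [q, Polynomial.coeff_sub, lineP_coeff, Polynomial.finsetSum_coeff,
      Polynomial.coeff_monomial] at h3
    rw [Finset.sum_ite_eq', if_pos (by simp)] at h3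
    linarith
  refine ⟨P, hPh, ?_, hFP, hin⟩
  intro h0
  rw [h0, map_zero, sub_zero] at hFP
  obtain ⟨v, hv, L, hL, hlim⟩ := hord.2
  have h1 := isBigO_line (isBigO_of_mem hFP) v
  have h2 : (fun t : ℝ => (F : Eucl n → ℝ) (t • v)) =o[𝓝[>] 0] fun t : ℝ => t ^ m :=
    h1.trans_isLittleO ((isLittleO_pow_pow (Nat.lt_succ_self m)).mono nhdsWithin_le_nhds)
  have h3 := h2.tendsto_div_nhds_zero
  refine hL (tendsto_nhds_unique hlim (h3.congr fun t => ?_))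
  rw [Real.rpow_natCast, zero_add, smul_eq_mul, div_eq_inv_mul]

/-- Partial derivatives. -/
def dF (i : Fin n) (F : smoothFns n) : smoothFns n :=
  ⟨fun x => fderiv ℝ (F : Eucl n → ℝ) x (EuclideanSpace.single i 1), by
    have hd : ContDiff ℝ (⊤ : ℕ∞) (fderiv ℝ (F : Eucl n → ℝ)) := (sm F).fderiv_right (by simp)
    exact hd.clm_apply contDiff_const⟩

lemma dF_apply (i : Fin n) (F : smoothFns n) (x : Eucl n) : (dF i F : Eucl n → ℝ) x =
    fderiv ℝ (F : Eucl n → ℝ) x (EuclideanSpace.single i 1) := rfl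

lemma sm_diff (F : smoothFns n) (x : Eucl n) : DifferentiableAt ℝ (F : Eucl n → ℝ) x :=
  (sm F).differentiable (by simp) x

lemma dF_add (i : Fin n) (F G : smoothFns n) : dF i (F + G) = dF i F + dF i G := by
  apply Subtype.ext
  funext x
  change fderiv ℝ ((F : Eucl n → ℝ) + (G : Eucl n → ℝ)) x _ = fderiv ℝ (F : Eucl n → ℝ) x _ + fderiv ℝ (G : Eucl n → ℝ) x _
  rw [fderiv_add (sm_diff F x) (sm_diff G x)]
  rfl

lemma dF_sub (i : Fin n) (F G : smoothFns n) : dF i (F - G) = dF i F - dF i G := by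
  rw [eq_sub_iff_add_eq, ← dF_add, sub_add_cancel]

lemma dF_mul (i : Fin n) (F G : smoothFns n) : dF i (F * G) = F * dF i G + G * dF i F := by
  apply Subtype.ext
  funext x
  change fderiv ℝ ((F : Eucl n → ℝ) * (G : Eucl n → ℝ)) x _ = (F : Eucl n → ℝ) x * fderiv ℝ (G : Eucl n → ℝ) x _ +
    (G : Eucl n → ℝ) x * fderiv ℝ (F : Eucl n → ℝ) x _
  rw [fderiv_mul (sm_diff F x) (sm_diff G x)]
  rfl

lemma dF_congr (i : Fin n) {F G : smoothFns n} (h : toG n F = toG n G) :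
    toG n (dF i F) = toG n (dF i G) := by
  rw [toG_eq_iff] at *
  filter_upwards [h.fderiv (𝕜 := ℝ)] with x hx
  rw [dF_apply, dF_apply, hx]

lemma dF_coord (i j : Fin n) : dF i (coordF n j) = if i = j then 1 else 0 := by
  apply Subtype.ext
  funext x
  change fderiv ℝ (fun x : Eucl n => x j) x _ = _
  have : fderiv ℝ (fun x : Eucl n => x j) x = EuclideanSpace.proj (𝕜 := ℝ) j :=
    (EuclideanSpace.proj (𝕜 := ℝ) j : Eucl n →L[ℝ] ℝ).fderiv
  rw [this]
  split_ifs with h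
  · subst h; simp
  · simp [Ne.symm h]

lemma dF_poly (i : Fin n) (p : MvPolynomial (Fin n) ℝ) :
    dF i (polyF n p) = polyF n (MvPolynomial.pderiv i p) := by
  induction p using MvPolynomial.induction_on with
  | C a =>
    rw [MvPolynomial.pderiv_C, map_zero]
    apply Subtype.ext
    funext x
    have : (polyF n (MvPolynomial.C a) : Eucl n → ℝ) = fun _ => a := by
      funext y; rw [polyF_apply]; simp
    rw [dF_apply, this]
    simp
  | add p q hp hq => rw [map_add, dF_add, hp, hq, map_add, map_add]
  | mul_X p j hp =>
    have hX : polyF n (MvPolynomial.X j) = coordF n j := by simp [polyF]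
    rw [map_mul, dF_mul, hp, Derivation.leibniz, map_add, smul_eq_mul, smul_eq_mul, map_mul,
      map_mul, hX, dF_coord, MvPolynomial.pderiv_X]
    congr 2
    rw [Pi.single_apply]
    by_cases h : i = j
    · subst h; simp
    · simp [h, Ne.symm h]

lemma dF_mem (i : Fin n) (k : ℕ) : ∀ γ ∈ mG n ^ (k + 1), ∃ F, toG n F = γ ∧
    toG n (dF i F) ∈ mG n ^ k := by
  induction k with
  | zero =>
    intro γ _
    obtain ⟨F, rfl⟩ := toG_surj γ
    exact ⟨F, rfl, by simp⟩
  | succ k ih =>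
    intro γ h
    rw [pow_succ] at h
    refine Submodule.mul_induction_on h ?_ ?_
    · intro a ha b hb
      obtain ⟨F, rfl, hF⟩ := ih a ha
      obtain ⟨G, rfl⟩ := toG_surj b
      refine ⟨F * G, map_mul _ _ _, ?_⟩
      rw [dF_mul, map_add, map_mul, map_mul]
      refine Ideal.add_mem _ (Ideal.mul_mem_right _ _ ha) ?_
      rw [pow_succ, mul_comm (toG n G)]
      exact Ideal.mul_mem_mul hF hb
    · rintro x y ⟨F, rfl, hF⟩ ⟨G, rfl, hG⟩
      exact ⟨F + G, map_add _ _ _, by rw [dF_add, map_add]; exact Ideal.add_mem _ hF hG⟩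

lemma dF_mem' (i : Fin n) {k : ℕ} {F : smoothFns n} (h : toG n F ∈ mG n ^ (k + 1)) :
    toG n (dF i F) ∈ mG n ^ k := by
  obtain ⟨G, hG, h2⟩ := dF_mem i k _ h
  rwa [← dF_congr i hG]

lemma jacobianIdeal_eq (F : smoothFns n) :
    jacobianIdeal n (F : Eucl n → ℝ) = Ideal.span (Set.range fun i => toG n (dF i F)) := by
  unfold jacobianIdeal
  congr 1
  ext γ
  constructor
  · rintro ⟨i, hi⟩
    exact ⟨i, Subtype.ext hi.symm⟩
  · rintro ⟨i, rfl⟩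
    exact ⟨i, rfl⟩

/-- Everything about one function of finite order `d + 1`. -/
lemma order_package (F : smoothFns n) (hF0 : (F : Eucl n → ℝ) 0 = 0) (d : ℕ)
    (hord : HasOrderAt (F : Eucl n → ℝ) 0 ((d + 1 : ℕ) : ℝ)) :
    ∃ P : Fin n → MvPolynomial (Fin n) ℝ, (∀ l, (P l).IsHomogeneous d) ∧ (∃ l, P l ≠ 0) ∧
      (∀ l, toG n (dF l F) - iotaG n (P l) ∈ mG n ^ (d + 1)) ∧
      milnor n (inPart (F : Eucl n → ℝ) (d + 1)) =
        Module.rank ℝ (smoothGerms n ⧸ Ideal.span (Set.range fun l => iotaG n (P l))) := by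
  obtain ⟨P, hPh, hP0, hFP, hin⟩ := order_lemma F hF0 (d + 1) hord
  refine ⟨fun l => MvPolynomial.pderiv l P, fun l => ?_, ?_, fun l => ?_, ?_⟩
  · have := hPh.pderiv (i := l)
    simpa using this
  · by_contra hcon
    push Not at hcon
    have := hPh.sum_X_mul_pderiv
    simp only [hcon, mul_zero, Finset.sum_const_zero] at this
    have h2 := this.symm
    rw [smul_eq_zero] at h2
    rcases h2 with h2 | h2
    · omega
    · exact hP0 h2
  · have h1 : toG n (F - polyF n P) ∈ mG n ^ (d + 1 + 1) := by rw [map_sub]; exact hFP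
    have h2 := dF_mem' l h1
    rwa [dF_sub, dF_poly, map_sub] at h2
  · have h3 : (fun i => toG n (dF i (polyF n P))) =
        fun l => iotaG n (MvPolynomial.pderiv l P) := by
      funext i; rw [dF_poly]; rfl
    rw [hin, milnor, jacobianIdeal_eq, h3]

lemma order_bound (F : smoothFns n) (hF0 : (F : Eucl n → ℝ) 0 = 0) (m : ℕ)
    (hord : HasOrderAt (F : Eucl n → ℝ) 0 (m : ℝ)) :
    (F : Eucl n → ℝ) =O[𝓝 0] fun x => ‖x‖ ^ m := by
  obtain ⟨P, hPh, -, hFP, -⟩ := order_lemma F hF0 m hord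
  exact isBigO_of_mem ((localModel n).mem_pow_of hPh hFP)

lemma order_le {F : Eucl n → ℝ} {m k : ℕ} (hord : HasOrderAt F 0 (m : ℝ))
    (h : F =O[𝓝 0] fun x => ‖x‖ ^ k) : k ≤ m := by
  by_contra hlt
  obtain ⟨v, hv, L, hL, hlim⟩ := hord.2
  have h1 := isBigO_line h v
  have h2 : (fun t : ℝ => F (t • v)) =o[𝓝[>] 0] fun t : ℝ => t ^ m :=
    h1.trans_isLittleO ((isLittleO_pow_pow (not_le.1 hlt)).mono nhdsWithin_le_nhds)
  have h3 := h2.tendsto_div_nhds_zero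
  refine hL (tendsto_nhds_unique hlim (h3.congr fun t => ?_))
  rw [Real.rpow_natCast, zero_add, smul_eq_mul, div_eq_inv_mul]

lemma milnor_zero (F : smoothFns n) (hF0 : (F : Eucl n → ℝ) 0 = 0)
    (hord : HasOrderAt (F : Eucl n → ℝ) 0 ((0 + 1 : ℕ) : ℝ)) : milnor n (F : Eucl n → ℝ) = 0 := by
  obtain ⟨P, hP, ⟨l, hl⟩, hFP, -⟩ := order_package F hF0 0 hord
  have hu : IsUnit (toG n (dF l F)) := by
    apply isUnit_toG
    intro h0
    have h1 := toG_sub_const_mem (dF l F)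
    rw [h0, map_zero, sub_zero] at h1
    have h2 := hFP l
    rw [zero_add, pow_one] at h2
    have h3 := Ideal.sub_mem _ h1 h2
    rw [sub_sub_cancel] at h3
    exact hl ((localModel n).sep 0 _ (hP l) (by simpa using h3))
  have : jacobianIdeal n (F : Eucl n → ℝ) = ⊤ := by
    rw [jacobianIdeal_eq]
    exact Ideal.eq_top_of_isUnit_mem _ (Ideal.subset_span ⟨l, rfl⟩) hu
  rw [milnor, this]
  have : Subsingleton (smoothGerms n ⧸ (⊤ : Ideal (smoothGerms n))) :=
    Ideal.Quotient.subsingleton_iff.2 rfl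
  exact rank_subsingleton' ℝ (smoothGerms n ⧸ (⊤ : Ideal (smoothGerms n)))

/-- if `f, g : (ℝ^n, 0) → (ℝ, 0)` are `C^∞` germs of finite order whose
initial parts have algebraically isolated singularities at the origin, and `f` and `g`
are `R`-asymptotically Lipschitz equivalent at the origin (i.e. `f ∼_0 g ∘ φ` for some
germ of lipeomorphism `φ : (ℝ^n, 0) → (ℝ^n, 0)`), then `μ(f) = μ(g)`. -/
theorem milnor_invariant_of_asympLipschitz {n : ℕ} (f g : Eucl n → ℝ)
    (hf : ContDiff ℝ (⊤ : ℕ∞) f) (hg : ContDiff ℝ (⊤ : ℕ∞) g)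
    (hf0 : f 0 = 0) (hg0 : g 0 = 0)
    (mf mg : ℕ) (hordf : HasOrderAt f 0 (mf : ℝ)) (hordg : HasOrderAt g 0 (mg : ℝ))
    (hisof : milnor n (inPart f mf) < Cardinal.aleph0)
    (hisog : milnor n (inPart g mg) < Cardinal.aleph0)
    (hequiv : ∃ φ : Eucl n → Eucl n, IsLipeoGermAt φ ∧ AsympEquivAt f (g ∘ φ) 0) :
    milnor n f = milnor n g := by
  let F : smoothFns n := ⟨f, hf⟩
  let G : smoothFns n := ⟨g, hg⟩
  have bf : f =O[𝓝 0] fun x => ‖x‖ ^ mf := order_bound F hf0 mf hordf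
  have bg : g =O[𝓝 0] fun x => ‖x‖ ^ mg := order_bound G hg0 mg hordg
  have heq : mf = mg := by
    obtain ⟨φ, ⟨hφ0, U, V, hU, hV, ⟨hbij, c, hc, hlip⟩⟩, c₁, c₂, hc₁, hc₂, hev⟩ := hequiv
    have hc0 : 0 < c := by linarith
    have h0U : (0 : Eucl n) ∈ U := mem_of_mem_nhds hU
    have hl1 : ∀ x ∈ U, ‖φ x‖ ≤ c * ‖x‖ := by
      intro x hx
      simpa [hφ0] using (hlip x hx 0 h0U).2
    have hl2 : ∀ x ∈ U, ‖x‖ ≤ c * ‖φ x‖ := by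
      intro x hx
      have := (hlip x hx 0 h0U).1
      rw [hφ0, sub_zero, sub_zero, one_div, inv_mul_le_iff₀ hc0] at this
      exact this
    apply le_antisymm
    · refine order_le hordg ?_
      let ψ : Eucl n → Eucl n := Function.invFunOn φ U
      have hψ : ∀ y ∈ V, ψ y ∈ U ∧ φ (ψ y) = y := fun y hy =>
        ⟨Function.invFunOn_mem (hbij.surjOn hy), Function.invFunOn_eq (hbij.surjOn hy)⟩
      have hψb : ∀ y ∈ V, ‖ψ y‖ ≤ c * ‖y‖ := by
        intro y hy
        have := hl2 _ (hψ y hy).1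
        rwa [(hψ y hy).2] at this
      have hψt : Tendsto ψ (𝓝 0) (𝓝 0) := by
        refine squeeze_zero_norm' (a := fun y => c * ‖y‖) ?_ ?_
        · filter_upwards [hV] with y hy using hψb y hy
        · have : Continuous fun y : Eucl n => c * ‖y‖ := by fun_prop
          simpa using this.tendsto 0
      have h1 : g =O[𝓝 0] (f ∘ ψ) := by
        refine IsBigO.of_bound c₁ ?_
        filter_upwards [hψt.eventually hev, hV] with y hy hyV
        have := hy.2
        simpa [(hψ y hyV).2] using this
      refine (h1.trans (bf.comp_tendsto hψt)).trans ?_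
      refine IsBigO.of_bound (c ^ mf) ?_
      filter_upwards [hV] with y hy
      simp only [Function.comp_apply, norm_pow, norm_norm]
      rw [← mul_pow]
      exact pow_le_pow_left₀ (norm_nonneg _) (hψb y hy) _
    · refine order_le hordf ?_
      have hφt : Tendsto φ (𝓝 0) (𝓝 0) := by
        refine squeeze_zero_norm' (a := fun y => c * ‖y‖) ?_ ?_
        · filter_upwards [hU] with y hy using hl1 y hy
        · have : Continuous fun y : Eucl n => c * ‖y‖ := by fun_prop
          simpa using this.tendsto 0
      have h1 : f =O[𝓝 0] (g ∘ φ) := by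
        refine IsBigO.of_bound c₂⁻¹ ?_
        filter_upwards [hev] with y hy
        rw [le_inv_mul_iff₀ hc₂]
        exact hy.1
      refine (h1.trans (bg.comp_tendsto hφt)).trans ?_
      refine IsBigO.of_bound (c ^ mg) ?_
      filter_upwards [hU] with y hy
      simp only [Function.comp_apply, norm_pow, norm_norm]
      rw [← mul_pow]
      exact pow_le_pow_left₀ (norm_nonneg _) (hl1 y hy) _
  subst heq
  obtain _ | d := mf
  · exfalso
    obtain ⟨P, hPh, hP0, hFP, -⟩ := order_lemma F hf0 0 hordf
    apply hP0
    refine (localModel n).sep 0 P hPh ?_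
    have h1 := toG_sub_const_mem F
    have hF0 : (F : Eucl n → ℝ) 0 = 0 := hf0
    rw [hF0, map_zero, sub_zero] at h1
    rw [zero_add, pow_one] at *
    have h3 := Ideal.sub_mem _ h1 hFP
    rwa [sub_sub_cancel] at h3
  rcases Nat.eq_zero_or_pos d with hd | hd
  · subst hd
    exact (milnor_zero F hf0 hordf).trans (milnor_zero G hg0 hordg).symm
  · obtain ⟨P, hP, -, hFP, hrk⟩ := order_package F hf0 d hordf
    obtain ⟨P', hP', -, hGP, hrk'⟩ := order_package G hg0 d hordg
    have h1 : milnor n f = _ := congrArg (fun I => Module.rank ℝ (smoothGerms n ⧸ I))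
      (jacobianIdeal_eq F)
    have h2 : milnor n g = _ := congrArg (fun I => Module.rank ℝ (smoothGerms n ⧸ I))
      (jacobianIdeal_eq G)
    rw [h1, h2]
    exact (localModel n).main d hd P P' _ _ hP hFP hP' hGP (hrk ▸ hisof) (hrk' ▸ hisog)
end
end
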